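/- Assume Re λ₁(0) ≠ 0, Re λ₂(0) ≠ 0, and that for all ζ in a neighborhood of 0 in ℝ^l there are no resonances of first type of any order, i.e., p₁λ₁(ζ) + p₂λ₂(ζ) ≠ 0 for all nonnegative integers p₁, p₂ with p₁ + p₂ ≥ 1. Then the germ of V at 0 is C^∞-smoothly equivalent to a vector field of the form ξ̇ = v̄(ξ,η,ζ), η̇ = w̄(ξ,η,ζ), ζ̇_i = 0 (i = 1, …, l); that is, there exist open neighborhoods U, U' of 0 in ℝ^{2+l} and a C^∞ diffeomorphism Φ : U → U' with Φ(0) = 0 such that the transported vector field (Φ_*V)(y) = DΦ(Φ⁻¹(y))·V(Φ⁻¹(y)) has its last l components identically zero on U'. -/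

import Mathlib

open Filter Topology
open scoped ContDiff

section GlobalODE

theorem norm_integral_le_exp_abs {E : Type*} [NormedAddCommGroup E] [NormedSpace ℝ E]
    {g : ℝ → E} {B c : ℝ} (hc : 0 < c) (hB : 0 ≤ B)
    (h : ∀ s, ‖g s‖ ≤ B * Real.exp (c * |s|)) (t : ℝ) :
    ‖∫ s in (0 : ℝ)..t, g s‖ ≤ B / c * Real.exp (c * |t|) := by
  have key : ∀ g : ℝ → E, (∀ s, ‖g s‖ ≤ B * Real.exp (c * |s|)) → ∀ t, 0 ≤ t →
      ‖∫ s in (0 : ℝ)..t, g s‖ ≤ B / c * Real.exp (c * |t|) := by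
    intro g h t ht
    have h1 : ‖∫ s in (0 : ℝ)..t, g s‖ ≤ ∫ s in (0 : ℝ)..t, B * Real.exp (c * s) := by
      apply intervalIntegral.norm_integral_le_of_norm_le ht
      · refine Eventually.of_forall fun s hs => ?_
        have := h s
        rwa [abs_of_pos hs.1] at this
      · exact (by fun_prop : Continuous fun s => B * Real.exp (c * s)).intervalIntegrable _ _
    have h2 : ∫ s in (0 : ℝ)..t, B * Real.exp (c * s) =
        B / c * Real.exp (c * t) - B / c * Real.exp (c * 0) := by
      apply intervalIntegral.integral_eq_sub_of_hasDerivAt (f := fun s => B / c * Real.exp (c * s))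
      · intro s _
        have : HasDerivAt (fun s => B / c * Real.exp (c * s))
            (B / c * (Real.exp (c * s) * (c * 1))) s :=
          (((hasDerivAt_id s).const_mul c).exp).const_mul _
        refine this.congr_deriv ?_
        rw [mul_one, mul_comm (Real.exp _), ← mul_assoc, div_mul_cancel₀ _ hc.ne']
      · exact (by fun_prop : Continuous fun s => B * Real.exp (c * s)).intervalIntegrable _ _
    rw [h2] at h1
    rw [abs_of_nonneg ht]
    have : 0 ≤ B / c * Real.exp (c * 0) := by positivity
    linarith
  rcases le_total 0 t with ht | ht
  · exact key g h t ht
  · have := key (fun s => g (-s)) (fun s => by simpa using h (-s)) (-t) (by linarith)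
    rw [intervalIntegral.integral_comp_neg, intervalIntegral.integral_symm, norm_neg] at this
    simpa using this

/-- Global existence for an ordinary differential equation whose right-hand side is globally
Lipschitz in the space variable. -/
theorem exists_global_solution {E : Type*} [NormedAddCommGroup E] [NormedSpace ℝ E]
    [CompleteSpace E] (f : ℝ → E → E) (K : NNReal) (C : ℝ)
    (hf : Continuous (Function.uncurry f)) (hL : ∀ t, LipschitzWith K (f t))
    (hC : ∀ t, ‖f t 0‖ ≤ C) (x₀ : E) :
    ∃ γ : ℝ → E, γ 0 = x₀ ∧ ∀ t, HasDerivAt γ (f t (γ t)) t := by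
  have hC0 : 0 ≤ C := (norm_nonneg _).trans (hC 0)
  set c : ℝ := 2 * K + 1 with hc
  have hcpos : 0 < c := by positivity
  set wt : ℝ → ℝ := fun t => Real.exp (c * |t|) with hwt
  have hwtc : Continuous wt := by fun_prop
  have hwt1 : ∀ t, 1 ≤ wt t := fun t => Real.one_le_exp (by positivity)
  have hwtp : ∀ t, 0 < wt t := fun t => Real.exp_pos _
  have hg : ∀ u : BoundedContinuousFunction ℝ E, Continuous fun s => f s (wt s • u s) := fun u =>
    hf.comp (continuous_id.prodMk (hwtc.smul u.continuous))
  have hb : ∀ u : BoundedContinuousFunction ℝ E, ∀ s,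
      ‖f s (wt s • u s)‖ ≤ (C + K * ‖u‖) * wt s := by
    intro u s
    have h1 : ‖f s (wt s • u s)‖ ≤ ‖f s 0‖ + K * ‖wt s • u s‖ := by
      have := (hL s).norm_sub_le (wt s • u s) 0
      rw [sub_zero] at this
      calc _ = ‖f s 0 + (f s (wt s • u s) - f s 0)‖ := by rw [add_sub_cancel]
        _ ≤ _ := (norm_add_le _ _).trans (by gcongr)
    have h2 : ‖wt s • u s‖ ≤ wt s * ‖u‖ := by
      rw [norm_smul, Real.norm_of_nonneg (hwtp s).le]
      gcongr
      exact u.norm_coe_le_norm s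
    have h3 : C ≤ C * wt s := le_mul_of_one_le_right hC0 (hwt1 s)
    calc _ ≤ C + K * (wt s * ‖u‖) := h1.trans (by gcongr; exact hC s)
      _ ≤ _ := by nlinarith
  let Φ : BoundedContinuousFunction ℝ E → BoundedContinuousFunction ℝ E := fun u =>
    BoundedContinuousFunction.ofNormedAddCommGroup
      (fun t => (wt t)⁻¹ • (x₀ + ∫ s in (0 : ℝ)..t, f s (wt s • u s)))
      ((hwtc.inv₀ fun t => (hwtp t).ne').smul
        (continuous_const.add (intervalIntegral.continuous_primitive
          (fun a b => (hg u).intervalIntegrable a b) 0)))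
      (‖x₀‖ + (C + K * ‖u‖) / c) (by
        intro t
        have h1 := norm_integral_le_exp_abs hcpos (by positivity) (hb u) t
        rw [norm_smul, norm_inv, Real.norm_of_nonneg (hwtp t).le, inv_mul_le_iff₀ (hwtp t)]
        calc _ ≤ ‖x₀‖ + (C + K * ‖u‖) / c * wt t := (norm_add_le _ _).trans (by gcongr)
          _ ≤ ‖x₀‖ * wt t + (C + K * ‖u‖) / c * wt t := by
            gcongr; exact le_mul_of_one_le_right (norm_nonneg _) (hwt1 t)
          _ = _ := by ring)
  have hcontr : ContractingWith (K / (2 * K + 1)) Φ := by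
    refine ⟨?_, LipschitzWith.of_dist_le_mul fun u u' => ?_⟩
    · rw [div_lt_one (by positivity)]
      have : (0 : NNReal) ≤ K := zero_le
      rw [two_mul, add_assoc]
      exact lt_add_of_pos_right _ (by positivity)
    · rw [BoundedContinuousFunction.dist_le (by positivity)]
      intro t
      have h0 : ∀ s, ‖f s (wt s • u s) - f s (wt s • u' s)‖ ≤ (K * dist u u') * wt s := by
        intro s
        refine ((hL s).norm_sub_le _ _).trans ?_
        rw [← smul_sub, norm_smul, Real.norm_of_nonneg (hwtp s).le, ← dist_eq_norm, mul_assoc]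
        have := BoundedContinuousFunction.dist_coe_le_dist (f := u) (g := u') s
        have h3 := hwtp s
        rw [mul_comm (dist u u')]
        gcongr
      have h1 := norm_integral_le_exp_abs hcpos (by positivity) h0 t
      rw [dist_eq_norm]
      change ‖(wt t)⁻¹ • (x₀ + ∫ s in (0 : ℝ)..t, f s (wt s • u s)) -
        (wt t)⁻¹ • (x₀ + ∫ s in (0 : ℝ)..t, f s (wt s • u' s))‖ ≤ _
      rw [← smul_sub, add_sub_add_left_eq_sub, ← intervalIntegral.integral_sub
        ((hg u).intervalIntegrable _ _) ((hg u').intervalIntegrable _ _), norm_smul, norm_inv,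
        Real.norm_of_nonneg (hwtp t).le, inv_mul_le_iff₀ (hwtp t)]
      refine h1.trans (le_of_eq ?_)
      push_cast
      rw [← hc]
      ring
  set u := hcontr.fixedPoint with hu
  have hfix : Φ u = u := hcontr.fixedPoint_isFixedPt
  have hγ : ∀ t, wt t • u t = x₀ + ∫ s in (0 : ℝ)..t, f s (wt s • u s) := by
    intro t
    have h1 : u t = (wt t)⁻¹ • (x₀ + ∫ s in (0 : ℝ)..t, f s (wt s • u s)) := by
      conv_lhs => rw [← hfix]
      rfl
    conv_lhs => rw [h1]
    rw [smul_inv_smul₀ (hwtp t).ne']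
  refine ⟨fun t => wt t • u t, ?_, fun t => ?_⟩
  · simpa using hγ 0
  · have : (fun t => wt t • u t) = fun t => x₀ + ∫ s in (0 : ℝ)..t, f s (wt s • u s) := funext hγ
    rw [this]
    exact (intervalIntegral.integral_hasDerivAt_right ((hg u).intervalIntegrable _ _)
      ((hg u).stronglyMeasurableAtFilter _ _) (hg u).continuousAt).const_add _ |>.congr_deriv
      (congrArg (f t) (hγ t))

end GlobalODE

section Semiflow

/-- A forward semiflow `φ` of a smooth vector field `V` on an open convex set `Ω` on which all
derivatives of `V` of positive order are bounded. -/
structure IsSemiflow {E : Type*} [NormedAddCommGroup E] [NormedSpace ℝ E]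
    (V : E → E) (Ω : Set E) (φ : E → ℝ → E) : Prop where
  convex : Convex ℝ Ω
  isOpen : IsOpen Ω
  smooth : ContDiff ℝ ∞ V
  bounded : ∀ j : ℕ, 1 ≤ j → ∃ C, ∀ x ∈ Ω, ‖iteratedFDeriv ℝ j V x‖ ≤ C
  apply_zero : ∀ x ∈ Ω, φ x 0 = x
  mem : ∀ x ∈ Ω, ∀ t, 0 ≤ t → φ x t ∈ Ω
  deriv : ∀ x ∈ Ω, ∀ t, 0 ≤ t → HasDerivAt (φ x) (V (φ x t)) t

/-- All derivatives of `g` decay faster than any exponential along the semiflow `φ`, uniformly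
on bounded sets. -/
def DecaysAlong {E F : Type*} [NormedAddCommGroup E] [NormedSpace ℝ E]
    [NormedAddCommGroup F] [NormedSpace ℝ F] (Ω : Set E) (φ : E → ℝ → E) (g : E → F) : Prop :=
  ∀ (j N : ℕ) (R : ℝ), ∃ C, ∀ x ∈ Ω, ‖x‖ ≤ R → ∀ t, 0 ≤ t →
    ‖iteratedFDeriv ℝ j g (φ x t)‖ ≤ C * Real.exp (-(N * t))

variable {E : Type*} [NormedAddCommGroup E] [NormedSpace ℝ E]
  {V : E → E} {Ω : Set E} {φ : E → ℝ → E}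

theorem norm_iteratedFDeriv_two_eq {F : Type*} [NormedAddCommGroup F] [NormedSpace ℝ F]
    (f : E → F) (x : E) : ‖iteratedFDeriv ℝ 2 f x‖ = ‖fderiv ℝ (fderiv ℝ f) x‖ := by
  rw [← norm_iteratedFDeriv_fderiv, norm_iteratedFDeriv_one]

theorem Convex.norm_sub_sub_fderiv_le {F : Type*} [NormedAddCommGroup F] [NormedSpace ℝ F]
    {f : E → F} (hf : ContDiff ℝ ∞ f) {s : Set E} (hs : Convex ℝ s) {C : ℝ} (hC0 : 0 ≤ C)
    (hC : ∀ x ∈ s, ‖iteratedFDeriv ℝ 2 f x‖ ≤ C) {a b : E} (ha : a ∈ s) (hb : b ∈ s) :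
    ‖f b - f a - fderiv ℝ f a (b - a)‖ ≤ C * ‖b - a‖ ^ 2 := by
  have hd : ∀ x, DifferentiableAt ℝ f x := (hf.differentiable (by simp))
  have hd2 : Differentiable ℝ (fderiv ℝ f) :=
    (hf.fderiv_right (m := 1) (by norm_cast)).differentiable (by simp)
  have hsub : segment ℝ a b ⊆ s := hs.segment_subset ha hb
  have h1 : ∀ z ∈ segment ℝ a b, ‖fderiv ℝ f z - fderiv ℝ f a‖ ≤ C * ‖b - a‖ := by
    intro z hz
    have h2 : ‖fderiv ℝ f z - fderiv ℝ f a‖ ≤ C * ‖z - a‖ :=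
      hs.norm_image_sub_le_of_norm_fderiv_le (fun x _ => hd2 x)
        (fun x hx => by
          rw [← norm_iteratedFDeriv_two_eq]
          exact hC x hx) ha (hsub hz)
    refine h2.trans ?_
    gcongr
    exact norm_sub_le_of_mem_segment hz
  have := (convex_segment a b).norm_image_sub_le_of_norm_hasFDerivWithin_le' (f := f)
    (f' := fderiv ℝ f) (φ := fderiv ℝ f a)
    (fun x _ => (hd x).hasFDerivAt.hasFDerivWithinAt) h1
    (left_mem_segment ℝ a b) (right_mem_segment ℝ a b)
  rw [pow_two, ← mul_assoc]
  exact this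

namespace IsSemiflow

theorem exists_fderiv_bound (h : IsSemiflow V Ω φ) :
    ∃ K : NNReal, ∀ x ∈ Ω, ‖fderiv ℝ V x‖ ≤ K := by
  obtain ⟨C, hC⟩ := h.bounded 1 le_rfl
  refine ⟨C.toNNReal, fun x hx => ?_⟩
  rw [← norm_iteratedFDeriv_one]
  exact (hC x hx).trans (Real.le_coe_toNNReal C)

theorem exists_taylor_bound (h : IsSemiflow V Ω φ) :
    ∃ K : ℝ, 0 ≤ K ∧ ∀ a ∈ Ω, ∀ b ∈ Ω, ‖V b - V a - fderiv ℝ V a (b - a)‖ ≤ K * ‖b - a‖ ^ 2 := by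
  obtain ⟨C, hC⟩ := h.bounded 2 (by norm_num)
  exact ⟨C.toNNReal, by positivity, fun a ha b hb => h.convex.norm_sub_sub_fderiv_le h.smooth
    (by positivity) (fun x hx => (hC x hx).trans (Real.le_coe_toNNReal C)) ha hb⟩

theorem continuousOn (h : IsSemiflow V Ω φ) {x : E} (hx : x ∈ Ω) :
    ContinuousOn (φ x) (Set.Ici 0) :=
  fun t ht => (h.deriv x hx t ht).continuousAt.continuousWithinAt

theorem continuous_max (h : IsSemiflow V Ω φ) {x : E} (hx : x ∈ Ω) :
    Continuous fun t => φ x (max t 0) :=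
  (h.continuousOn hx).comp_continuous (by fun_prop) (fun t => le_max_right t 0)

theorem dist_le (h : IsSemiflow V Ω φ) {K : NNReal} (hK : ∀ x ∈ Ω, ‖fderiv ℝ V x‖ ≤ K)
    {x y : E} (hx : x ∈ Ω) (hy : y ∈ Ω) {t : ℝ} (ht : 0 ≤ t) :
    dist (φ x t) (φ y t) ≤ dist x y * Real.exp (K * t) := by
  have hd : ∀ x, DifferentiableAt ℝ V x := (h.smooth.differentiable (by simp))
  have hL : LipschitzOnWith K V Ω := h.convex.lipschitzOnWith_of_nnnorm_fderiv_le
    (fun x _ => hd x) hK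
  have := dist_le_of_trajectories_ODE_of_mem (v := fun _ => V) (s := fun _ => Ω) (K := K)
    (f := φ x) (g := φ y) (a := 0) (b := t) (δ := dist x y)
    (fun _ _ => hL) ((h.continuousOn hx).mono fun s hs => hs.1)
    (fun s hs => (h.deriv x hx s hs.1).hasDerivWithinAt) (fun s hs => h.mem x hx s hs.1)
    ((h.continuousOn hy).mono fun s hs => hs.1)
    (fun s hs => (h.deriv y hy s hs.1).hasDerivWithinAt) (fun s hs => h.mem y hy s hs.1)
    (by rw [h.apply_zero x hx, h.apply_zero y hy]) t ⟨ht, le_rfl⟩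
  simpa using this

/-- The solution operator of the variational equation along an orbit. -/
theorem exists_variational [CompleteSpace E] (h : IsSemiflow V Ω φ) {K : NNReal}
    (hK : ∀ x ∈ Ω, ‖fderiv ℝ V x‖ ≤ K) {x : E} (hx : x ∈ Ω) :
    ∃ Y : ℝ → E →L[ℝ] E, Y 0 = ContinuousLinearMap.id ℝ E ∧
      (∀ t, 0 ≤ t → HasDerivAt Y ((fderiv ℝ V (φ x t)).comp (Y t)) t) ∧
      ∀ t, 0 ≤ t → ‖Y t‖ ≤ Real.exp (K * t) := by
  have hcd : Continuous (fderiv ℝ V) := h.smooth.continuous_fderiv (by simp)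
  obtain ⟨Y, hY0, hY⟩ := exists_global_solution
    (fun t (Z : E →L[ℝ] E) => (fderiv ℝ V (φ x (max t 0))).comp Z) K 0
    (by
      have h1 : Continuous fun p : ℝ × (E →L[ℝ] E) => fderiv ℝ V (φ x (max p.1 0)) :=
        hcd.comp ((h.continuous_max hx).comp continuous_fst)
      exact h1.clm_comp continuous_snd)
    (fun t => LipschitzWith.of_dist_le_mul fun Z Z' => by
      rw [dist_eq_norm, dist_eq_norm, ← ContinuousLinearMap.comp_sub]
      refine (ContinuousLinearMap.opNorm_comp_le _ _).trans ?_
      gcongr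
      exact hK _ (h.mem x hx _ (le_max_right _ _)))
    (fun t => by simp) (ContinuousLinearMap.id ℝ E)
  have hY' : ∀ t, 0 ≤ t → HasDerivAt Y ((fderiv ℝ V (φ x t)).comp (Y t)) t := by
    intro t ht
    have := hY t
    rwa [max_eq_left ht] at this
  refine ⟨Y, hY0, hY', fun t ht => ?_⟩
  have := norm_le_gronwallBound_of_norm_deriv_right_le (f := Y) (δ := 1) (K := K) (ε := 0)
    (a := 0) (b := t) (fun s _ => (hY s).continuousAt.continuousWithinAt)
    (fun s hs => (hY' s hs.1).hasDerivWithinAt) (by rw [hY0]; exact ContinuousLinearMap.norm_id_le)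
    (fun s hs => by
      rw [add_zero]
      refine (ContinuousLinearMap.opNorm_comp_le _ _).trans ?_
      gcongr
      exact hK _ (h.mem x hx _ hs.1)) t ⟨ht, le_rfl⟩
  simpa [gronwallBound_ε0] using this

theorem hasFDerivAt (h : IsSemiflow V Ω φ) {K : NNReal}
    (hK : ∀ x ∈ Ω, ‖fderiv ℝ V x‖ ≤ K) {x : E} (hx : x ∈ Ω) {Y : ℝ → E →L[ℝ] E}
    (hY0 : Y 0 = ContinuousLinearMap.id ℝ E)
    (hY : ∀ t, 0 ≤ t → HasDerivAt Y ((fderiv ℝ V (φ x t)).comp (Y t)) t)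
    {T : ℝ} (hT : 0 ≤ T) : HasFDerivAt (fun z => φ z T) (Y T) x := by
  obtain ⟨K2, hK2, htay⟩ := h.exists_taylor_bound
  set B : ℝ := K2 * Real.exp (K * T) ^ 2 with hB
  set A : ℝ := gronwallBound 0 K B T with hA
  have key : ∀ z ∈ Ω, ‖φ z T - φ x T - Y T (z - x)‖ ≤
      gronwallBound 0 K (B * ‖z - x‖ ^ 2) T := by
    intro z hz
    have hder : ∀ s, 0 ≤ s → HasDerivAt (fun s => φ z s - φ x s - Y s (z - x))
        (V (φ z s) - V (φ x s) - (fderiv ℝ V (φ x s)) (Y s (z - x))) s := fun s hs =>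
      ((h.deriv z hz s hs).sub (h.deriv x hx s hs)).sub
        (by simpa using (hY s hs).clm_apply (hasDerivAt_const s (z - x)))
    have := norm_le_gronwallBound_of_norm_deriv_right_le
      (f := fun s => φ z s - φ x s - Y s (z - x)) (δ := 0) (K := K) (ε := B * ‖z - x‖ ^ 2)
      (a := 0) (b := T) (fun s hs => (hder s hs.1).continuousAt.continuousWithinAt)
      (fun s hs => (hder s hs.1).hasDerivWithinAt)
      (by simp [h.apply_zero x hx, h.apply_zero z hz, hY0])
      (fun s hs => by
        have e1 : V (φ z s) - V (φ x s) - (fderiv ℝ V (φ x s)) (Y s (z - x)) =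
            fderiv ℝ V (φ x s) (φ z s - φ x s - Y s (z - x)) +
            (V (φ z s) - V (φ x s) - fderiv ℝ V (φ x s) (φ z s - φ x s)) := by
          simp only [map_sub]; abel
        rw [e1]
        refine (norm_add_le _ _).trans (add_le_add ?_ ?_)
        · refine (ContinuousLinearMap.le_opNorm _ _).trans ?_
          gcongr
          exact hK _ (h.mem x hx s hs.1)
        · refine (htay _ (h.mem x hx s hs.1) _ (h.mem z hz s hs.1)).trans ?_
          have h1 := h.dist_le hK hz hx hs.1
          rw [dist_eq_norm, dist_eq_norm] at h1
          have h2 : Real.exp (K * s) ≤ Real.exp (K * T) := by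
            have := hs.2.le
            gcongr
          calc K2 * ‖φ z s - φ x s‖ ^ 2 ≤ K2 * (‖z - x‖ * Real.exp (K * T)) ^ 2 := by
                gcongr
                exact h1.trans (by gcongr)
            _ = _ := by rw [hB]; ring)
      T ⟨hT, le_rfl⟩
    simpa using this
  have hlin : ∀ r : ℝ, gronwallBound 0 K (B * r) T = A * r := by
    intro r
    rw [hA]
    by_cases hK0 : (K : ℝ) = 0
    · rw [hK0]; simp only [gronwallBound_K0]; ring
    · simp only [gronwallBound_of_K_ne_0 hK0]; ring
  rw [hasFDerivAt_iff_isLittleO]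
  have hO : (fun z => φ z T - φ x T - Y T (z - x)) =O[𝓝 x] fun z => ‖z - x‖ ^ 2 := by
    refine Asymptotics.IsBigO.of_bound A ?_
    filter_upwards [h.isOpen.mem_nhds hx] with z hz
    rw [norm_pow, norm_norm, ← hlin]
    exact key z hz
  refine hO.trans_isLittleO ?_
  have : (fun z => ‖z - x‖ ^ 2) =o[𝓝 x] fun z => ‖z - x‖ ^ 1 := by
    have h0 : Tendsto (fun z => ‖z - x‖) (𝓝 x) (𝓝 0) := by
      have : Continuous fun z : E => ‖z - x‖ := by fun_prop
      simpa using this.tendsto x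
    exact (Asymptotics.isLittleO_pow_pow one_lt_two).comp_tendsto h0
  simpa using this

end IsSemiflow
end Semiflow

section Prolongation

variable {E F : Type*} [NormedAddCommGroup E] [NormedSpace ℝ E]
  [NormedAddCommGroup F] [NormedSpace ℝ F]

theorem norm_iteratedFDeriv_comp_fst_le {f : E → F} (hf : ContDiff ℝ ∞ f) (j : ℕ) (z : E × E) :
    ‖iteratedFDeriv ℝ j (fun z : E × E => f z.1) z‖ ≤ ‖iteratedFDeriv ℝ j f z.1‖ := by
  have := (ContinuousLinearMap.fst ℝ E E).iteratedFDeriv_comp_right hf z (i := j)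
    (by exact_mod_cast le_top)
  change ‖iteratedFDeriv ℝ j (f ∘ ContinuousLinearMap.fst ℝ E E) z‖ ≤ _
  rw [this]
  refine (ContinuousMultilinearMap.norm_compContinuousLinearMap_le _ _).trans ?_
  refine mul_le_of_le_one_right (norm_nonneg _) ?_
  exact Finset.prod_le_one (fun _ _ => norm_nonneg _)
    (fun _ _ => ContinuousLinearMap.norm_fst_le ℝ E E)

theorem norm_iteratedFDeriv_snd_le (j : ℕ) {z : E × E} (hz : ‖z.2‖ ≤ 1) :
    ‖iteratedFDeriv ℝ j (fun z : E × E => z.2) z‖ ≤ 1 := by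
  rcases j with _ | j
  · simpa using hz
  · rw [← norm_iteratedFDeriv_fderiv]
    have : fderiv ℝ (fun z : E × E => z.2) = fun _ => ContinuousLinearMap.snd ℝ E E := by
      ext1 z; exact fderiv_snd
    rw [this]
    rcases j with _ | j
    · simpa using ContinuousLinearMap.norm_snd_le ℝ E E
    · rw [iteratedFDeriv_const_of_ne (by simp)]
      simp

theorem norm_iteratedFDeriv_fderiv_apply_le {f : E → F} (hf : ContDiff ℝ ∞ f) (j : ℕ)
    {z : E × E} (hz : ‖z.2‖ ≤ 1) :
    ‖iteratedFDeriv ℝ j (fun z : E × E => fderiv ℝ f z.1 z.2) z‖ ≤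
      ∑ i ∈ Finset.range (j + 1), (j.choose i : ℝ) * ‖iteratedFDeriv ℝ (i + 1) f z.1‖ := by
  have hf' : ContDiff ℝ ∞ (fderiv ℝ f) := hf.fderiv_right (by simp)
  have h1 : ContDiff ℝ ∞ (fun z : E × E => fderiv ℝ f z.1) := hf'.comp contDiff_fst
  refine (norm_iteratedFDeriv_clm_apply h1 contDiff_snd z
    (by exact_mod_cast le_top)).trans ?_
  refine Finset.sum_le_sum fun i _ => ?_
  rw [← norm_iteratedFDeriv_fderiv]
  refine (mul_le_of_le_one_right (by positivity) (norm_iteratedFDeriv_snd_le _ hz)).trans ?_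
  gcongr
  exact norm_iteratedFDeriv_comp_fst_le hf' i z

theorem contDiff_fderiv_apply {f : E → F} (hf : ContDiff ℝ ∞ f) :
    ContDiff ℝ ∞ (fun z : E × E => fderiv ℝ f z.1 z.2) :=
  ((hf.fderiv_right (m := ∞) (by simp)).comp contDiff_fst).clm_apply contDiff_snd

theorem DecaysAlong.prolongation {g : E → F} (hg : ContDiff ℝ ∞ g) {Ω : Set E} {φ : E → ℝ → E}
    (h : DecaysAlong Ω φ g) {y : E × E → ℝ → E}
    (hy : ∀ z ∈ Ω ×ˢ Metric.ball (0 : E) 1, ∀ t, 0 ≤ t → ‖y z t‖ ≤ 1) :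
    DecaysAlong (Ω ×ˢ Metric.ball 0 1) (fun z t => (φ z.1 t, y z t))
      (fun z : E × E => fderiv ℝ g z.1 z.2) := by
  intro j N R
  choose C hC using fun i => h (i + 1) N R
  refine ⟨∑ i ∈ Finset.range (j + 1), (j.choose i : ℝ) * C i, fun z hz hR t ht => ?_⟩
  refine (norm_iteratedFDeriv_fderiv_apply_le hg j (hy z hz t ht)).trans ?_
  rw [Finset.sum_mul]
  refine Finset.sum_le_sum fun i _ => ?_
  rw [mul_assoc]
  gcongr
  exact hC i _ hz.1 ((norm_fst_le z).trans hR) t ht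

theorem IsSemiflow.prolongation {V : E → E} {Ω : Set E} {φ : E → ℝ → E} (h : IsSemiflow V Ω φ)
    {K : NNReal} {Y : E → ℝ → E →L[ℝ] E}
    (hY0 : ∀ x ∈ Ω, Y x 0 = ContinuousLinearMap.id ℝ E)
    (hY : ∀ x ∈ Ω, ∀ t, 0 ≤ t → HasDerivAt (Y x) ((fderiv ℝ V (φ x t)).comp (Y x t)) t)
    (hYb : ∀ x ∈ Ω, ∀ t, 0 ≤ t → ‖Y x t‖ ≤ Real.exp (K * t)) :
    IsSemiflow (fun z : E × E => (V z.1, fderiv ℝ V z.1 z.2 - (K : ℝ) • z.2))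
      (Ω ×ˢ Metric.ball 0 1)
      (fun z t => (φ z.1 t, Real.exp (-(K * t)) • Y z.1 t z.2)) where
  convex := h.convex.prod (convex_ball _ _)
  isOpen := h.isOpen.prod Metric.isOpen_ball
  smooth := (h.smooth.comp contDiff_fst).prodMk
    ((contDiff_fderiv_apply h.smooth).sub (contDiff_const.smul contDiff_snd))
  bounded := by
    intro j hj
    have hb : ∀ i : ℕ, ∃ C, ∀ x ∈ Ω, ‖iteratedFDeriv ℝ (i + 1) V x‖ ≤ C :=
      fun i => h.bounded _ (by omega)
    choose C hC using hb
    obtain ⟨i, rfl⟩ : ∃ i, j = i + 1 := ⟨j - 1, by omega⟩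
    refine ⟨max (C i) (∑ k ∈ Finset.range (i + 1 + 1), ((i + 1).choose k : ℝ) * C k + K),
      fun z hz => ?_⟩
    have hz2 : ‖z.2‖ ≤ 1 := (mem_ball_zero_iff.1 hz.2).le
    have s1 : ContDiff ℝ ∞ (fun z : E × E => V z.1) := h.smooth.comp contDiff_fst
    have s2 := contDiff_fderiv_apply h.smooth
    have s3 : ContDiff ℝ ∞ (fun z : E × E => (K : ℝ) • z.2) := contDiff_const.smul contDiff_snd
    have ht : ((i + 1 : ℕ) : WithTop ℕ∞) ≤ (∞ : WithTop ℕ∞) := by exact_mod_cast le_top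
    rw [iteratedFDeriv_prodMk (s1.contDiffAt) ((s2.sub s3).contDiffAt) ht,
      ContinuousMultilinearMap.opNorm_prod]
    refine max_le_max ?_ ?_
    · exact (norm_iteratedFDeriv_comp_fst_le h.smooth _ z).trans (hC i _ hz.1)
    · rw [fun_iteratedFDeriv_sub_apply (s2.of_le ht).contDiffAt (s3.of_le ht).contDiffAt]
      refine (norm_sub_le _ _).trans (add_le_add ?_ ?_)
      · refine (norm_iteratedFDeriv_fderiv_apply_le h.smooth _ hz2).trans ?_
        refine Finset.sum_le_sum fun k _ => ?_
        gcongr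
        exact hC k _ hz.1
      · rw [iteratedFDeriv_const_smul_apply' contDiff_snd.contDiffAt]
        rw [norm_smul]
        refine (mul_le_of_le_one_right (norm_nonneg _) (norm_iteratedFDeriv_snd_le _ hz2)).trans ?_
        simp
  apply_zero := by
    intro z hz
    simp [h.apply_zero _ hz.1, hY0 _ hz.1]
  mem := by
    intro z hz t ht
    refine ⟨h.mem _ hz.1 t ht, ?_⟩
    rw [mem_ball_zero_iff, norm_smul, Real.norm_of_nonneg (Real.exp_pos _).le]
    calc Real.exp (-(K * t)) * ‖Y z.1 t z.2‖
        ≤ Real.exp (-(K * t)) * (Real.exp (K * t) * ‖z.2‖) := by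
          gcongr
          exact (Y z.1 t).le_of_opNorm_le (hYb _ hz.1 t ht) _
      _ = ‖z.2‖ := by rw [← mul_assoc, ← Real.exp_add]; simp
      _ < 1 := mem_ball_zero_iff.1 hz.2
  deriv := by
    intro z hz t ht
    refine (h.deriv _ hz.1 t ht).prodMk ?_
    have h1 : HasDerivAt (fun t => Real.exp (-(K * t))) (Real.exp (-(K * t)) * (-K)) t := by
      have := ((hasDerivAt_id t).const_mul (K : ℝ)).neg.exp
      simpa using this
    have h2 : HasDerivAt (fun t => Y z.1 t z.2) (fderiv ℝ V (φ z.1 t) (Y z.1 t z.2)) t := by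
      simpa using (hY _ hz.1 t ht).clm_apply (hasDerivAt_const t z.2)
    convert h1.fun_smul h2 using 1
    rw [map_smul]
    module

end Prolongation

section FlowIntegral

open MeasureTheory

theorem exp_weight_mul_decay_le {M C a : ℝ} {N : ℕ} (hN : M + 1 ≤ N) {t : ℝ} (ht : 0 ≤ t)
    (ha0 : 0 ≤ a) (ha : a ≤ C * Real.exp (-(N * t))) :
    Real.exp (M * t) * a ≤ C * Real.exp (-t) := by
  have hC : 0 ≤ C := by
    by_contra hC
    push Not at hC
    have := mul_neg_of_neg_of_pos hC (Real.exp_pos (-(N * t)))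
    linarith
  calc Real.exp (M * t) * a ≤ Real.exp (M * t) * (C * Real.exp (-(N * t))) := by gcongr
    _ = C * Real.exp (M * t + -(N * t)) := by rw [Real.exp_add]; ring
    _ ≤ C * Real.exp (-t) := by
      gcongr
      nlinarith

variable {E : Type*} [NormedAddCommGroup E] [NormedSpace ℝ E]
  {V : E → E} {Ω : Set E} {φ : E → ℝ → E} {g : E → ℝ}

namespace IsSemiflow

theorem exists_norm_fderiv_comp_le (hd : DecaysAlong Ω φ g) {K : NNReal}
    {Y : E → ℝ → E →L[ℝ] E}
    (hYb : ∀ x ∈ Ω, ∀ t, 0 ≤ t → ‖Y x t‖ ≤ Real.exp (K * t)) (M R : ℝ) :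
    ∃ C, ∀ x ∈ Ω, ‖x‖ ≤ R → ∀ t, 0 ≤ t →
      ‖Real.exp (M * t) • (fderiv ℝ g (φ x t)).comp (Y x t)‖ ≤ C * Real.exp (-t) := by
  obtain ⟨N, hN⟩ := exists_nat_ge (M + K + 1)
  obtain ⟨C, hC⟩ := hd 1 N R
  refine ⟨C, fun x hx hR t ht => ?_⟩
  have h1 := hC x hx hR t ht
  rw [norm_iteratedFDeriv_one] at h1
  refine le_trans ?_ (exp_weight_mul_decay_le hN ht (norm_nonneg _) h1)
  rw [norm_smul, Real.norm_of_nonneg (Real.exp_pos _).le, add_mul, Real.exp_add, mul_assoc]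
  gcongr
  refine (ContinuousLinearMap.opNorm_comp_le _ _).trans ?_
  rw [mul_comm]
  gcongr
  exact hYb x hx t ht

theorem integrableOn_weight_mul (h : IsSemiflow V Ω φ) (hg : ContDiff ℝ ∞ g)
    (hd : DecaysAlong Ω φ g) (M : ℝ) {x : E} (hx : x ∈ Ω) :
    IntegrableOn (fun t => Real.exp (M * t) * g (φ x t)) (Set.Ioi 0) := by
  obtain ⟨N, hN⟩ := exists_nat_ge (M + 1)
  obtain ⟨C, hC⟩ := hd 0 N ‖x‖
  refine Integrable.mono' ((integrableOn_exp_neg_Ioi 0).const_mul C) ?_ ?_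
  · refine ContinuousOn.aestronglyMeasurable ?_ measurableSet_Ioi
    exact (by fun_prop : Continuous fun t => Real.exp (M * t)).continuousOn.mul
      (hg.continuous.comp_continuousOn ((h.continuousOn hx).mono Set.Ioi_subset_Ici_self))
  · refine (ae_restrict_mem measurableSet_Ioi).mono fun t ht => ?_
    have h1 := hC x hx le_rfl t (le_of_lt ht)
    rw [norm_iteratedFDeriv_zero] at h1
    rw [norm_mul, Real.norm_of_nonneg (Real.exp_pos _).le]
    exact exp_weight_mul_decay_le hN (le_of_lt ht) (norm_nonneg _) h1

theorem hasFDerivAt_integral (h : IsSemiflow V Ω φ) (hg : ContDiff ℝ ∞ g)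
    (hd : DecaysAlong Ω φ g) {K : NNReal} (hK : ∀ x ∈ Ω, ‖fderiv ℝ V x‖ ≤ K)
    {Y : E → ℝ → E →L[ℝ] E}
    (hY0 : ∀ x ∈ Ω, Y x 0 = ContinuousLinearMap.id ℝ E)
    (hY : ∀ x ∈ Ω, ∀ t, 0 ≤ t → HasDerivAt (Y x) ((fderiv ℝ V (φ x t)).comp (Y x t)) t)
    (hYb : ∀ x ∈ Ω, ∀ t, 0 ≤ t → ‖Y x t‖ ≤ Real.exp (K * t)) (M : ℝ) {x : E} (hx : x ∈ Ω) :
    IntegrableOn (fun t => Real.exp (M * t) • (fderiv ℝ g (φ x t)).comp (Y x t)) (Set.Ioi 0) ∧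
    HasFDerivAt (fun x => ∫ t in Set.Ioi (0 : ℝ), Real.exp (M * t) * g (φ x t))
      (∫ t in Set.Ioi (0 : ℝ), Real.exp (M * t) • (fderiv ℝ g (φ x t)).comp (Y x t)) x := by
  obtain ⟨ε, hε, hball⟩ := Metric.isOpen_iff.1 h.isOpen x hx
  obtain ⟨C, hC⟩ := exists_norm_fderiv_comp_le hd hYb M (‖x‖ + ε)
  have hR : ∀ z ∈ Metric.ball x ε, ‖z‖ ≤ ‖x‖ + ε := by
    intro z hz
    have : ‖z - x‖ < ε := mem_ball_iff_norm.1 hz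
    calc ‖z‖ = ‖x + (z - x)‖ := by rw [add_sub_cancel]
      _ ≤ ‖x‖ + ‖z - x‖ := norm_add_le _ _
      _ ≤ _ := by linarith
  have hmeas : AEStronglyMeasurable
      (fun t => Real.exp (M * t) • (fderiv ℝ g (φ x t)).comp (Y x t))
      (volume.restrict (Set.Ioi 0)) := by
    refine ContinuousOn.aestronglyMeasurable ?_ measurableSet_Ioi
    refine (by fun_prop : Continuous fun t => Real.exp (M * t)).continuousOn.smul ?_
    refine ContinuousOn.clm_comp ?_ ?_
    · exact (hg.continuous_fderiv (by simp)).comp_continuousOn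
        ((h.continuousOn hx).mono Set.Ioi_subset_Ici_self)
    · exact fun t ht => (hY x hx t (le_of_lt ht)).continuousAt.continuousWithinAt
  have hbd : Integrable (fun t => C * Real.exp (-t)) (volume.restrict (Set.Ioi 0)) :=
    (integrableOn_exp_neg_Ioi 0).const_mul C
  refine ⟨Integrable.mono' hbd hmeas ((ae_restrict_mem measurableSet_Ioi).mono fun t ht =>
    hC x hx (hR x (Metric.mem_ball_self hε)) t (le_of_lt ht)), ?_⟩
  refine hasFDerivAt_integral_of_dominated_of_fderiv_le (Metric.ball_mem_nhds x hε)
    (F' := fun z t => Real.exp (M * t) • (fderiv ℝ g (φ z t)).comp (Y z t))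
    (bound := fun t => C * Real.exp (-t))
    ?_ (h.integrableOn_weight_mul hg hd M hx) hmeas ?_ hbd ?_
  · filter_upwards [h.isOpen.mem_nhds hx] with z hz
    exact (h.integrableOn_weight_mul hg hd M hz).aestronglyMeasurable
  · refine (ae_restrict_mem measurableSet_Ioi).mono fun t ht z hz => ?_
    exact hC z (hball hz) (hR z hz) t (le_of_lt ht)
  · refine (ae_restrict_mem measurableSet_Ioi).mono fun t ht z hz => ?_
    have h1 := h.hasFDerivAt hK (hball hz) (hY0 z (hball hz)) (hY z (hball hz)) (le_of_lt ht)
    have h2 := (hg.differentiable (by simp) (φ z t)).hasFDerivAt.comp z h1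
    exact h2.const_mul (Real.exp (M * t))

end IsSemiflow

theorem contDiffOn_integral_along_semiflow.{u} (k : ℕ) :
    ∀ {E : Type u} [NormedAddCommGroup E] [NormedSpace ℝ E] [FiniteDimensional ℝ E]
      {V : E → E} {Ω : Set E} {φ : E → ℝ → E} (_ : IsSemiflow V Ω φ) {g : E → ℝ}
      (_ : ContDiff ℝ ∞ g) (_ : DecaysAlong Ω φ g) (M : ℝ),
      ContDiffOn ℝ k (fun x => ∫ t in Set.Ioi (0 : ℝ), Real.exp (M * t) * g (φ x t)) Ω := by
  induction k with
  | zero =>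
    intro E _ _ _ V Ω φ h g hg hd M
    have : CompleteSpace E := FiniteDimensional.complete ℝ E
    obtain ⟨K, hK⟩ := h.exists_fderiv_bound
    choose! Y hY0 hY hYb using fun x (hx : x ∈ Ω) => h.exists_variational hK hx
    rw [Nat.cast_zero, contDiffOn_zero]
    exact fun x hx => (h.hasFDerivAt_integral hg hd hK hY0 hY hYb M
      hx).2.continuousAt.continuousWithinAt
  | succ k ih =>
    intro E _ _ _ V Ω φ h g hg hd M
    have : CompleteSpace E := FiniteDimensional.complete ℝ E
    obtain ⟨K, hK⟩ := h.exists_fderiv_bound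
    choose! Y hY0 hY hYb using fun x (hx : x ∈ Ω) => h.exists_variational hK hx
    have hD := fun x (hx : x ∈ Ω) => h.hasFDerivAt_integral hg hd hK hY0 hY hYb M hx
    rw [Nat.cast_add, Nat.cast_one, contDiffOn_succ_iff_fderiv_of_isOpen h.isOpen]
    refine ⟨fun x hx => (hD x hx).2.differentiableAt.differentiableWithinAt, by simp, ?_⟩
    rw [contDiffOn_clm_apply]
    intro y
    have hpro := h.prolongation hY0 hY hYb
    have hdec : DecaysAlong _ _ _ := DecaysAlong.prolongation hg hd
      (y := fun z t => Real.exp (-(K * t)) • Y z.1 t z.2)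
      (fun z hz t ht => (mem_ball_zero_iff.1 (hpro.mem z hz t ht).2).le)
    have hk := ih hpro (contDiff_fderiv_apply hg) hdec (M + K)
    set c : ℝ := ‖y‖ + 1 with hc
    have hc0 : 0 < c := by positivity
    have hy0 : c⁻¹ • y ∈ Metric.ball (0 : E) 1 := by
      rw [mem_ball_zero_iff, norm_smul, norm_inv, Real.norm_of_nonneg hc0.le, inv_mul_lt_iff₀ hc0]
      linarith
    have hk2 : ContDiffOn ℝ k (fun x => c * ∫ t in Set.Ioi (0 : ℝ), Real.exp ((M + K) * t) *
        fderiv ℝ g (φ x t) (Real.exp (-(K * t)) • Y x t (c⁻¹ • y))) Ω :=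
      contDiffOn_const.mul (hk.comp (contDiff_id.prodMk contDiff_const).contDiffOn
        (fun x hx => ⟨hx, hy0⟩))
    refine hk2.congr fun x hx => ?_
    rw [(hD x hx).2.fderiv, ContinuousLinearMap.integral_apply (hD x hx).1, ← integral_const_mul]
    refine integral_congr_ae (Eventually.of_forall fun t => ?_)
    simp only [smul_apply, ContinuousLinearMap.comp_apply, map_smul,
      smul_eq_mul]
    have e1 : Real.exp (M * t) = Real.exp ((M + K) * t) * Real.exp (-(K * t)) := by
      rw [← Real.exp_add]; ring_nf
    rw [e1]
    field_simp

end FlowIntegral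

section FlowEquation

open MeasureTheory

theorem setIntegral_Ioi_comp_add_right (f : ℝ → ℝ) (s : ℝ) :
    ∫ t in Set.Ioi (0 : ℝ), f (t + s) = ∫ t in Set.Ioi s, f t := by
  have := (measurePreserving_add_right volume s).setIntegral_preimage_emb
    (measurableEmbedding_addRight s) f (Set.Ioi s)
  simpa using this

variable {E : Type*} [NormedAddCommGroup E] [NormedSpace ℝ E]
  {V : E → E} {Ω : Set E} {φ : E → ℝ → E} {g : E → ℝ}

namespace IsSemiflow

theorem eq_of_hasDerivAt (h : IsSemiflow V Ω φ) {x : E} (hx : x ∈ Ω) {γ : ℝ → E} (h0 : γ 0 = x)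
    (hm : ∀ t, 0 ≤ t → γ t ∈ Ω) (hγ : ∀ t, 0 ≤ t → HasDerivAt γ (V (γ t)) t) {t : ℝ}
    (ht : 0 ≤ t) : γ t = φ x t := by
  obtain ⟨K, hK⟩ := h.exists_fderiv_bound
  have hd : ∀ x, DifferentiableAt ℝ V x := (h.smooth.differentiable (by simp))
  have hL : LipschitzOnWith K V Ω := h.convex.lipschitzOnWith_of_nnnorm_fderiv_le
    (fun x _ => hd x) hK
  have := dist_le_of_trajectories_ODE_of_mem (v := fun _ => V) (s := fun _ => Ω) (K := K)
    (f := γ) (g := φ x) (a := 0) (b := t) (δ := 0)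
    (fun _ _ => hL) (fun s hs => (hγ s hs.1).continuousAt.continuousWithinAt)
    (fun s hs => (hγ s hs.1).hasDerivWithinAt) (fun s hs => hm s hs.1)
    ((h.continuousOn hx).mono fun s hs => hs.1)
    (fun s hs => (h.deriv x hx s hs.1).hasDerivWithinAt) (fun s hs => h.mem x hx s hs.1)
    (by rw [h.apply_zero x hx, h0, dist_self]) t ⟨ht, le_rfl⟩
  exact dist_le_zero.1 (by simpa using this)

theorem add_apply (h : IsSemiflow V Ω φ) {x : E} (hx : x ∈ Ω) {s t : ℝ} (hs : 0 ≤ s)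
    (ht : 0 ≤ t) : φ x (t + s) = φ (φ x s) t :=
  h.eq_of_hasDerivAt (h.mem x hx s hs) (γ := fun t => φ x (t + s)) (by simp)
    (fun t ht => h.mem x hx _ (add_nonneg ht hs))
    (fun t ht => (h.deriv x hx _ (add_nonneg ht hs)).comp_add_const t s) ht

theorem eq_self_of_eq_zero (h : IsSemiflow V Ω φ) {x : E} (hx : x ∈ Ω) (h0 : V x = 0) {t : ℝ}
    (ht : 0 ≤ t) : φ x t = x :=
  (h.eq_of_hasDerivAt hx (γ := fun _ => x) rfl (fun _ _ => hx)
    (fun t _ => by rw [h0]; exact hasDerivAt_const t x) ht).symm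

/-- The cohomological equation is solvable for right-hand sides that decay along the semiflow. -/
theorem exists_fderiv_apply_eq_neg [FiniteDimensional ℝ E] (h : IsSemiflow V Set.univ φ)
    (hg : ContDiff ℝ ∞ g) (hd : DecaysAlong Set.univ φ g) :
    ∃ f : E → ℝ, ContDiff ℝ ∞ f ∧ (∀ x, fderiv ℝ f x (V x) = - g x) ∧
      ∀ x, V x = 0 → g x = 0 → f x = 0 := by
  set f : E → ℝ := fun x => ∫ t in Set.Ioi (0 : ℝ), Real.exp (0 * t) * g (φ x t) with hf
  have hfs : ContDiff ℝ ∞ f := contDiff_infty.2 fun k =>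
    contDiffOn_univ.1 (contDiffOn_integral_along_semiflow k h hg hd 0)
  refine ⟨f, hfs, fun x => ?_, fun x hV hgx => ?_⟩
  · have hint := h.integrableOn_weight_mul hg hd 0 (Set.mem_univ x)
    have hcont : Continuous fun t => g (φ x (max t 0)) :=
      hg.continuous.comp (h.continuous_max (Set.mem_univ x))
    have hshift : ∀ s, 0 ≤ s → f (φ x s) = f x - ∫ t in (0 : ℝ)..s, g (φ x (max t 0)) := by
      intro s hs
      have e1 : f (φ x s) = ∫ t in Set.Ioi s, Real.exp (0 * t) * g (φ x t) := by
        have e2 := setIntegral_Ioi_comp_add_right (fun t => Real.exp (0 * t) * g (φ x t)) s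
        rw [← e2]
        refine setIntegral_congr_fun measurableSet_Ioi fun t ht => ?_
        simp only [zero_mul, Real.exp_zero, one_mul]
        rw [h.add_apply (Set.mem_univ x) hs (le_of_lt ht)]
      have e3 := intervalIntegral.integral_Ioi_sub_Ioi hint hs
      rw [e1]
      have e4 : ∫ t in (0 : ℝ)..s, g (φ x (max t 0)) =
          ∫ t in (0 : ℝ)..s, Real.exp (0 * t) * g (φ x t) := by
        refine intervalIntegral.integral_congr fun t ht => ?_
        rw [Set.uIcc_of_le hs] at ht
        simp [max_eq_left ht.1]
      rw [e4]
      simp only [hf]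
      linarith
    have d1 : HasDerivAt (fun s => f (φ x s)) (fderiv ℝ f x (V x)) 0 := by
      have := (hfs.differentiable (by simp) (φ x 0)).hasFDerivAt.comp_hasDerivAt 0
        (h.deriv x (Set.mem_univ x) 0 le_rfl)
      rwa [h.apply_zero x (Set.mem_univ x)] at this
    have d2 : HasDerivAt (fun s => f x - ∫ t in (0 : ℝ)..s, g (φ x (max t 0))) (- g x) 0 := by
      have := (hcont.integral_hasStrictDerivAt 0 0).hasDerivAt.const_sub (f x)
      simpa [h.apply_zero x (Set.mem_univ x)] using this
    have d3 : HasDerivWithinAt (fun s => f (φ x s)) (- g x) (Set.Ici 0) 0 :=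
      d2.hasDerivWithinAt.congr (fun s hs => hshift s hs) (hshift 0 le_rfl)
    exact (uniqueDiffOn_Ici (0 : ℝ) 0 Set.self_mem_Ici).eq_deriv _ d1.hasDerivWithinAt d3
  · rw [hf]
    refine setIntegral_eq_zero_of_forall_eq_zero fun t ht => ?_
    rw [h.eq_self_of_eq_zero (Set.mem_univ x) hV (le_of_lt ht), hgx, mul_zero]

end IsSemiflow

end FlowEquation

section Flat

variable {E X F : Type*} [NormedAddCommGroup E] [NormedSpace ℝ E]
  [NormedAddCommGroup X] [NormedSpace ℝ X] [NormedAddCommGroup F] [NormedSpace ℝ F]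
  {p : E →L[ℝ] X}

/-- A smooth function of compact support is bounded together with each of its derivatives. -/
theorem exists_norm_iteratedFDeriv_le {u : E → F} (hu : ContDiff ℝ ∞ u)
    (hc : HasCompactSupport u) (j : ℕ) : ∃ C, 0 ≤ C ∧ ∀ e, ‖iteratedFDeriv ℝ j u e‖ ≤ C := by
  obtain ⟨C, hC⟩ := (hu.continuous_iteratedFDeriv (m := j)
    (by exact_mod_cast le_top)).bounded_above_of_compact_support (hc.iteratedFDeriv j)
  exact ⟨C, (norm_nonneg _).trans (hC 0), hC⟩

/-- Interpolation between the size of `u` and the boundedness of its second derivative. -/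
theorem exists_norm_fderiv_le_of_norm_le {u : E → F} (hu : ContDiff ℝ ∞ u)
    (hc : HasCompactSupport u) {N : ℕ} {C : ℝ} (hC : ∀ e, ‖u e‖ ≤ C * ‖p e‖ ^ (2 * N)) :
    ∃ C', ∀ e, ‖fderiv ℝ u e‖ ≤ C' * ‖p e‖ ^ N := by
  obtain ⟨B₁, hB₁0, hB₁⟩ := exists_norm_iteratedFDeriv_le hu hc 1
  obtain ⟨B₂, hB₂0, hB₂⟩ := exists_norm_iteratedFDeriv_le hu hc 2
  simp only [norm_iteratedFDeriv_one] at hB₁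
  have hC' : ∀ e, ‖u e‖ ≤ |C| * ‖p e‖ ^ (2 * N) := fun e =>
    (hC e).trans (by gcongr; exact le_abs_self C)
  rcases Nat.eq_zero_or_pos N with rfl | hN
  · exact ⟨B₁, fun e => by simpa using hB₁ e⟩
  set P : ℝ := 1 + ‖p‖ with hP
  set A : ℝ := B₂ + |C| * P ^ (2 * N) + |C| with hA
  have hA0 : 0 ≤ A := by positivity
  refine ⟨B₁ + A, fun e => ?_⟩
  by_cases he : 1 ≤ ‖p e‖
  · calc ‖fderiv ℝ u e‖ ≤ B₁ := hB₁ e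
      _ ≤ (B₁ + A) * 1 := by linarith
      _ ≤ (B₁ + A) * ‖p e‖ ^ N := by gcongr; exact one_le_pow₀ he
  push Not at he
  have key : ∀ s ∈ Set.Ioc ‖p e‖ 1, ‖fderiv ℝ u e‖ ≤ A * s ^ N := by
    intro s hs
    have hs0 : 0 < s := (norm_nonneg _).trans_lt hs.1
    refine ContinuousLinearMap.opNorm_le_of_unit_norm (by positivity) fun y hy => ?_
    have hsN : s ^ N ≤ s := pow_le_of_le_one hs0.le hs.2 hN.ne'
    have h1 := convex_univ.norm_sub_sub_fderiv_le hu hB₂0 (fun x _ => hB₂ x)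
      (Set.mem_univ e) (Set.mem_univ (e + s ^ N • y))
    rw [add_sub_cancel_left, map_smul, norm_smul, hy, mul_one,
      Real.norm_of_nonneg (by positivity)] at h1
    have hpe : ‖p (e + s ^ N • y)‖ ≤ P * s := by
      rw [map_add, map_smul]
      refine (norm_add_le _ _).trans ?_
      rw [norm_smul, Real.norm_of_nonneg (by positivity)]
      have : ‖p y‖ ≤ ‖p‖ := by simpa [hy] using p.le_opNorm y
      calc ‖p e‖ + s ^ N * ‖p y‖ ≤ s + s * ‖p‖ := by
            gcongr
            exact hs.1.le
        _ = P * s := by rw [hP]; ring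
    have h2 : ‖u (e + s ^ N • y)‖ ≤ |C| * P ^ (2 * N) * s ^ (2 * N) := by
      refine (hC' _).trans ?_
      rw [mul_assoc, ← mul_pow]
      gcongr
    have h3 : ‖u e‖ ≤ |C| * s ^ (2 * N) := by
      refine (hC' _).trans ?_
      gcongr
      exact hs.1.le
    have h4 : ‖s ^ N • fderiv ℝ u e y‖ ≤ A * s ^ (2 * N) := by
      have e1 : s ^ N • fderiv ℝ u e y = u (e + s ^ N • y) - u e -
        (u (e + s ^ N • y) - u e - s ^ N • fderiv ℝ u e y) := by abel
      rw [e1]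
      refine (norm_sub_le _ _).trans ?_
      have := norm_sub_le (u (e + s ^ N • y)) (u e)
      have e2 : (s ^ N) ^ 2 = s ^ (2 * N) := by rw [← pow_mul, mul_comm]
      rw [e2] at h1
      rw [hA]
      linarith
    rw [norm_smul, Real.norm_of_nonneg (by positivity), two_mul, pow_add,
      ← mul_assoc, mul_comm (s ^ N) ‖_‖] at h4
    exact le_of_mul_le_mul_right h4 (by positivity)
  have hlim : Tendsto (fun s : ℝ => A * s ^ N) (𝓝[>] ‖p e‖) (𝓝 (A * ‖p e‖ ^ N)) :=
    ((by fun_prop : Continuous fun s : ℝ => A * s ^ N).tendsto _).mono_left nhdsWithin_le_nhds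
  have := ge_of_tendsto hlim (by
    filter_upwards [Ioc_mem_nhdsGT he] with s hs
    exact key s hs)
  refine this.trans ?_
  gcongr
  linarith

/-- Compactly supported smooth functions vanishing to infinite order on the kernel of `p`. -/
structure IsFlat (p : E →L[ℝ] X) (g : E → F) : Prop where
  smooth : ContDiff ℝ ∞ g
  compact : HasCompactSupport g
  decay : ∀ N : ℕ, ∃ C, ∀ e, ‖g e‖ ≤ C * ‖p e‖ ^ N

namespace IsFlat

variable {g : E → F}

theorem eq_zero (hg : IsFlat p g) {e : E} (he : p e = 0) : g e = 0 := by
  obtain ⟨C, hC⟩ := hg.decay 1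
  simpa [he] using hC e

theorem fderiv (hg : IsFlat p g) : IsFlat p (fderiv ℝ g) where
  smooth := hg.smooth.fderiv_right (by simp)
  compact := hg.compact.fderiv ℝ
  decay N := by
    obtain ⟨C, hC⟩ := hg.decay (2 * N)
    exact exists_norm_fderiv_le_of_norm_le hg.smooth hg.compact hC

theorem norm_iteratedFDeriv_le.{u, v} {E : Type u} {X : Type v} [NormedAddCommGroup E]
    [NormedSpace ℝ E] [NormedAddCommGroup X] [NormedSpace ℝ X] {p : E →L[ℝ] X} (j : ℕ) :
    ∀ {F : Type u} [NormedAddCommGroup F] [NormedSpace ℝ F]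
    {g : E → F} (_ : IsFlat p g) (N : ℕ), ∃ C, 0 ≤ C ∧
      ∀ e, ‖iteratedFDeriv ℝ j g e‖ ≤ C * ‖p e‖ ^ N := by
  induction j with
  | zero =>
    intro F _ _ g hg N
    obtain ⟨C, hC⟩ := hg.decay N
    exact ⟨|C|, abs_nonneg C, fun e => by
      rw [norm_iteratedFDeriv_zero]
      exact (hC e).trans (by gcongr; exact le_abs_self C)⟩
  | succ j ih =>
    intro F _ _ g hg N
    obtain ⟨C, hC0, hC⟩ := ih hg.fderiv N
    exact ⟨C, hC0, fun e => by rw [← norm_iteratedFDeriv_fderiv]; exact hC e⟩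

theorem of_norm_le {G : Type*} [NormedAddCommGroup G] [NormedSpace ℝ G] {f : E → G}
    (hg : IsFlat p g) (hf : ContDiff ℝ ∞ f) {M : ℝ}
    (h : ∀ e, ‖f e‖ ≤ M * ‖g e‖) : IsFlat p f where
  smooth := hf
  compact := hg.compact.mono fun e he => by
    rw [Function.mem_support] at he ⊢
    intro h0
    have := h e
    rw [h0, norm_zero, mul_zero] at this
    exact he (norm_le_zero_iff.1 this)
  decay N := by
    obtain ⟨C, hC⟩ := hg.decay N
    refine ⟨|M| * |C|, fun e => (h e).trans ?_⟩
    calc M * ‖g e‖ ≤ |M| * (C * ‖p e‖ ^ N) := by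
          gcongr
          · exact le_abs_self M
          · exact hC e
      _ ≤ |M| * (|C| * ‖p e‖ ^ N) := by gcongr; exact le_abs_self C
      _ = _ := by ring

end IsFlat
end Flat

section Homogeneous

/-- Functions which are smooth away from the origin and homogeneous of degree `-d`. -/
structure IsHomogeneousOff {X G : Type*} [NormedAddCommGroup X] [NormedSpace ℝ X]
    [NormedAddCommGroup G] [NormedSpace ℝ G] (d : ℕ) (Q : X → G) : Prop where
  smooth : ∀ x, x ≠ 0 → ContDiffAt ℝ ∞ Q x
  homogeneous : ∀ c : ℝ, 0 < c → ∀ x, x ≠ 0 → c ^ d • Q (c • x) = Q x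

namespace IsHomogeneousOff

variable {X G : Type*} [NormedAddCommGroup X] [NormedSpace ℝ X]
    [NormedAddCommGroup G] [NormedSpace ℝ G] {d : ℕ} {Q : X → G}

protected theorem fderiv (h : IsHomogeneousOff d Q) : IsHomogeneousOff (d + 1) (fderiv ℝ Q) where
  smooth x hx := (h.smooth x hx).fderiv_right (by simp)
  homogeneous c hc x hx := by
    have h1 : (fun y => c ^ d • Q (c • y)) =ᶠ[𝓝 x] Q := by
      filter_upwards [isOpen_ne.mem_nhds hx] with y hy
      exact h.homogeneous c hc y hy
    have h2 : HasFDerivAt (fun y => c ^ d • Q (c • y)) (c ^ d • (c • fderiv ℝ Q (c • x))) x := by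
      have h3 := ((h.smooth (c • x) (smul_ne_zero hc.ne' hx)).differentiableAt
        (by simp)).hasFDerivAt
      have h4 : HasFDerivAt (fun y : X => c • y) (c • ContinuousLinearMap.id ℝ X) x :=
        (hasFDerivAt_id x).const_smul c
      have h5 := (h3.comp x h4).const_smul (c ^ d)
      rwa [ContinuousLinearMap.comp_smul, ContinuousLinearMap.comp_id] at h5
    rw [← h1.fderiv_eq, h2.fderiv, smul_smul, pow_succ]

theorem exists_norm_le [FiniteDimensional ℝ X] (h : IsHomogeneousOff d Q) :
    ∃ C, 0 ≤ C ∧ ∀ x, x ≠ 0 → ‖Q x‖ * ‖x‖ ^ d ≤ C := by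
  have : ProperSpace X := FiniteDimensional.proper ℝ X
  obtain ⟨C, hC⟩ := (isCompact_sphere (0 : X) 1).exists_bound_of_continuousOn (f := Q)
    (fun x hx => (h.smooth x (fun h0 => by simp [h0] at hx)).continuousAt.continuousWithinAt)
  refine ⟨|C|, abs_nonneg C, fun x hx => ?_⟩
  have hx0 : 0 < ‖x‖ := norm_pos_iff.2 hx
  have h1 := h.homogeneous ‖x‖⁻¹ (by positivity) x hx
  have h2 := hC (‖x‖⁻¹ • x) (by simp [norm_smul, hx0.ne'])
  rw [← h1, norm_smul, norm_pow, norm_inv, norm_norm]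
  calc ‖x‖⁻¹ ^ d * ‖Q (‖x‖⁻¹ • x)‖ * ‖x‖ ^ d
      = ‖Q (‖x‖⁻¹ • x)‖ * (‖x‖⁻¹ * ‖x‖) ^ d := by rw [mul_pow]; ring
    _ = ‖Q (‖x‖⁻¹ • x)‖ := by rw [inv_mul_cancel₀ hx0.ne', one_pow, mul_one]
    _ ≤ |C| := h2.trans (le_abs_self C)

end IsHomogeneousOff

variable {E X F G H : Type*} [NormedAddCommGroup E] [NormedSpace ℝ E]
  [NormedAddCommGroup X] [NormedSpace ℝ X] [NormedAddCommGroup F] [NormedSpace ℝ F]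
  [NormedAddCommGroup G] [NormedSpace ℝ G] [NormedAddCommGroup H] [NormedSpace ℝ H]
  {p : E →L[ℝ] X}

theorem IsFlat.hasFDerivAt_bilinear [FiniteDimensional ℝ X] {g : E → F} (hg : IsFlat p g)
    {d : ℕ} {Q : X → G} (hQ : IsHomogeneousOff d Q) (B : G →L[ℝ] F →L[ℝ] H) (e : E) :
    HasFDerivAt (fun e => B (Q (p e)) (g e))
      (B.precompR E (Q (p e)) (_root_.fderiv ℝ g e) +
        (B.precompL E).comp ((ContinuousLinearMap.compL ℝ E X G).flip p)
          (_root_.fderiv ℝ Q (p e)) (g e)) e := by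
  by_cases he : p e = 0
  · rw [hg.eq_zero he, hg.fderiv.eq_zero he, map_zero, map_zero, add_zero,
      hasFDerivAt_iff_isLittleO]
    obtain ⟨C, hC0, hC⟩ := hQ.exists_norm_le
    obtain ⟨C', hC'⟩ := hg.decay (d + 2)
    have hO : (fun e' => B (Q (p e')) (g e') - B (Q (p e)) (g e) - (0 : E →L[ℝ] H) (e' - e))
        =O[𝓝 e] fun e' => ‖e' - e‖ ^ 2 := by
      refine Asymptotics.IsBigO.of_bound (‖B‖ * C * |C'| * ‖p‖ ^ 2)
        (Eventually.of_forall fun e' => ?_)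
      rw [hg.eq_zero he, map_zero, zero_apply, sub_zero, sub_zero, norm_pow, norm_norm]
      by_cases he' : p e' = 0
      · rw [hg.eq_zero he', map_zero, norm_zero]
        positivity
      · have h1 : ‖p e'‖ ≤ ‖p‖ * ‖e' - e‖ := by
          have := p.le_opNorm (e' - e)
          rwa [map_sub, he, sub_zero] at this
        calc ‖B (Q (p e')) (g e')‖ ≤ ‖B‖ * ‖Q (p e')‖ * ‖g e'‖ := B.le_opNorm₂ _ _
          _ ≤ ‖B‖ * ‖Q (p e')‖ * (|C'| * ‖p e'‖ ^ (d + 2)) := by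
            gcongr
            exact (hC' e').trans (by gcongr; exact le_abs_self C')
          _ = ‖B‖ * (‖Q (p e')‖ * ‖p e'‖ ^ d) * |C'| * ‖p e'‖ ^ 2 := by rw [pow_add]; ring
          _ ≤ ‖B‖ * C * |C'| * (‖p‖ * ‖e' - e‖) ^ 2 := by
            gcongr
            exact hC _ he'
          _ = _ := by rw [mul_pow]; ring
    refine hO.trans_isLittleO ?_
    have : (fun z => ‖z - e‖ ^ 2) =o[𝓝 e] fun z => ‖z - e‖ ^ 1 := by
      have h0 : Tendsto (fun z => ‖z - e‖) (𝓝 e) (𝓝 0) := by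
        have : Continuous fun z : E => ‖z - e‖ := by fun_prop
        simpa using this.tendsto e
      exact (Asymptotics.isLittleO_pow_pow one_lt_two).comp_tendsto h0
    simpa using this
  · have h1 : HasFDerivAt (fun e => Q (p e)) ((_root_.fderiv ℝ Q (p e)).comp p) e :=
      ((hQ.smooth _ he).differentiableAt (by simp)).hasFDerivAt.comp e p.hasFDerivAt
    exact B.hasFDerivAt_of_bilinear h1 (hg.smooth.differentiable (by simp) e).hasFDerivAt

theorem IsFlat.contDiff_bilinear.{u} {E X : Type u} [NormedAddCommGroup E] [NormedSpace ℝ E]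
    [NormedAddCommGroup X] [NormedSpace ℝ X] [FiniteDimensional ℝ X] {p : E →L[ℝ] X} (k : ℕ) :
    ∀ {F G H : Type u} [NormedAddCommGroup F] [NormedSpace ℝ F]
      [NormedAddCommGroup G] [NormedSpace ℝ G] [NormedAddCommGroup H] [NormedSpace ℝ H]
      {g : E → F} (_ : IsFlat p g) {d : ℕ} {Q : X → G} (_ : IsHomogeneousOff d Q)
      (B : G →L[ℝ] F →L[ℝ] H), ContDiff ℝ k (fun e => B (Q (p e)) (g e)) := by
  induction k with
  | zero =>
    intro F G H _ _ _ _ _ _ g hg d Q hQ B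
    rw [Nat.cast_zero, contDiff_zero]
    exact continuous_iff_continuousAt.2 fun e => (hg.hasFDerivAt_bilinear hQ B e).continuousAt
  | succ k ih =>
    intro F G H _ _ _ _ _ _ g hg d Q hQ B
    rw [Nat.cast_add, Nat.cast_one, contDiff_succ_iff_hasFDerivAt]
    refine ⟨_, ?_, hg.hasFDerivAt_bilinear hQ B⟩
    exact (ih hg.fderiv hQ _).add (ih hg hQ.fderiv _)

/-- Splitting a flat function by means of a cutoff which is homogeneous of degree zero. -/
theorem IsFlat.exists_add_eq {E X : Type} [NormedAddCommGroup E] [NormedSpace ℝ E]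
    [NormedAddCommGroup X] [NormedSpace ℝ X] [FiniteDimensional ℝ X] {p : E →L[ℝ] X}
    {g : E → ℝ} (hg : IsFlat p g) (a b : X →L[ℝ] ℝ)
    (hab : ∀ x, a x = 0 → b x = 0 → x = 0) :
    ∃ g₁ g₂ : E → ℝ, IsFlat p g₁ ∧ IsFlat p g₂ ∧ (∀ e, g₁ e + g₂ e = g e) ∧
      (∀ e, g₁ e ≠ 0 → b (p e) ^ 2 ≤ 2 * a (p e) ^ 2) ∧
      (∀ e, g₂ e ≠ 0 → a (p e) ^ 2 ≤ 2 * b (p e) ^ 2) := by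
  have hpos : ∀ x, x ≠ 0 → 0 < a x ^ 2 + b x ^ 2 := by
    intro x hx
    by_contra h
    push Not at h
    have h1 : a x ^ 2 = 0 := by nlinarith [sq_nonneg (a x), sq_nonneg (b x)]
    have h2 : b x ^ 2 = 0 := by nlinarith [sq_nonneg (a x), sq_nonneg (b x)]
    exact hx (hab x (pow_eq_zero_iff two_ne_zero |>.1 h1) (pow_eq_zero_iff two_ne_zero |>.1 h2))
  set Q : X → ℝ := fun x =>
    Real.smoothTransition (3 * (a x ^ 2 / (a x ^ 2 + b x ^ 2)) - 1) with hQdef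
  have hQ : IsHomogeneousOff 0 Q := by
    refine ⟨fun x hx => ?_, fun c hc x hx => ?_⟩
    · have ha : ContDiffAt ℝ ∞ (fun x => a x ^ 2) x := (a.contDiff.pow 2).contDiffAt
      have hb : ContDiffAt ℝ ∞ (fun x => b x ^ 2) x := (b.contDiff.pow 2).contDiffAt
      exact Real.smoothTransition.contDiff.contDiffAt.comp x
        ((contDiffAt_const.mul (ha.div (ha.add hb) (hpos x hx).ne')).sub contDiffAt_const)
    · have : a (c • x) ^ 2 / (a (c • x) ^ 2 + b (c • x) ^ 2) = a x ^ 2 / (a x ^ 2 + b x ^ 2) := by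
        simp only [map_smul, smul_eq_mul, mul_pow, ← mul_add]
        exact mul_div_mul_left _ _ (by positivity)
      simp only [hQdef, this, pow_zero, one_smul]
  have hs : ContDiff ℝ ∞ (fun e => Q (p e) * g e) := contDiff_infty.2 fun k =>
    IsFlat.contDiff_bilinear k hg hQ (ContinuousLinearMap.mul ℝ ℝ)
  have hQ0 : ∀ x, 0 ≤ Q x := fun x => Real.smoothTransition.nonneg _
  have hQ1 : ∀ x, Q x ≤ 1 := fun x => Real.smoothTransition.le_one _
  refine ⟨fun e => Q (p e) * g e, fun e => g e - Q (p e) * g e,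
    hg.of_norm_le hs (M := 1) fun e => ?_, hg.of_norm_le (hg.smooth.sub hs) (M := 1) fun e => ?_,
    fun e => by ring, fun e he => ?_, fun e he => ?_⟩
  · rw [norm_mul, Real.norm_of_nonneg (hQ0 _)]
    gcongr
    exact hQ1 _
  · have : g e - Q (p e) * g e = (1 - Q (p e)) * g e := by ring
    rw [this, norm_mul, Real.norm_of_nonneg (sub_nonneg.2 (hQ1 _))]
    gcongr
    linarith [hQ0 (p e)]
  · have hx : p e ≠ 0 := fun h => he (by simp [hg.eq_zero h])
    by_contra hcon
    push Not at hcon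
    refine he ?_
    have : Q (p e) = 0 := by
      refine Real.smoothTransition.zero_of_nonpos ?_
      rw [sub_nonpos, ← mul_div_assoc, div_le_one (hpos _ hx)]
      linarith
    simp [this]
  · have hx : p e ≠ 0 := fun h => he (by simp [hg.eq_zero h])
    by_contra hcon
    push Not at hcon
    refine he ?_
    have : Q (p e) = 1 := by
      refine Real.smoothTransition.one_of_one_le ?_
      rw [le_sub_iff_add_le, ← mul_div_assoc, le_div_iff₀ (hpos _ hx)]
      linarith
    simp [this]

end Homogeneous

section Decay

theorem le_exp_mul_of_hasDerivAt_le {f f' : ℝ → ℝ} {c T : ℝ} (hT : 0 ≤ T)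
    (hf : ∀ t ∈ Set.Icc 0 T, HasDerivAt f (f' t) t)
    (h : ∀ t ∈ Set.Icc 0 T, f' t ≤ -c * f t) : f T ≤ Real.exp (-(c * T)) * f 0 := by
  have hd : ∀ t ∈ Set.Icc 0 T, HasDerivAt (fun t => Real.exp (c * t) * f t)
      (Real.exp (c * t) * (c * f t + f' t)) t := by
    intro t ht
    have h1 : HasDerivAt (fun t => Real.exp (c * t)) (Real.exp (c * t) * c) t := by
      simpa using ((hasDerivAt_id t).const_mul c).exp
    exact (h1.fun_mul (hf t ht)).congr_deriv (by ring)
  have hanti : AntitoneOn (fun t => Real.exp (c * t) * f t) (Set.Icc 0 T) := by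
    refine antitoneOn_of_hasDerivWithinAt_nonpos (convex_Icc 0 T)
      (fun t ht => (hd t ht).continuousAt.continuousWithinAt)
      (fun t ht => (hd t (interior_subset ht)).hasDerivWithinAt) fun t ht => ?_
    have := h t (interior_subset ht)
    exact mul_nonpos_of_nonneg_of_nonpos (Real.exp_pos _).le (by linarith)
  have h2 := hanti ⟨le_rfl, hT⟩ ⟨hT, le_rfl⟩ hT
  simp only [mul_zero, Real.exp_zero, one_mul] at h2
  calc f T = Real.exp (-(c * T)) * (Real.exp (c * T) * f T) := by
        rw [← mul_assoc, ← Real.exp_add]; simp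
    _ ≤ _ := by gcongr

variable {E X : Type} [NormedAddCommGroup E] [NormedSpace ℝ E]
  [NormedAddCommGroup X] [NormedSpace ℝ X] {p : E →L[ℝ] X} {V : E → E} {φ : E → ℝ → E}

/-- A smooth vector field with bounded derivatives which vanishes on the kernel of `p`. -/
structure IsTameField (p : E →L[ℝ] X) (V : E → E) : Prop where
  smooth : ContDiff ℝ ∞ V
  bounded : ∀ j : ℕ, 1 ≤ j → ∃ C, ∀ x, ‖iteratedFDeriv ℝ j V x‖ ≤ C
  vanish : ∀ e, p e = 0 → V e = 0

namespace IsTameField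

protected theorem neg (h : IsTameField p V) : IsTameField p (fun e => - V e) where
  smooth := h.smooth.neg
  bounded j hj := by
    obtain ⟨C, hC⟩ := h.bounded j hj
    refine ⟨C, fun x => ?_⟩
    have : iteratedFDeriv ℝ j (fun e => - V e) x = - iteratedFDeriv ℝ j V x :=
      iteratedFDeriv_neg_apply
    rw [this, norm_neg]
    exact hC x
  vanish e he := by rw [h.vanish e he, neg_zero]

theorem exists_isSemiflow [CompleteSpace E] (h : IsTameField p V) :
    ∃ φ, IsSemiflow V Set.univ φ := by
  obtain ⟨C, hC⟩ := h.bounded 1 le_rfl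
  have hL : LipschitzWith C.toNNReal V :=
    lipschitzWith_of_nnnorm_fderiv_le (h.smooth.differentiable (by simp)) fun x => by
      rw [← NNReal.coe_le_coe, coe_nnnorm, ← norm_iteratedFDeriv_one]
      exact (hC x).trans (Real.le_coe_toNNReal C)
  choose φ h0 hφ using exists_global_solution (fun _ => V) C.toNNReal ‖V 0‖
    (h.smooth.continuous.comp continuous_snd) (fun _ => hL) (fun _ => le_rfl)
  exact ⟨φ, convex_univ, isOpen_univ, h.smooth,
    fun j hj => (h.bounded j hj).imp fun C hC x _ => hC x, fun x _ => h0 x,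
    fun _ _ _ _ => Set.mem_univ _, fun x _ t _ => hφ x t⟩

end IsTameField

theorem IsFlat.decaysAlong {g : E → ℝ} (hg : IsFlat p g) {S : Set E} (hS : IsClosed S)
    (hgS : ∀ e, g e ≠ 0 → e ∈ S) {C c : ℝ} (hc : 0 < c)
    (h : ∀ e t, 0 ≤ t → φ e t ∈ S → ‖p (φ e t)‖ ^ 2 ≤ C * Real.exp (-(c * t)) * ‖e‖ ^ 2) :
    DecaysAlong Set.univ φ g := by
  intro j N R
  obtain ⟨m, hm⟩ := exists_nat_ge (N / c)
  rw [div_le_iff₀ hc] at hm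
  obtain ⟨B, hB0, hB⟩ := hg.norm_iteratedFDeriv_le j (2 * m)
  refine ⟨B * (|C| * R ^ 2) ^ m, fun e _ he t ht => ?_⟩
  by_cases hmem : φ e t ∈ S
  · refine (hB _).trans ?_
    rw [mul_assoc]
    gcongr
    rw [pow_mul]
    calc (‖p (φ e t)‖ ^ 2) ^ m ≤ ((|C| * R ^ 2) * Real.exp (-(c * t))) ^ m := by
          gcongr
          refine (h e t ht hmem).trans ?_
          calc C * Real.exp (-(c * t)) * ‖e‖ ^ 2 ≤ |C| * Real.exp (-(c * t)) * R ^ 2 := by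
                gcongr
                exact le_abs_self C
            _ = _ := by ring
      _ = (|C| * R ^ 2) ^ m * Real.exp (-(m * c * t)) := by
          rw [mul_pow, ← Real.exp_nat_mul]; ring_nf
      _ ≤ _ := by
          gcongr
  · have hz : iteratedFDeriv ℝ j g (φ e t) = 0 := by
      refine image_eq_zero_of_notMem_tsupport fun hmem' => hmem ?_
      exact closure_minimal (fun e he => hgS e he) hS (tsupport_iteratedFDeriv_subset j hmem')
    rw [hz, norm_zero]
    have : (0 : ℝ) ≤ (|C| * R ^ 2) ^ m := by positivity
    positivity

theorem IsTameField.exists_fderiv_apply_eq_neg [FiniteDimensional ℝ E] (hV : IsTameField p V)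
    {g : E → ℝ} (hg : IsFlat p g) (hd : ∀ φ, IsSemiflow V Set.univ φ → DecaysAlong Set.univ φ g) :
    ∃ f : E → ℝ, ContDiff ℝ ∞ f ∧ (∀ x, fderiv ℝ f x (V x) = - g x) ∧
      ∀ x, p x = 0 → f x = 0 := by
  have : CompleteSpace E := FiniteDimensional.complete ℝ E
  obtain ⟨φ, hφ⟩ := hV.exists_isSemiflow
  obtain ⟨f, hf, h1, h2⟩ := hφ.exists_fderiv_apply_eq_neg hg.smooth (hd φ hφ)
  exact ⟨f, hf, h1, fun x hx => h2 x (hV.vanish x hx) (hg.eq_zero hx)⟩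

theorem IsSemiflow.hasDerivAt_clm (hφ : IsSemiflow V Set.univ φ) (a : E →L[ℝ] ℝ) (e : E) {t : ℝ}
    (ht : 0 ≤ t) : HasDerivAt (fun t => a (φ e t)) (a (V (φ e t))) t :=
  a.hasFDerivAt.comp_hasDerivAt t (hφ.deriv e (Set.mem_univ e) t ht)

section Saddle

variable {a b : X →L[ℝ] ℝ} {μ₁ μ₂ μ K ε : ℝ}

theorem saddle_monotone {u s u' s' M η : ℝ} (hμ : 0 < μ) (h1 : μ₁ ≤ -μ) (h2 : μ ≤ μ₂)
    (hη : 3 * η ≤ μ) (hM : M = max |u| |s|)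
    (hu : |u' - μ₁ * u| ≤ η * M) (hs : |s' - μ₂ * s| ≤ η * M) :
    0 ≤ 2 * s * s' - 2 * (2 * u * u') := by
  have hu1 : |u| ≤ M := hM ▸ le_max_left _ _
  have hs1 : |s| ≤ M := hM ▸ le_max_right _ _
  have hM0 : 0 ≤ M := (abs_nonneg u).trans hu1
  have e1 : |u * (u' - μ₁ * u)| ≤ M * (η * M) := by rw [abs_mul]; gcongr
  have e2 : |s * (s' - μ₂ * s)| ≤ M * (η * M) := by rw [abs_mul]; gcongr
  have hMsq : M ^ 2 ≤ u ^ 2 + s ^ 2 := by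
    rcases max_choice |u| |s| with h | h <;> rw [hM, h, sq_abs] <;> nlinarith
  have := abs_le.1 e1
  have := abs_le.1 e2
  nlinarith [sq_nonneg u, sq_nonneg s, sq_nonneg M]

theorem saddle_contract {u s u' M η : ℝ} (hμ : 0 < μ) (h1 : μ₁ ≤ -μ)
    (hη : 3 * η ≤ μ) (hM : M = max |u| |s|)
    (hu : |u' - μ₁ * u| ≤ η * M) (hsu : s ^ 2 ≤ 2 * u ^ 2) :
    2 * u * u' ≤ -(2 * μ / 3) * u ^ 2 := by
  have hu1 : |u| ≤ M := hM ▸ le_max_left _ _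
  have hM0 : 0 ≤ M := (abs_nonneg u).trans hu1
  have e1 : |u * (u' - μ₁ * u)| ≤ M * (η * M) := by rw [abs_mul]; gcongr
  have hMsq : M ^ 2 ≤ 2 * u ^ 2 := by
    rcases max_choice |u| |s| with h | h <;> rw [hM, h, sq_abs] <;> nlinarith
  have := abs_le.1 e1
  nlinarith [sq_nonneg u, sq_nonneg M]

theorem saddle_decaysAlong {g : E → ℝ} (hg : IsFlat p g) (hφ : IsSemiflow V Set.univ φ)
    (hμ : 0 < μ) (h1 : μ₁ ≤ -μ) (h2 : μ ≤ μ₂)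
    (hK : ∀ x, ‖x‖ ≤ K * max |a x| |b x|) (hε0 : 0 ≤ ε) (hε : 3 * (ε * K) ≤ μ)
    (ha : ∀ e, |a (p (V e)) - μ₁ * a (p e)| ≤ ε * ‖p e‖)
    (hb : ∀ e, |b (p (V e)) - μ₂ * b (p e)| ≤ ε * ‖p e‖)
    (hsupp : ∀ e, g e ≠ 0 → b (p e) ^ 2 ≤ 2 * a (p e) ^ 2) :
    DecaysAlong Set.univ φ g := by
  have hS : IsClosed {e | b (p e) ^ 2 ≤ 2 * a (p e) ^ 2} := isClosed_le (by fun_prop) (by fun_prop)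
  refine hg.decaysAlong hS hsupp (C := 2 * K ^ 2 * (‖a‖ * ‖p‖) ^ 2) (c := 2 * μ / 3)
    (by positivity) fun e T hT hmem => ?_
  have ha' : ∀ e, |a (p (V e)) - μ₁ * a (p e)| ≤ ε * K * max |a (p e)| |b (p e)| := fun e =>
    (ha e).trans (by rw [mul_assoc]; gcongr; exact hK _)
  have hb' : ∀ e, |b (p (V e)) - μ₂ * b (p e)| ≤ ε * K * max |a (p e)| |b (p e)| := fun e =>
    (hb e).trans (by rw [mul_assoc]; gcongr; exact hK _)
  have hdu : ∀ t, 0 ≤ t → HasDerivAt (fun t => a (p (φ e t)) ^ 2)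
      (2 * a (p (φ e t)) * a (p (V (φ e t)))) t := fun t ht => by
    simpa using (hφ.hasDerivAt_clm (a.comp p) e ht).fun_pow 2
  have hds : ∀ t, 0 ≤ t → HasDerivAt (fun t => b (p (φ e t)) ^ 2)
      (2 * b (p (φ e t)) * b (p (V (φ e t)))) t := fun t ht => by
    simpa using (hφ.hasDerivAt_clm (b.comp p) e ht).fun_pow 2
  have hmono : MonotoneOn (fun t => b (p (φ e t)) ^ 2 - 2 * a (p (φ e t)) ^ 2) (Set.Ici 0) := by
    have hd := fun t (ht : 0 ≤ t) => (hds t ht).sub ((hdu t ht).const_mul 2)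
    refine monotoneOn_of_hasDerivWithinAt_nonneg (convex_Ici 0)
      (fun t ht => (hd t ht).continuousAt.continuousWithinAt)
      (fun t ht => (hd t (interior_subset ht)).hasDerivWithinAt) fun t ht => ?_
    exact saddle_monotone hμ h1 h2 hε rfl (ha' _) (hb' _)
  have hcone : ∀ t ∈ Set.Icc 0 T, b (p (φ e t)) ^ 2 ≤ 2 * a (p (φ e t)) ^ 2 := fun t ht => by
    have := hmono ht.1 hT ht.2
    have h3 : b (p (φ e T)) ^ 2 ≤ 2 * a (p (φ e T)) ^ 2 := hmem
    simp only at this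
    linarith
  have hu := le_exp_mul_of_hasDerivAt_le hT (fun t ht => hdu t ht.1) fun t ht =>
    saddle_contract hμ h1 hε rfl (ha' _) (hcone t ht)
  rw [hφ.apply_zero e (Set.mem_univ e)] at hu
  have hMsq : max |a (p (φ e T))| |b (p (φ e T))| ^ 2 ≤ 2 * a (p (φ e T)) ^ 2 := by
    have := hcone T ⟨hT, le_rfl⟩
    rcases max_choice |a (p (φ e T))| |b (p (φ e T))| with h | h <;> rw [h, sq_abs] <;> nlinarith
  have hae : a (p e) ^ 2 ≤ (‖a‖ * ‖p‖ * ‖e‖) ^ 2 := by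
    rw [← sq_abs]
    gcongr
    refine (a.le_opNorm _).trans ?_
    rw [mul_assoc]
    gcongr
    exact p.le_opNorm e
  calc ‖p (φ e T)‖ ^ 2 ≤ (K * max |a (p (φ e T))| |b (p (φ e T))|) ^ 2 := by gcongr; exact hK _
    _ ≤ K ^ 2 * (2 * a (p (φ e T)) ^ 2) := by rw [mul_pow]; gcongr
    _ ≤ K ^ 2 * (2 * (Real.exp (-(2 * μ / 3 * T)) * (‖a‖ * ‖p‖ * ‖e‖) ^ 2)) := by
      gcongr
      exact hu.trans (by gcongr)
    _ = _ := by ring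

theorem IsTameField.exists_solution_saddle [FiniteDimensional ℝ E] [FiniteDimensional ℝ X]
    (hV : IsTameField p V)
    (hμ : 0 < μ) (h1 : μ₁ ≤ -μ) (h2 : μ ≤ μ₂)
    (hK : ∀ x, ‖x‖ ≤ K * max |a x| |b x|) (hε0 : 0 ≤ ε) (hε : 3 * (ε * K) ≤ μ)
    (ha : ∀ e, |a (p (V e)) - μ₁ * a (p e)| ≤ ε * ‖p e‖)
    (hb : ∀ e, |b (p (V e)) - μ₂ * b (p e)| ≤ ε * ‖p e‖)
    {g : E → ℝ} (hg : IsFlat p g) :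
    ∃ f : E → ℝ, ContDiff ℝ ∞ f ∧ (∀ x, fderiv ℝ f x (V x) = - g x) ∧
      ∀ x, p x = 0 → f x = 0 := by
  obtain ⟨g₁, g₂, hg₁, hg₂, hsum, hs₁, hs₂⟩ := hg.exists_add_eq a b fun x hax hbx => by
    have := hK x
    rw [hax, hbx] at this
    simpa using this
  obtain ⟨f₁, hf₁, hd₁, hz₁⟩ := hV.exists_fderiv_apply_eq_neg hg₁ fun φ hφ =>
    saddle_decaysAlong hg₁ hφ hμ h1 h2 hK hε0 hε ha hb hs₁
  obtain ⟨f₂, hf₂, hd₂, hz₂⟩ := hV.neg.exists_fderiv_apply_eq_neg hg₂ fun φ hφ =>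
    saddle_decaysAlong (a := b) (b := a) (μ₁ := -μ₂) (μ₂ := -μ₁) hg₂ hφ hμ (by linarith)
      (by linarith) (fun x => by rw [max_comm]; exact hK x) hε0 hε
      (fun e => by
        rw [map_neg, map_neg, ← abs_neg]
        convert hb e using 2
        ring)
      (fun e => by
        rw [map_neg, map_neg, ← abs_neg]
        convert ha e using 2
        ring) hs₂
  refine ⟨fun x => f₁ x - f₂ x, hf₁.sub hf₂, fun x => ?_, fun x hx => by
    simp only [hz₁ x hx, hz₂ x hx, sub_zero]⟩
  rw [fderiv_fun_sub (hf₁.differentiable (by simp) x) (hf₂.differentiable (by simp) x)]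
  have := hd₂ x
  rw [map_neg] at this
  rw [sub_apply, hd₁, ← hsum]
  linarith

end Saddle

end Decay

section Planar

variable {E : Type} [NormedAddCommGroup E] [NormedSpace ℝ E]
  {p : E →L[ℝ] ℝ × ℝ} {V : E → E} {φ : E → ℝ → E}

theorem node_lyapunov_deriv_le {a b c d x y r s n ε M : ℝ} (hδ : 0 < a * d - b * c)
    (hM : M = 4 * (a * d - b * c) + 2 * (|d| + |b|) ^ 2 + 2 * (|a| + |c|) ^ 2)
    (hε : ε * M ≤ (a * d - b * c) * (-(a + d))) (hε0 : 0 ≤ ε)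
    (hn : n = max |x| |y|) (hr : |r| ≤ ε * n) (hs : |s| ≤ ε * n) :
    2 * (a * d - b * c) * (x * (a * x + b * y + r) + y * (c * x + d * y + s)) +
      2 * (d * x - b * y) * (d * (a * x + b * y + r) - b * (c * x + d * y + s)) +
      2 * (a * y - c * x) * (a * (c * x + d * y + s) - c * (a * x + b * y + r)) ≤
    (a * d - b * c) * (a + d) * (x ^ 2 + y ^ 2) := by
  have hx : |x| ≤ n := hn ▸ le_max_left _ _
  have hy : |y| ≤ n := hn ▸ le_max_right _ _
  have hn0 : 0 ≤ n := (abs_nonneg x).trans hx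
  have hnsq : n ^ 2 ≤ x ^ 2 + y ^ 2 := by
    rcases max_choice |x| |y| with h | h <;> rw [hn, h, sq_abs] <;> nlinarith
  have habs : ∀ α β z w B : ℝ, |z| ≤ B → |w| ≤ B → |α * z - β * w| ≤ (|α| + |β|) * B := by
    intro α β z w B hz hw
    refine (abs_sub _ _).trans ?_
    rw [abs_mul, abs_mul, add_mul]
    gcongr
  have h1 : x * r + y * s ≤ 2 * ε * n ^ 2 := by
    have e1 : x * r ≤ n * (ε * n) := (le_abs_self _).trans (by rw [abs_mul]; gcongr)
    have e2 : y * s ≤ n * (ε * n) := (le_abs_self _).trans (by rw [abs_mul]; gcongr)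
    nlinarith
  have h2 : (d * x - b * y) * (d * r - b * s) ≤ (|d| + |b|) ^ 2 * (ε * n ^ 2) := by
    refine (le_abs_self _).trans ?_
    rw [abs_mul]
    calc _ ≤ ((|d| + |b|) * n) * ((|d| + |b|) * (ε * n)) := by
          gcongr
          · exact habs _ _ _ _ _ hx hy
          · exact habs _ _ _ _ _ hr hs
      _ = _ := by ring
  have h3 : (a * y - c * x) * (a * s - c * r) ≤ (|a| + |c|) ^ 2 * (ε * n ^ 2) := by
    refine (le_abs_self _).trans ?_
    rw [abs_mul]
    calc _ ≤ ((|a| + |c|) * n) * ((|a| + |c|) * (ε * n)) := by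
          gcongr
          · exact habs _ _ _ _ _ hy hx
          · exact habs _ _ _ _ _ hs hr
      _ = _ := by ring
  have h4 : ε * M * n ^ 2 ≤ (a * d - b * c) * (-(a + d)) * (x ^ 2 + y ^ 2) := by
    have hM0 : 0 ≤ M := by rw [hM]; positivity
    calc ε * M * n ^ 2 ≤ ε * M * (x ^ 2 + y ^ 2) := by gcongr
      _ ≤ _ := by gcongr
  have h5 : 2 * (a * d - b * c) * (x * r + y * s) ≤ 2 * (a * d - b * c) * (2 * ε * n ^ 2) := by
    gcongr
  have h6 : ε * M * n ^ 2 = 2 * (a * d - b * c) * (2 * ε * n ^ 2) +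
      2 * ((|d| + |b|) ^ 2 * (ε * n ^ 2)) + 2 * ((|a| + |c|) ^ 2 * (ε * n ^ 2)) := by
    rw [hM]; ring
  linarith

theorem node_decaysAlong {a b c d : ℝ} (hδ : 0 < a * d - b * c) (hτ : a + d < 0) {M ε : ℝ}
    (hM : M = 4 * (a * d - b * c) + 2 * (|d| + |b|) ^ 2 + 2 * (|a| + |c|) ^ 2)
    (hε : ε * M ≤ (a * d - b * c) * (-(a + d))) (hε0 : 0 ≤ ε)
    {g : E → ℝ} (hg : IsFlat p g) (hφ : IsSemiflow V Set.univ φ)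
    (h1 : ∀ e, |(p (V e)).1 - (a * (p e).1 + b * (p e).2)| ≤ ε * ‖p e‖)
    (h2 : ∀ e, |(p (V e)).2 - (c * (p e).1 + d * (p e).2)| ≤ ε * ‖p e‖) :
    DecaysAlong Set.univ φ g := by
  set δ := a * d - b * c with hδdef
  have hM0 : 0 < M := by rw [hM]; positivity
  set q : E → ℝ := fun e => δ * ((p e).1 ^ 2 + (p e).2 ^ 2) + (d * (p e).1 - b * (p e).2) ^ 2 +
    (a * (p e).2 - c * (p e).1) ^ 2 with hq
  set σ := fun e => (p e).1 ^ 2 + (p e).2 ^ 2 with hσ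
  have hσ0 : ∀ e, 0 ≤ σ e := fun e => by positivity
  have hqσ : ∀ e, q e ≤ M * σ e := by
    intro e
    have h3 : ∀ α β z w : ℝ, (α * z - β * w) ^ 2 ≤ 2 * (|α| + |β|) ^ 2 * (z ^ 2 + w ^ 2) := by
      intro α β z w
      have e1 : α ^ 2 ≤ (|α| + |β|) ^ 2 := by
        rw [← sq_abs α]; gcongr; linarith [abs_nonneg β]
      have e2 : β ^ 2 ≤ (|α| + |β|) ^ 2 := by
        rw [← sq_abs β]; gcongr; linarith [abs_nonneg α]
      calc (α * z - β * w) ^ 2 ≤ 2 * (α ^ 2 * z ^ 2 + β ^ 2 * w ^ 2) := by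
            nlinarith [sq_nonneg (α * z + β * w)]
        _ ≤ 2 * ((|α| + |β|) ^ 2 * z ^ 2 + (|α| + |β|) ^ 2 * w ^ 2) := by gcongr
        _ = _ := by ring
    have e1 := h3 d b (p e).1 (p e).2
    have e2 := h3 a c (p e).2 (p e).1
    have e3 := mul_nonneg hδ.le (hσ0 e)
    rw [hM]
    simp only [hq, hσ] at *
    nlinarith
  have hder : ∀ e t, 0 ≤ t → HasDerivAt (fun t => q (φ e t))
      (2 * δ * ((p (φ e t)).1 * (p (V (φ e t))).1 + (p (φ e t)).2 * (p (V (φ e t))).2) +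
      2 * (d * (p (φ e t)).1 - b * (p (φ e t)).2) *
        (d * (p (V (φ e t))).1 - b * (p (V (φ e t))).2) +
      2 * (a * (p (φ e t)).2 - c * (p (φ e t)).1) *
        (a * (p (V (φ e t))).2 - c * (p (V (φ e t))).1)) t := by
    intro e t ht
    have hx := hφ.hasDerivAt_clm ((ContinuousLinearMap.fst ℝ ℝ ℝ).comp p) e ht
    have hy := hφ.hasDerivAt_clm ((ContinuousLinearMap.snd ℝ ℝ ℝ).comp p) e ht
    refine (((((hx.fun_pow 2).fun_add (hy.fun_pow 2)).const_mul δ).fun_add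
      (((hx.const_mul d).fun_sub (hy.const_mul b)).fun_pow 2)).fun_add
      (((hy.const_mul a).fun_sub (hx.const_mul c)).fun_pow 2)).congr_deriv ?_
    simp
    ring
  set κ := δ * (-(a + d)) / M with hκ
  have hκ0 : 0 < κ := div_pos (mul_pos hδ (by linarith)) hM0
  refine hg.decaysAlong isClosed_univ (fun e _ => Set.mem_univ e) (c := κ)
    (C := M / δ * (2 * ‖p‖ ^ 2)) hκ0 fun e T hT _ => ?_
  have hle := le_exp_mul_of_hasDerivAt_le (c := κ) hT (fun t ht => hder e t ht.1) fun t ht => by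
    have e1 := node_lyapunov_deriv_le (x := (p (φ e t)).1) (y := (p (φ e t)).2)
      (r := (p (V (φ e t))).1 - (a * (p (φ e t)).1 + b * (p (φ e t)).2))
      (s := (p (V (φ e t))).2 - (c * (p (φ e t)).1 + d * (p (φ e t)).2))
      hδ hM hε hε0 rfl (h1 _) (h2 _)
    simp only [add_sub_cancel] at e1
    refine e1.trans ?_
    have e2 := mul_le_mul_of_nonneg_left (hqσ (φ e t)) hκ0.le
    have e3 : κ * (M * σ (φ e t)) = δ * (-(a + d)) * σ (φ e t) := by
      rw [hκ]; field_simp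
    rw [e3] at e2
    simp only [hσ] at e2
    linarith
  rw [hφ.apply_zero e (Set.mem_univ e)] at hle
  have hnσ : ∀ e, ‖p e‖ ^ 2 ≤ σ e := by
    intro e
    rw [Prod.norm_def]
    rcases max_choice ‖(p e).1‖ ‖(p e).2‖ with h | h <;> rw [h, Real.norm_eq_abs, sq_abs]
    · exact le_add_of_nonneg_right (sq_nonneg _)
    · exact le_add_of_nonneg_left (sq_nonneg _)
  have hσn : ∀ e, σ e ≤ 2 * ‖p e‖ ^ 2 := by
    intro e
    have e1 : (p e).1 ^ 2 ≤ ‖p e‖ ^ 2 := by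
      rw [← sq_abs]; gcongr; exact norm_fst_le (p e)
    have e2 : (p e).2 ^ 2 ≤ ‖p e‖ ^ 2 := by
      rw [← sq_abs]; gcongr; exact norm_snd_le (p e)
    simp only [hσ]
    linarith
  have hlow : δ * σ (φ e T) ≤ q (φ e T) := by
    simp only [hq, hσ]
    linarith [sq_nonneg (d * (p (φ e T)).1 - b * (p (φ e T)).2),
      sq_nonneg (a * (p (φ e T)).2 - c * (p (φ e T)).1)]
  have hpe : ‖p e‖ ^ 2 ≤ ‖p‖ ^ 2 * ‖e‖ ^ 2 := by
    rw [← mul_pow]; gcongr; exact p.le_opNorm e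
  refine (hnσ _).trans ?_
  have hfin : δ * σ (φ e T) ≤ Real.exp (-(κ * T)) * (M * (2 * (‖p‖ ^ 2 * ‖e‖ ^ 2))) := by
    refine hlow.trans (hle.trans ?_)
    gcongr
    refine (hqσ e).trans ?_
    gcongr
    refine (hσn e).trans ?_
    gcongr
  rw [mul_comm, ← le_div_iff₀ hδ] at hfin
  refine hfin.trans (le_of_eq ?_)
  field_simp

theorem exists_left_eigenvector {a b c d μ : ℝ} (hμ : μ ^ 2 - (a + d) * μ + (a * d - b * c) = 0)
    (hδ : a * d - b * c < 0) :
    ∃ l m : ℝ, (l ≠ 0 ∨ m ≠ 0) ∧ l * a + m * c = μ * l ∧ l * b + m * d = μ * m := by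
  by_cases h1 : c ≠ 0 ∨ μ - a ≠ 0
  · exact ⟨c, μ - a, h1, by ring, by linarith⟩
  · push Not at h1
    refine ⟨μ - d, b, ?_, by linarith, by ring⟩
    by_contra h2
    push Not at h2
    have e1 : a = μ := by linarith
    have e2 : d = μ := by linarith
    rw [e1, e2, h1.1] at hδ
    nlinarith [sq_nonneg μ]

theorem det_left_eigenvectors_ne_zero {a b c d μ ν l m l' m' : ℝ} (hne : μ ≠ ν)
    (h : l ≠ 0 ∨ m ≠ 0) (h' : l' ≠ 0 ∨ m' ≠ 0)
    (e1 : l * a + m * c = μ * l) (e2 : l * b + m * d = μ * m)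
    (e1' : l' * a + m' * c = ν * l') (e2' : l' * b + m' * d = ν * m') :
    l * m' - m * l' ≠ 0 := by
  intro h0
  have hs : μ - ν ≠ 0 := sub_ne_zero.2 hne
  have k1 : l * l' = 0 := by
    have : (μ - ν) * (l * l') = 0 := by linear_combination (-l') * e1 + l * e1' + (-c) * h0
    exact (mul_eq_zero.1 this).resolve_left hs
  have k2 : m * m' = 0 := by
    have : (μ - ν) * (m * m') = 0 := by linear_combination (-m') * e2 + m * e2' + b * h0
    exact (mul_eq_zero.1 this).resolve_left hs
  have k3 : l * m' = 0 := by
    have : (μ - ν) * (l * m') = 0 := by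
      linear_combination (-m') * e1 + m * e1' + (a - ν) * h0
    exact (mul_eq_zero.1 this).resolve_left hs
  have k4 : m * l' = 0 := by linarith
  rcases h with h | h <;> rcases h' with h' | h'
  · exact mul_ne_zero h h' k1
  · exact mul_ne_zero h h' k3
  · exact mul_ne_zero h h' k4
  · exact mul_ne_zero h h' k2

end Planar

section PlanarSolver

/-- For vector fields transversally close to a hyperbolic planar linear field, the
cohomological equation with flat right-hand side is solvable. -/
def HasFlatSolutions (a b c d ε : ℝ) : Prop :=
  ∀ (E : Type) [NormedAddCommGroup E] [NormedSpace ℝ E] [FiniteDimensional ℝ E]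
    (p : E →L[ℝ] ℝ × ℝ) (V : E → E), IsTameField p V →
    (∀ e, |(p (V e)).1 - (a * (p e).1 + b * (p e).2)| ≤ ε * ‖p e‖) →
    (∀ e, |(p (V e)).2 - (c * (p e).1 + d * (p e).2)| ≤ ε * ‖p e‖) →
    ∀ g : E → ℝ, IsFlat p g →
    ∃ f : E → ℝ, ContDiff ℝ ∞ f ∧ (∀ x, fderiv ℝ f x (V x) = - g x) ∧
      ∀ x, p x = 0 → f x = 0

theorem HasFlatSolutions.neg {a b c d ε : ℝ} (h : HasFlatSolutions (-a) (-b) (-c) (-d) ε) :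
    HasFlatSolutions a b c d ε := by
  intro E _ _ _ p V hV h1 h2 g hg
  obtain ⟨f, hf, hd, hz⟩ := h E p (fun e => - V e) hV.neg
    (fun e => by
      rw [map_neg, Prod.fst_neg, ← abs_neg]
      convert h1 e using 2
      ring)
    (fun e => by
      rw [map_neg, Prod.snd_neg, ← abs_neg]
      convert h2 e using 2
      ring) g hg
  refine ⟨fun e => - f e, hf.neg, fun x => ?_, fun x hx => by simp [hz x hx]⟩
  have := hd x
  rw [map_neg] at this
  rw [fderiv_fun_neg, neg_apply, this]

theorem exists_hasFlatSolutions_node {a b c d : ℝ} (hδ : 0 < a * d - b * c) (hτ : a + d < 0) :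
    ∃ ε > 0, HasFlatSolutions a b c d ε := by
  set M := 4 * (a * d - b * c) + 2 * (|d| + |b|) ^ 2 + 2 * (|a| + |c|) ^ 2 with hM
  have hM0 : 0 < M := by positivity
  have hpos : 0 < (a * d - b * c) * (-(a + d)) := mul_pos hδ (by linarith)
  refine ⟨(a * d - b * c) * (-(a + d)) / M, by positivity, ?_⟩
  intro E _ _ _ p V hV h1 h2 g hg
  exact hV.exists_fderiv_apply_eq_neg hg fun φ hφ =>
    node_decaysAlong hδ hτ hM (by rw [div_mul_cancel₀ _ hM0.ne']) (by positivity) hg hφ h1 h2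

theorem exists_hasFlatSolutions_saddle {a b c d : ℝ} (hδ : a * d - b * c < 0) :
    ∃ ε > 0, HasFlatSolutions a b c d ε := by
  set δ := a * d - b * c with hδdef
  set s := √((a + d) ^ 2 - 4 * δ) with hs
  have hs2 : s ^ 2 = (a + d) ^ 2 - 4 * δ := Real.sq_sqrt (by nlinarith [sq_nonneg (a + d)])
  have hs0 : 0 ≤ s := Real.sqrt_nonneg _
  have hlt : |a + d| < s := by
    refine abs_lt_of_sq_lt_sq (by linarith) hs0
  obtain ⟨hlt1, hlt2⟩ := abs_lt.1 hlt
  set μ₁ := (a + d - s) / 2 with hμ₁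
  set μ₂ := (a + d + s) / 2 with hμ₂
  have hμ₁neg : μ₁ < 0 := by rw [hμ₁]; linarith
  have hμ₂pos : 0 < μ₂ := by rw [hμ₂]; linarith
  obtain ⟨l, m, hlm, e1, e2⟩ := exists_left_eigenvector (a := a) (b := b) (c := c) (d := d)
    (μ := μ₁) (by rw [hμ₁]; linear_combination hs2 / 4) hδ
  obtain ⟨l', m', hlm', e1', e2'⟩ := exists_left_eigenvector (a := a) (b := b) (c := c) (d := d)
    (μ := μ₂) (by rw [hμ₂]; linear_combination hs2 / 4) hδ
  have hdet : l * m' - m * l' ≠ 0 :=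
    det_left_eigenvectors_ne_zero (by linarith : μ₁ ≠ μ₂) hlm hlm' e1 e2 e1' e2'
  set Δ := l * m' - m * l' with hΔ
  let A : ℝ × ℝ →L[ℝ] ℝ := l • ContinuousLinearMap.fst ℝ ℝ ℝ + m • ContinuousLinearMap.snd ℝ ℝ ℝ
  let B : ℝ × ℝ →L[ℝ] ℝ := l' • ContinuousLinearMap.fst ℝ ℝ ℝ + m' • ContinuousLinearMap.snd ℝ ℝ ℝ
  have hA : ∀ x, A x = l * x.1 + m * x.2 := fun x => by simp [A]
  have hB : ∀ x, B x = l' * x.1 + m' * x.2 := fun x => by simp [B]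
  set L := |l| + |m| + |l'| + |m'| with hL
  have hL0 : 0 < L := by
    have : 0 < |l| + |m| := by
      rcases hlm with h | h
      · have := abs_pos.2 h; positivity
      · have := abs_pos.2 h; positivity
    positivity
  set K := L / |Δ| with hK
  have hK0 : 0 < K := div_pos hL0 (abs_pos.2 hdet)
  have hbound : ∀ x, ‖x‖ ≤ K * max |A x| |B x| := by
    intro x
    have hgen : ∀ α β z w, |α| + |β| ≤ L → |α * z - β * w| ≤ L * max |z| |w| := by
      intro α β z w hαβ
      refine (abs_sub _ _).trans ?_
      rw [abs_mul, abs_mul]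
      calc |α| * |z| + |β| * |w| ≤ |α| * max |z| |w| + |β| * max |z| |w| := by
            gcongr
            · exact le_max_left _ _
            · exact le_max_right _ _
        _ = (|α| + |β|) * max |z| |w| := by ring
        _ ≤ _ := by gcongr
    have k1 : Δ * x.1 = m' * A x - m * B x := by rw [hA, hB, hΔ]; ring
    have k2 : Δ * x.2 = -l' * A x - -l * B x := by rw [hA, hB, hΔ]; ring
    have j1 := hgen m' m (A x) (B x) (by rw [hL]; linarith [abs_nonneg l, abs_nonneg l'])
    have j2 := hgen (-l') (-l) (A x) (B x)
      (by rw [hL, abs_neg, abs_neg]; linarith [abs_nonneg m, abs_nonneg m'])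
    rw [← k1, abs_mul] at j1
    rw [← k2, abs_mul] at j2
    rw [hK, div_mul_eq_mul_div, le_div_iff₀ (abs_pos.2 hdet), mul_comm, Prod.norm_def,
      Real.norm_eq_abs, Real.norm_eq_abs]
    rcases max_choice |x.1| |x.2| with h | h <;> rw [h] <;> assumption
  set μ := min (-μ₁) μ₂ with hμ
  have hμ0 : 0 < μ := lt_min (by linarith) hμ₂pos
  refine ⟨μ / (3 * L * K), by positivity, ?_⟩
  intro E _ _ _ p V hV h1 h2 g hg
  have hcomb : ∀ α β ν e, |α| + |β| ≤ L → α * a + β * c = ν * α → α * b + β * d = ν * β →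
      |α * (p (V e)).1 + β * (p (V e)).2 - ν * (α * (p e).1 + β * (p e).2)| ≤
        L * (μ / (3 * L * K)) * ‖p e‖ := by
    intro α β ν e hαβ k1 k2
    have : α * (p (V e)).1 + β * (p (V e)).2 - ν * (α * (p e).1 + β * (p e).2) =
        α * ((p (V e)).1 - (a * (p e).1 + b * (p e).2)) +
        β * ((p (V e)).2 - (c * (p e).1 + d * (p e).2)) := by
      linear_combination (p e).1 * k1 + (p e).2 * k2
    rw [this]
    refine (abs_add_le _ _).trans ?_
    rw [abs_mul, abs_mul]
    calc _ ≤ |α| * (μ / (3 * L * K) * ‖p e‖) + |β| * (μ / (3 * L * K) * ‖p e‖) := by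
          gcongr
          · exact h1 e
          · exact h2 e
      _ = (|α| + |β|) * (μ / (3 * L * K) * ‖p e‖) := by ring
      _ ≤ L * (μ / (3 * L * K) * ‖p e‖) := by gcongr
      _ = _ := by ring
  refine hV.exists_solution_saddle (a := A) (b := B) (μ₁ := μ₁) (μ₂ := μ₂) (μ := μ) (K := K)
    (ε := L * (μ / (3 * L * K))) hμ0 (by linarith [min_le_left (-μ₁) μ₂]) (min_le_right _ _)
    hbound (by positivity) (le_of_eq (by field_simp)) (fun e => ?_) (fun e => ?_) hg
  · rw [hA, hA]
    exact hcomb l m μ₁ e (by rw [hL]; linarith [abs_nonneg l', abs_nonneg m']) e1 e2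
  · rw [hB, hB]
    exact hcomb l' m' μ₂ e (by rw [hL]; linarith [abs_nonneg l, abs_nonneg m]) e1' e2'

theorem exists_hasFlatSolutions {a b c d : ℝ}
    (h : a * d - b * c < 0 ∨ 0 < a * d - b * c ∧ a + d ≠ 0) :
    ∃ ε > 0, HasFlatSolutions a b c d ε := by
  rcases h with h | ⟨h, hτ⟩
  · exact exists_hasFlatSolutions_saddle h
  · rcases lt_or_gt_of_ne hτ with hτ | hτ
    · exact exists_hasFlatSolutions_node h hτ
    · obtain ⟨ε, hε, hs⟩ := exists_hasFlatSolutions_node (a := -a) (b := -b) (c := -c) (d := -d)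
        (by linarith) (by linarith)
      exact ⟨ε, hε, hs.neg⟩

end PlanarSolver

section Derivation

/-- A sum of commuting operators, each annihilated by `(X - a) * (X - b)` on `f`, shifted by `s`,
is injective at `f` as soon as no number `s + m * a + n * b` with `m + n` the number of operators
vanishes. -/
theorem eq_zero_of_sum_commuting_eq_zero {M ι : Type*} [AddCommGroup M] [Module ℂ M]
    [DecidableEq ι] (D : ι → Module.End ℂ M) (hD : ∀ i k, Commute (D i) (D k)) (a b : ℂ)
    (F : Finset ι) : ∀ (s : ℂ), (∀ m n : ℕ, m + n = F.card → s + (m * a + n * b) ≠ 0) →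
      ∀ f : M, (∀ i ∈ F, (D i - algebraMap ℂ _ a) ((D i - algebraMap ℂ _ b) f) = 0) →
        s • f + ∑ i ∈ F, D i f = 0 → f = 0 := by
  induction F using Finset.induction_on with
  | empty =>
    intro s hs f _ h
    have := hs 0 0 (by simp)
    simp only [Finset.sum_empty, add_zero, smul_eq_zero] at h
    rcases h with h | h
    · simp [h] at this
    · exact h
  | insert i F hi ih =>
    intro s hs f hf h
    rw [Finset.sum_insert hi] at h
    rw [Finset.card_insert_of_notMem hi] at hs
    set g := (D i - algebraMap ℂ _ b) f with hg
    have hcomm : ∀ k (c : ℂ) (u : M), (D k - algebraMap ℂ _ c) ((D i - algebraMap ℂ _ b) u)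
        = (D i - algebraMap ℂ _ b) ((D k - algebraMap ℂ _ c) u) := by
      intro k c u
      have h1 : Commute (D k - algebraMap ℂ (Module.End ℂ M) c) (D i - algebraMap ℂ _ b) :=
        ((hD k i).sub_right (Algebra.commutes _ _).symm).sub_left
          (Commute.sub_right (Algebra.commutes c (D i)) (Algebra.commutes c _))
      exact LinearMap.congr_fun h1.eq u
    have hg0 : g = 0 := by
      refine ih (s + a) (fun m n hmn => ?_) g (fun k hk => ?_) ?_
      · have := hs (m + 1) n (by omega)
        push_cast at this
        convert this using 1
        ring
      · rw [hg, hcomm, hcomm, hf k (Finset.mem_insert_of_mem hk), map_zero]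
      · have h1 : D i g = a • g := by
          have := hf i (Finset.mem_insert_self i F)
          rw [← hg, LinearMap.sub_apply, Module.algebraMap_end_apply, sub_eq_zero] at this
          exact this
        have h2 : ∀ k, D k g = (D i - algebraMap ℂ _ b) (D k f) := fun k => by
          have := hcomm k 0 f
          simpa [hg] using this
        have h3 := congrArg (fun u => (D i - algebraMap ℂ (Module.End ℂ M) b) u) h
        beta_reduce at h3
        rw [map_add, map_add, map_smul, map_sum, map_zero, ← hg, ← h2 i, h1] at h3
        simp only [← h2] at h3
        rw [add_smul, add_assoc]
        exact h3
    refine ih (s + b) (fun m n hmn => ?_) f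
      (fun k hk => hf k (Finset.mem_insert_of_mem hk)) ?_
    · have := hs m (n + 1) (by omega)
      push_cast at this
      convert this using 1
      ring
    · have h1 : D i f = b • f := by
        rw [hg, LinearMap.sub_apply, Module.algebraMap_end_apply, sub_eq_zero] at hg0
        exact hg0
      rw [h1] at h
      rw [add_smul, add_assoc]
      exact h

variable {X : Type*} [NormedAddCommGroup X] [NormedSpace ℝ X]

/-- The derivation on `N`-linear forms on `X` induced by an endomorphism of `X`. -/
noncomputable def multilinearDerivation (N : ℕ) (A : X →L[ℝ] X) :
    (X [×N]→L[ℝ] ℝ) →L[ℝ] (X [×N]→L[ℝ] ℝ) :=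
  ∑ i, ContinuousMultilinearMap.compContinuousLinearMapContinuousMultilinear ℝ
    (fun _ : Fin N => X) (fun _ => X) ℝ
    (Function.update (fun _ => ContinuousLinearMap.id ℝ X) i A)

theorem multilinearDerivation_apply {N : ℕ} (A : X →L[ℝ] X) (T : X [×N]→L[ℝ] ℝ)
    (x : Fin N → X) :
    multilinearDerivation N A T x = ∑ i, T (Function.update x i (A (x i))) := by
  simp only [multilinearDerivation, sum_apply]
  refine Finset.sum_congr rfl fun i _ => ?_
  change T (fun k => _) = _
  congr 1
  ext k
  rcases eq_or_ne k i with rfl | h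
  · simp
  · simp [h]

theorem contDiff_multilinearDerivation (N : ℕ) :
    ContDiff ℝ ∞ (multilinearDerivation N : (X →L[ℝ] X) → _) := by
  unfold multilinearDerivation
  exact ContDiff.sum fun i _ => (ContinuousMultilinearMap.contDiff _).comp (contDiff_update _ _ _)

theorem isUnit_multilinearDerivation [FiniteDimensional ℝ X] {N : ℕ} {A : X →L[ℝ] X} {a b : ℂ}
    {τ δ : ℝ} (hA : ∀ x, A (A x) = τ • A x - δ • x) (hτ : a + b = τ) (hδ : a * b = δ)
    (h : ∀ m n : ℕ, m + n = N → (m : ℂ) * a + n * b ≠ 0) :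
    IsUnit (multilinearDerivation N A) := by
  have : FiniteDimensional ℝ (X [×N]→L[ℝ] ℝ) :=
    FiniteDimensional.of_injective (ContinuousMultilinearMap.toMultilinearMapLinear :
      (X [×N]→L[ℝ] ℝ) →ₗ[ℝ] MultilinearMap ℝ (fun _ : Fin N => X) ℝ)
      ContinuousMultilinearMap.toMultilinearMap_injective
  have hinj : Function.Injective (multilinearDerivation N A) := by
    rw [injective_iff_map_eq_zero]
    intro T hT
    set D : Fin N → Module.End ℂ ((Fin N → X) → ℂ) := fun i =>
      LinearMap.funLeft ℂ ℂ (fun x => Function.update x i (A (x i))) with hDdef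
    have hD : ∀ i (f : (Fin N → X) → ℂ) x, D i f x = f (Function.update x i (A (x i))) :=
      fun i f x => rfl
    have hf : (fun x => (T x : ℂ)) = (0 : (Fin N → X) → ℂ) := by
      refine eq_zero_of_sum_commuting_eq_zero D (fun i k => ?_) a b Finset.univ 0
        (by simpa using h) _ (fun i _ => ?_) ?_
      · refine LinearMap.ext fun f => funext fun x => ?_
        rw [Module.End.mul_apply, Module.End.mul_apply, hD, hD, hD, hD]
        rcases eq_or_ne i k with rfl | hik
        · rfl
        · rw [Function.update_of_ne hik, Function.update_of_ne hik.symm,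
            Function.update_comm hik]
      · funext x
        simp only [LinearMap.sub_apply, Pi.sub_apply, hD, Module.algebraMap_end_apply,
          Pi.smul_apply, map_sub, map_smul, smul_eq_mul, Pi.zero_apply, Function.update_self,
          Function.update_idem, hA]
        rw [ContinuousMultilinearMap.map_update_sub, ContinuousMultilinearMap.map_update_smul,
          ContinuousMultilinearMap.map_update_smul, Function.update_eq_self]
        push_cast
        rw [smul_eq_mul, smul_eq_mul]
        push_cast
        rw [← hτ, ← hδ]
        ring
      · funext x
        have := congrArg (fun S : X [×N]→L[ℝ] ℝ => ((S x : ℝ) : ℂ)) hT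
        simp only [multilinearDerivation_apply] at this
        simpa [hD, Finset.sum_apply] using this
    ext x
    simpa using congrFun hf x
  obtain ⟨e, he⟩ : ∃ e : (X [×N]→L[ℝ] ℝ) ≃L[ℝ] (X [×N]→L[ℝ] ℝ),
      (e : (X [×N]→L[ℝ] ℝ) →L[ℝ] _) = multilinearDerivation N A := by
    refine ⟨(LinearEquiv.ofInjectiveEndo _ hinj).toContinuousLinearEquiv, ?_⟩
    ext T x
    rfl
  rw [← he]
  exact ⟨ContinuousLinearEquiv.toUnit e, rfl⟩

end Derivation

section Taylor

theorem abs_sub_taylor_sum_le {φ : ℝ → ℝ} (hφ : ContDiff ℝ ∞ φ) {n : ℕ} {B t : ℝ}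
    (hB : ∀ t ∈ Set.Icc (0 : ℝ) 1, |iteratedDeriv (n + 1) φ t| ≤ B) (ht : t ∈ Set.Icc (0 : ℝ) 1) :
    |φ t - ∑ k ∈ Finset.range (n + 1), iteratedDeriv k φ 0 * t ^ k / (k.factorial : ℝ)|
      ≤ B * t ^ (n + 1) := by
  have hu := uniqueDiffOn_Icc (zero_lt_one' ℝ)
  have hk : ∀ k, ∀ s ∈ Set.Icc (0 : ℝ) 1,
      iteratedDerivWithin k φ (Set.Icc 0 1) s = iteratedDeriv k φ s := fun k s hs =>
    iteratedDerivWithin_eq_iteratedDeriv hu (hφ.contDiffAt.of_le (by exact_mod_cast le_top)) hs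
  have h := taylor_mean_remainder_bound (f := φ) (n := n) zero_le_one
    (hφ.contDiffOn.of_le (by exact_mod_cast le_top)) ht
    (fun y hy => by rw [hk _ y hy]; exact hB y hy)
  rw [taylor_within_apply, Real.norm_eq_abs, sub_zero] at h
  have hB0 : 0 ≤ B := (abs_nonneg _).trans (hB 0 (by simp))
  refine le_trans (le_of_eq ?_) (h.trans (div_le_self
    (mul_nonneg hB0 (pow_nonneg ht.1 _)) (by exact_mod_cast n.factorial_pos)))
  congr 2
  refine Finset.sum_congr rfl fun k _ => ?_
  rw [hk k 0 (by simp), smul_eq_mul]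
  ring

/-- A smooth function of size `t ^ N` agrees with its Taylor monomial of degree `N` up to the next
order. -/
theorem abs_sub_iteratedDeriv_le {φ : ℝ → ℝ} (hφ : ContDiff ℝ ∞ φ) {N : ℕ} {C B : ℝ}
    (hC : ∀ t ∈ Set.Icc (0 : ℝ) 1, |φ t| ≤ C * t ^ N)
    (hB : ∀ t ∈ Set.Icc (0 : ℝ) 1, |iteratedDeriv (N + 1) φ t| ≤ B) :
    |φ 1 - iteratedDeriv N φ 0 / (N.factorial : ℝ)| ≤ B := by
  have hbd : ∀ n, ∃ B, ∀ t ∈ Set.Icc (0 : ℝ) 1, |iteratedDeriv n φ t| ≤ B := fun n =>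
    isCompact_Icc.exists_bound_of_continuousOn
      (hφ.continuous_iteratedDeriv n (by exact_mod_cast le_top)).continuousOn
  have hC0 : 0 ≤ C := by simpa using (abs_nonneg _).trans (hC 1 (by simp))
  have hvan : ∀ k, k < N → iteratedDeriv k φ 0 = 0 := by
    intro k
    induction k using Nat.strong_induction_on with
    | _ k ih =>
      intro hk
      obtain ⟨B', hB'⟩ := hbd (k + 1)
      set c := iteratedDeriv k φ 0 / (k.factorial : ℝ) with hc
      have hle : ∀ t ∈ Set.Ioc (0 : ℝ) 1, |c| ≤ (B' + C) * t := by
        intro t ht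
        have ht' : t ∈ Set.Icc (0 : ℝ) 1 := ⟨ht.1.le, ht.2⟩
        have h1 := abs_sub_taylor_sum_le hφ hB' ht'
        rw [Finset.sum_range_succ, Finset.sum_eq_zero fun i hi => by
          rw [ih i (Finset.mem_range.1 hi) ((Finset.mem_range.1 hi).trans hk)]; simp,
          zero_add] at h1
        have h2 : |φ t| ≤ C * t ^ (k + 1) := (hC t ht').trans
          (mul_le_mul_of_nonneg_left (pow_le_pow_of_le_one ht.1.le ht.2 hk) hC0)
        have h3 : |c * t ^ k| ≤ (B' + C) * t * t ^ k := by
          have : c * t ^ k = φ t - (φ t - iteratedDeriv k φ 0 * t ^ k / (k.factorial : ℝ)) := by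
            rw [hc]; ring
          rw [this]
          refine (abs_sub _ _).trans ((add_le_add h2 h1).trans (le_of_eq (by ring)))
        rw [abs_mul, abs_of_pos (pow_pos ht.1 k)] at h3
        exact le_of_mul_le_mul_right h3 (pow_pos ht.1 k)
      have hlim : Tendsto (fun t : ℝ => (B' + C) * t) (𝓝[>] 0) (𝓝 0) := by
        have : Tendsto (fun t : ℝ => (B' + C) * t) (𝓝 0) (𝓝 ((B' + C) * 0)) :=
          (continuous_const.mul continuous_id).tendsto 0
        rw [mul_zero] at this
        exact this.mono_left nhdsWithin_le_nhds
      have h0 : |c| ≤ 0 := ge_of_tendsto hlim (by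
        filter_upwards [Ioc_mem_nhdsGT (zero_lt_one' ℝ)] with t ht using hle t ht)
      have hc0 : c = 0 := abs_nonpos_iff.1 h0
      rw [hc, div_eq_zero_iff] at hc0
      exact hc0.resolve_right (by exact_mod_cast k.factorial_ne_zero)
  have h1 := abs_sub_taylor_sum_le hφ hB (t := 1) (by simp)
  rw [Finset.sum_range_succ, Finset.sum_eq_zero fun i hi => by
    rw [hvan i (Finset.mem_range.1 hi)]; simp, zero_add] at h1
  simpa using h1

variable {E : Type*} [NormedAddCommGroup E] [NormedSpace ℝ E]

theorem iteratedDeriv_comp_line {g : E → ℝ} (hg : ContDiff ℝ ∞ g) (a b : E) (n : ℕ) (t : ℝ) :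
    iteratedDeriv n (fun t : ℝ => g (a + t • b)) t
      = iteratedFDeriv ℝ n g (a + t • b) fun _ => b := by
  have h1 : ContDiff ℝ ∞ fun x => g (a + x) := hg.comp (contDiff_const.add contDiff_id)
  have h2 := ContinuousLinearMap.iteratedFDeriv_comp_right
    (ContinuousLinearMap.toSpanSingleton ℝ b) h1 t (i := n) (by exact_mod_cast le_top)
  rw [iteratedDeriv_eq_iteratedFDeriv]
  have h3 : (fun t : ℝ => g (a + t • b)) =
    (fun x => g (a + x)) ∘ (ContinuousLinearMap.toSpanSingleton ℝ b) := by
      funext t; simp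
  rw [h3, h2, iteratedFDeriv_comp_add_left]
  simp

theorem abs_sub_iteratedFDeriv_le {g : E → ℝ} (hg : ContDiff ℝ ∞ g) {N : ℕ} {C B : ℝ} {a b : E}
    (hC : ∀ t ∈ Set.Icc (0 : ℝ) 1, |g (a + t • b)| ≤ C * t ^ N)
    (hB : ∀ t ∈ Set.Icc (0 : ℝ) 1, ‖iteratedFDeriv ℝ (N + 1) g (a + t • b)‖ ≤ B) :
    |g (a + b) - (iteratedFDeriv ℝ N g a fun _ => b) / (N.factorial : ℝ)|
      ≤ B * ‖b‖ ^ (N + 1) := by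
  have h := abs_sub_iteratedDeriv_le (φ := fun t : ℝ => g (a + t • b)) (B := B * ‖b‖ ^ (N + 1))
    (hg.comp (by fun_prop)) hC fun t ht => by
      rw [iteratedDeriv_comp_line hg]
      refine ((iteratedFDeriv ℝ (N + 1) g (a + t • b)).le_opNorm _).trans ?_
      simp only [Finset.prod_const, Finset.card_univ, Fintype.card_fin]
      gcongr
      exact hB t ht
  rw [iteratedDeriv_comp_line hg] at h
  simpa using h

end Taylor

section FormalSolution

variable {E X : Type*} [NormedAddCommGroup E] [NormedSpace ℝ E]
  [NormedAddCommGroup X] [NormedSpace ℝ X] {p : E →L[ℝ] X} {j : X →L[ℝ] E} {V : E → E}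

/-- The projection onto the kernel of `p` along the range of a section `j` of `p`. -/
def kerProj (p : E →L[ℝ] X) (j : X →L[ℝ] E) : E →L[ℝ] E := ContinuousLinearMap.id ℝ E - j.comp p

theorem kerProj_apply (e : E) : kerProj p j e = e - j (p e) := rfl

theorem kerProj_add (e : E) : kerProj p j e + j (p e) = e := by simp [kerProj_apply]

theorem apply_kerProj (hpj : ∀ x, p (j x) = x) (e : E) : p (kerProj p j e) = 0 := by
  simp [kerProj_apply, hpj]

theorem kerProj_comp (hpj : ∀ x, p (j x) = x) (x : X) : kerProj p j (j x) = 0 := by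
  simp [kerProj_apply, hpj]

theorem kerProj_kerProj (hpj : ∀ x, p (j x) = x) (e : E) :
    kerProj p j (kerProj p j e) = kerProj p j e := by
  rw [kerProj_apply, apply_kerProj hpj, map_zero, sub_zero]

/-- `g` is of size `‖p e‖ ^ N` on the points at distance at most `1` from the ball of radius `r`
of the kernel of `p`. -/
def HasOrder (p : E →L[ℝ] X) (j : X →L[ℝ] E) (r : ℝ) (N : ℕ) (g : E → ℝ) : Prop :=
  ∃ C, ∀ e, ‖kerProj p j e‖ ≤ r → ‖p e‖ ≤ 1 → |g e| ≤ C * ‖p e‖ ^ N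

theorem HasOrder.add {r : ℝ} {N : ℕ} {f g : E → ℝ} (hf : HasOrder p j r N f)
    (hg : HasOrder p j r N g) : HasOrder p j r N (fun e => f e + g e) := by
  obtain ⟨C, hC⟩ := hf
  obtain ⟨D, hD⟩ := hg
  refine ⟨C + D, fun e h1 h2 => (abs_add_le _ _).trans ?_⟩
  rw [add_mul]
  exact add_le_add (hC e h1 h2) (hD e h1 h2)

theorem contDiff_multilinear_apply {N : ℕ} {S : E → X [×N]→L[ℝ] ℝ} (hS : ContDiff ℝ ∞ S) :
    ContDiff ℝ ∞ fun e => S e fun _ => p e := by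
  have h1 : ContDiff ℝ ∞ fun z : (X [×N]→L[ℝ] ℝ) × (Fin N → X) => z.1 z.2 :=
    contDiff_iff_contDiffAt.2 fun z => ((ContinuousLinearMap.id ℝ
      (X [×N]→L[ℝ] ℝ)).analyticAt_uncurry_of_multilinear (x := z)).contDiffAt
  exact h1.comp (hS.prodMk (contDiff_pi.2 fun _ => p.contDiff))

theorem fderiv_multilinear_apply {N : ℕ} {S : E → X [×N]→L[ℝ] ℝ} (hS : ContDiff ℝ ∞ S) (e u : E) :
    fderiv ℝ (fun e => S e fun _ => p e) e u =
      fderiv ℝ S e u (fun _ => p e) + ∑ i, S e (Function.update (fun _ => p e) i (p u)) := by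
  have h := ((hS.differentiable (by simp) e).hasFDerivAt).continuousMultilinearMap_apply
    (g := fun _ e => p e) (g' := fun _ => p) (fun _ => p.hasFDerivAt)
  rw [h.fderiv]
  simp

theorem exists_bound_of_contDiff [FiniteDimensional ℝ E] {F : Type*} [NormedAddCommGroup F]
    [NormedSpace ℝ F] {f : E → F} (hf : ContDiff ℝ ∞ f) (n : ℕ) (R : ℝ) :
    ∃ C, 0 ≤ C ∧ ∀ e ∈ Metric.closedBall (0 : E) R, ‖iteratedFDeriv ℝ n f e‖ ≤ C := by
  have : ProperSpace E := FiniteDimensional.proper ℝ E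
  obtain ⟨C, hC⟩ := (isCompact_closedBall (0 : E) R).exists_bound_of_continuousOn
    (hf.continuous_iteratedFDeriv (m := n) (by exact_mod_cast le_top)).continuousOn
  exact ⟨|C|, abs_nonneg C, fun e he => (hC e he).trans (le_abs_self C)⟩

theorem mem_closedBall_of_kerProj {r : ℝ} {e : E} {t : ℝ} (ht : t ∈ Set.Icc (0 : ℝ) 1)
    (h1 : ‖kerProj p j e‖ ≤ r) (h2 : ‖p e‖ ≤ 1) :
    kerProj p j e + t • j (p e) ∈ Metric.closedBall (0 : E) (r + ‖j‖) := by
  rw [mem_closedBall_zero_iff]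
  refine (norm_add_le _ _).trans (add_le_add h1 ?_)
  rw [norm_smul, Real.norm_of_nonneg ht.1]
  calc t * ‖j (p e)‖ ≤ 1 * (‖j‖ * ‖p e‖) := by
        gcongr
        · exact ht.2
        · exact j.le_opNorm _
    _ ≤ ‖j‖ := by
        rw [one_mul]
        exact mul_le_of_le_one_right (norm_nonneg _) h2

/-- A function of order `N` is, up to order `N + 1`, the `N`-th Taylor polynomial. -/
theorem HasOrder.sub_iteratedFDeriv [FiniteDimensional ℝ E] (hpj : ∀ x, p (j x) = x) {r : ℝ}
    {N : ℕ} {g : E → ℝ} (hg : ContDiff ℝ ∞ g) (h : HasOrder p j r N g) :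
    HasOrder p j r (N + 1) fun e => g e -
      (iteratedFDeriv ℝ N g (kerProj p j e) fun _ => j (p e)) / (N.factorial : ℝ) := by
  obtain ⟨C, hC⟩ := h
  obtain ⟨B, hB0, hB⟩ := exists_bound_of_contDiff hg (N + 1) (r + ‖j‖)
  refine ⟨B * ‖j‖ ^ (N + 1), fun e h1 h2 => ?_⟩
  have key := abs_sub_iteratedFDeriv_le hg (N := N) (C := C * ‖p e‖ ^ N) (B := B)
    (a := kerProj p j e) (b := j (p e)) (fun t ht => ?_)
    (fun t ht => hB _ (mem_closedBall_of_kerProj ht h1 h2))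
  · rw [kerProj_add] at key
    refine key.trans ?_
    rw [mul_assoc, ← mul_pow]
    gcongr
    exact j.le_opNorm _
  · have hp : p (kerProj p j e + t • j (p e)) = t • p e := by
      simp [apply_kerProj hpj, hpj]
    have hq : kerProj p j (kerProj p j e + t • j (p e)) = kerProj p j e := by
      simp [kerProj_kerProj hpj, kerProj_comp hpj]
    have hn : ‖p (kerProj p j e + t • j (p e))‖ = t * ‖p e‖ := by
      rw [hp, norm_smul, Real.norm_of_nonneg ht.1]
    have := hC (kerProj p j e + t • j (p e)) (by rwa [hq])
      (by rw [hn]; exact mul_le_one₀ ht.2 (norm_nonneg _) h2)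
    rw [hn, mul_pow] at this
    linarith

/-- The linear part of a vector field transverse to the kernel of `p`. -/
noncomputable def transverseLinear (p : E →L[ℝ] X) (j : X →L[ℝ] E) (V : E → E) (e : E) :
    X →L[ℝ] X :=
  p.comp ((fderiv ℝ V (kerProj p j e)).comp j)

theorem contDiff_transverseLinear (hV : ContDiff ℝ ∞ V) :
    ContDiff ℝ ∞ (transverseLinear p j V) := by
  have h : ContDiff ℝ ∞ fun e => fderiv ℝ V (kerProj p j e) :=
    (hV.fderiv_right (by simp)).comp (kerProj p j).contDiff
  exact contDiff_const.clm_comp (h.clm_comp contDiff_const)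

theorem exists_norm_le_of_vanish [FiniteDimensional ℝ E] (hpj : ∀ x, p (j x) = x)
    (hV : ContDiff ℝ ∞ V) (hV0 : ∀ e, p e = 0 → V e = 0) (r : ℝ) :
    ∃ L, 0 ≤ L ∧ ∀ e, ‖kerProj p j e‖ ≤ r → ‖p e‖ ≤ 1 → ‖V e‖ ≤ L * ‖p e‖ ∧
      ‖p (V e) - transverseLinear p j V e (p e)‖ ≤ L * ‖p e‖ ^ 2 := by
  obtain ⟨B₁, hB₁0, hB₁⟩ := exists_bound_of_contDiff hV 1 (r + ‖j‖)
  obtain ⟨B₂, hB₂0, hB₂⟩ := exists_bound_of_contDiff hV 2 (r + ‖j‖)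
  refine ⟨B₁ * ‖j‖ + ‖p‖ * (B₂ * ‖j‖ ^ 2), by positivity, fun e h1 h2 => ?_⟩
  have hm : e ∈ Metric.closedBall (0 : E) (r + ‖j‖) := by
    simpa [kerProj_add] using mem_closedBall_of_kerProj (t := 1) (by simp) h1 h2
  have hm0 : kerProj p j e ∈ Metric.closedBall (0 : E) (r + ‖j‖) := by
    simpa using mem_closedBall_of_kerProj (t := 0) (by simp) h1 h2
  have hsub : e - kerProj p j e = j (p e) := by simp [kerProj_apply]
  have hq0 : V (kerProj p j e) = 0 := hV0 _ (apply_kerProj hpj e)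
  have e1 := (convex_closedBall (0 : E) (r + ‖j‖)).norm_image_sub_le_of_norm_fderiv_le
    (𝕜 := ℝ) (f := V) (C := B₁) (fun x _ => hV.differentiable (by simp) x)
    (fun x hx => by simpa [norm_iteratedFDeriv_one] using hB₁ x hx) hm0 hm
  have e2 := (convex_closedBall (0 : E) (r + ‖j‖)).norm_sub_sub_fderiv_le hV hB₂0 hB₂ hm0 hm
  rw [hq0, sub_zero, hsub] at e1 e2
  have hj : ‖j (p e)‖ ≤ ‖j‖ * ‖p e‖ := j.le_opNorm _
  constructor
  · calc ‖V e‖ ≤ B₁ * (‖j‖ * ‖p e‖) := e1.trans (by gcongr)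
      _ ≤ (B₁ * ‖j‖ + ‖p‖ * (B₂ * ‖j‖ ^ 2)) * ‖p e‖ := by
        rw [add_mul, mul_assoc]
        exact le_add_of_nonneg_right (by positivity)
  · have : p (V e) - transverseLinear p j V e (p e)
        = p (V e - fderiv ℝ V (kerProj p j e) (j (p e))) := by
      simp [transverseLinear]
    rw [this]
    calc _ ≤ ‖p‖ * (B₂ * ‖j (p e)‖ ^ 2) := (p.le_opNorm _).trans (by gcongr)
      _ ≤ ‖p‖ * (B₂ * (‖j‖ * ‖p e‖) ^ 2) := by gcongr
      _ = ‖p‖ * (B₂ * ‖j‖ ^ 2) * ‖p e‖ ^ 2 := by ring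
      _ ≤ (B₁ * ‖j‖ + ‖p‖ * (B₂ * ‖j‖ ^ 2)) * ‖p e‖ ^ 2 := by
        gcongr
        exact le_add_of_nonneg_left (by positivity)

/-- The leading part of the derivative of a homogeneous polynomial along a vector field that
vanishes on the kernel of `p`. -/
theorem hasOrder_fderiv_multilinear_apply [FiniteDimensional ℝ E] (hpj : ∀ x, p (j x) = x)
    (hV : ContDiff ℝ ∞ V) (hV0 : ∀ e, p e = 0 → V e = 0) (r : ℝ) {N : ℕ}
    {S : E → X [×N]→L[ℝ] ℝ} (hS : ContDiff ℝ ∞ S) :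
    HasOrder p j r (N + 1) fun e => fderiv ℝ (fun e => S e fun _ => p e) e (V e) -
      multilinearDerivation N (transverseLinear p j V e) (S e) fun _ => p e := by
  obtain ⟨L, hL0, hL⟩ := exists_norm_le_of_vanish hpj hV hV0 r
  obtain ⟨B₀, hB₀0, hB₀⟩ := exists_bound_of_contDiff hS 0 (r + ‖j‖)
  obtain ⟨B₁, hB₁0, hB₁⟩ := exists_bound_of_contDiff hS 1 (r + ‖j‖)
  simp only [norm_iteratedFDeriv_one, norm_iteratedFDeriv_zero] at hB₁ hB₀
  refine ⟨B₁ * L + N * (B₀ * L), fun e h1 h2 => ?_⟩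
  have hm : e ∈ Metric.closedBall (0 : E) (r + ‖j‖) := by
    simpa [kerProj_add] using mem_closedBall_of_kerProj (t := 1) (by simp) h1 h2
  obtain ⟨hL1, hL2⟩ := hL e h1 h2
  beta_reduce
  rw [fderiv_multilinear_apply hS, multilinearDerivation_apply, add_sub_assoc,
    ← Finset.sum_sub_distrib]
  have e1 : |fderiv ℝ S e (V e) fun _ => p e| ≤ B₁ * L * ‖p e‖ ^ (N + 1) := by
    calc _ ≤ ‖fderiv ℝ S e (V e)‖ * ‖p e‖ ^ N := by
          simpa using (fderiv ℝ S e (V e)).le_opNorm fun _ => p e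
      _ ≤ B₁ * (L * ‖p e‖) * ‖p e‖ ^ N := by
          gcongr
          exact ((fderiv ℝ S e).le_opNorm _).trans
            (mul_le_mul (hB₁ e hm) hL1 (norm_nonneg _) hB₁0)
      _ = _ := by ring
  have e2 : ∀ i : Fin N, |S e (Function.update (fun _ => p e) i (p (V e))) -
      S e (Function.update (fun _ => p e) i (transverseLinear p j V e (p e)))|
      ≤ B₀ * L * ‖p e‖ ^ (N + 1) := by
    intro i
    rw [← ContinuousMultilinearMap.map_update_sub]
    have hN : N = N - 1 + 1 := by have := i.2; omega
    refine ((S e).le_opNorm _).trans ?_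
    have hprod : ∏ k, ‖Function.update (fun _ : Fin N => p e) i
        (p (V e) - transverseLinear p j V e (p e)) k‖
        = ‖p (V e) - transverseLinear p j V e (p e)‖ * ‖p e‖ ^ (N - 1) := by
      rw [← Finset.mul_prod_erase _ _ (Finset.mem_univ i), Function.update_self]
      congr 1
      rw [Finset.prod_congr rfl (g := fun _ => ‖p e‖)
        fun k hk => by rw [Function.update_of_ne (Finset.ne_of_mem_erase hk)]]
      simp
    rw [hprod]
    calc _ ≤ B₀ * (L * ‖p e‖ ^ 2 * ‖p e‖ ^ (N - 1)) := by
          gcongr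
          exact hB₀ e hm
      _ = B₀ * L * ‖p e‖ ^ (N - 1 + 1 + 1) := by ring
      _ = _ := by rw [← hN]
  refine (abs_add_le _ _).trans ?_
  rw [add_mul]
  refine add_le_add e1 ((Finset.abs_sum_le_sum_abs _ _).trans ?_)
  refine (Finset.sum_le_sum fun i _ => e2 i).trans (le_of_eq ?_)
  simp
  ring

/-- One step of the formal solution of the cohomological equation. -/
theorem exists_homogeneous_step [FiniteDimensional ℝ E] [FiniteDimensional ℝ X]
    (hpj : ∀ x, p (j x) = x)
    (hV : ContDiff ℝ ∞ V) (hV0 : ∀ e, p e = 0 → V e = 0) {r r' : ℝ} (hr : 0 < r) (hrr : r < r')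
    {N : ℕ}
    (hunit : ∀ e, ‖kerProj p j e‖ ≤ r' →
      IsUnit (multilinearDerivation N (transverseLinear p j V e)))
    {g : E → ℝ} (hg : ContDiff ℝ ∞ g) (hgN : HasOrder p j r N g) :
    ∃ h : E → ℝ, ContDiff ℝ ∞ h ∧ (∀ (t : ℝ) e, h (kerProj p j e + t • j (p e)) = t ^ N * h e) ∧
      HasOrder p j r (N + 1) fun e => g e + fderiv ℝ h e (V e) := by
  let θ : ContDiffBump (0 : E) := ⟨r, r', hr, hrr⟩
  set T : E → X [×N]→L[ℝ] ℝ := fun e => ((N.factorial : ℝ)⁻¹) •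
    ContinuousMultilinearMap.compContinuousLinearMapL (fun _ => j)
      (iteratedFDeriv ℝ N g (kerProj p j e)) with hT
  have hTs : ContDiff ℝ ∞ T := by
    let Q : (E [×N]→L[ℝ] ℝ) →L[ℝ] (X [×N]→L[ℝ] ℝ) :=
      ContinuousMultilinearMap.compContinuousLinearMapL fun _ => j
    have h1 : ContDiff ℝ ∞ fun e => iteratedFDeriv ℝ N g (kerProj p j e) :=
      (hg.iteratedFDeriv_right (i := N) (m := ∞) (by exact_mod_cast le_top)).comp
        (kerProj p j).contDiff
    exact (Q.contDiff.comp h1).const_smul ((N.factorial : ℝ)⁻¹)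
  set S : E → X [×N]→L[ℝ] ℝ := fun e => -(θ (kerProj p j e) •
    Ring.inverse (multilinearDerivation N (transverseLinear p j V e)) (T e)) with hS
  have hSs : ContDiff ℝ ∞ S := by
    refine ContDiff.neg (contDiff_iff_contDiffAt.2 fun e => ?_)
    by_cases he : ‖kerProj p j e‖ ≤ r'
    · obtain ⟨u, hu⟩ := hunit e he
      refine ((θ.contDiff.comp (kerProj p j).contDiff).contDiffAt).smul
        (ContDiffAt.clm_apply ?_ hTs.contDiffAt)
      have h1 := contDiffAt_ringInverse (n := ∞) ℝ
        (R := (X [×N]→L[ℝ] ℝ) →L[ℝ] (X [×N]→L[ℝ] ℝ)) u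
      rw [hu] at h1
      exact h1.comp e ((contDiff_multilinearDerivation N).comp
        (contDiff_transverseLinear hV)).contDiffAt
    · refine contDiffAt_const (c := 0) |>.congr_of_eventuallyEq ?_
      have hopen : IsOpen {e : E | r' < ‖kerProj p j e‖} :=
        isOpen_lt continuous_const (kerProj p j).continuous.norm
      filter_upwards [hopen.mem_nhds (not_le.1 he)] with z hz
      rw [θ.zero_of_le_dist (by simpa [θ] using hz.le), zero_smul]
  refine ⟨fun e => S e fun _ => p e, contDiff_multilinear_apply hSs, fun t e => ?_, ?_⟩
  · have hq : kerProj p j (kerProj p j e + t • j (p e)) = kerProj p j e := by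
      simp [kerProj_kerProj hpj, kerProj_comp hpj]
    have hp : p (kerProj p j e + t • j (p e)) = t • p e := by
      simp [apply_kerProj hpj, hpj]
    have hSq : S (kerProj p j e + t • j (p e)) = S e := by
      simp only [hS, hT, transverseLinear, hq]
    beta_reduce
    rw [hSq, hp]
    have := (S e).map_smul_univ (fun _ => t) fun _ => p e
    simpa using this
  · obtain ⟨C, hC⟩ := (hgN.sub_iteratedFDeriv hpj hg).add
      (hasOrder_fderiv_multilinear_apply hpj hV hV0 r hSs)
    refine ⟨C, fun e h1 h2 => le_trans (le_of_eq ?_) (hC e h1 h2)⟩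
    have hθ : θ (kerProj p j e) = 1 := θ.one_of_mem_closedBall (by simpa [θ] using h1)
    have hΛ : multilinearDerivation N (transverseLinear p j V e) (S e) = -T e := by
      have := congrArg (fun Q : (X [×N]→L[ℝ] ℝ) →L[ℝ] (X [×N]→L[ℝ] ℝ) => Q (T e))
        (Ring.mul_inverse_cancel _ (hunit e (h1.trans hrr.le)))
      simp only [hS, hθ, one_smul, map_neg]
      exact congrArg _ this
    have hTe : (T e fun _ => p e) =
        (iteratedFDeriv ℝ N g (kerProj p j e) fun _ => j (p e)) / (N.factorial : ℝ) := by
      simp only [hT, div_eq_inv_mul]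
      rfl
    beta_reduce
    rw [hΛ, ← hTe]
    congr 1
    change _ = _ + (_ - -(T e fun _ => p e))
    ring

/-- The formal solution of the cohomological equation. -/
theorem exists_formal_solution [FiniteDimensional ℝ E] [FiniteDimensional ℝ X]
    (hpj : ∀ x, p (j x) = x)
    (hV : ContDiff ℝ ∞ V) (hV0 : ∀ e, p e = 0 → V e = 0) {r r' : ℝ} (hr : 0 < r) (hrr : r < r')
    (hunit : ∀ N ≥ 1, ∀ e, ‖kerProj p j e‖ ≤ r' →
      IsUnit (multilinearDerivation N (transverseLinear p j V e)))
    {g : E → ℝ} (hg : ContDiff ℝ ∞ g) (hg1 : HasOrder p j r 1 g) :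
    ∃ h : ℕ → E → ℝ, (∀ n, ContDiff ℝ ∞ (h n)) ∧
      (∀ n (t : ℝ) e, h n (kerProj p j e + t • j (p e)) = t ^ (n + 1) * h n e) ∧
      ∀ n, HasOrder p j r (n + 1) fun e => g e + ∑ k ∈ Finset.range n, fderiv ℝ (h k) e (V e) := by
  have step : ∀ (n : ℕ) (f : {f : E → ℝ // ContDiff ℝ ∞ f ∧ HasOrder p j r (n + 1) f}),
      ∃ h : E → ℝ, ContDiff ℝ ∞ h ∧
        (∀ (t : ℝ) e, h (kerProj p j e + t • j (p e)) = t ^ (n + 1) * h e) ∧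
        HasOrder p j r (n + 2) fun e => f.1 e + fderiv ℝ h e (V e) := fun n f =>
    exists_homogeneous_step hpj hV hV0 hr hrr (hunit (n + 1) (by omega)) f.2.1 f.2.2
  choose H hHs hHh hHo using step
  let G : ∀ n, {f : E → ℝ // ContDiff ℝ ∞ f ∧ HasOrder p j r (n + 1) f} := fun n =>
    Nat.rec ⟨g, hg, hg1⟩ (fun n f => ⟨fun e => f.1 e + fderiv ℝ (H n f) e (V e),
      f.2.1.add (((hHs n f).fderiv_right (by simp)).clm_apply hV), hHo n f⟩) n
  have hG : ∀ n e, (G n).1 e = g e + ∑ k ∈ Finset.range n, fderiv ℝ (H k (G k)) e (V e) := by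
    intro n e
    induction n with
    | zero => simp [G]
    | succ n ih =>
      rw [Finset.sum_range_succ, ← add_assoc, ← ih]
  refine ⟨fun n => H n (G n), fun n => hHs n _, fun n => hHh n _, fun n => ?_⟩
  have := (G n).2.2
  rwa [funext (hG n)] at this

end FormalSolution

section Borel

variable {E X : Type*} [NormedAddCommGroup E] [NormedSpace ℝ E]
  [NormedAddCommGroup X] [NormedSpace ℝ X] {p : E →L[ℝ] X} {j : X →L[ℝ] E}

theorem norm_iteratedFDeriv_comp_clm_le {G : E → ℝ} (hG : ContDiff ℝ ∞ G) (L : E →L[ℝ] E) (i : ℕ)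
    (e : E) :
    ‖iteratedFDeriv ℝ i (fun e => G (L e)) e‖ ≤ ‖iteratedFDeriv ℝ i G (L e)‖ * ‖L‖ ^ i := by
  have h := L.iteratedFDeriv_comp_right hG e (i := i) (by exact_mod_cast le_top)
  change iteratedFDeriv ℝ i (fun e => G (L e)) e = _ at h
  rw [h]
  simpa using ContinuousMultilinearMap.norm_compContinuousLinearMap_le
    (iteratedFDeriv ℝ i G (L e)) fun _ => L

theorem exists_abs_le_of_homogeneous [FiniteDimensional ℝ E] {n : ℕ} {h : E → ℝ}
    (hh : Continuous h) (hhom : ∀ (t : ℝ) e, h (kerProj p j e + t • j (p e)) = t ^ (n + 1) * h e)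
    (R : ℝ) : ∃ C, 0 ≤ C ∧ ∀ e, ‖e‖ ≤ R → |h e| ≤ C * ‖p e‖ ^ n := by
  have : ProperSpace E := FiniteDimensional.proper ℝ E
  obtain ⟨B, hB⟩ := (isCompact_closedBall (0 : E)
    (‖kerProj p j‖ * R + ‖j‖)).exists_bound_of_continuousOn hh.continuousOn
  refine ⟨|B| * (‖p‖ * |R|), by positivity, fun e he => ?_⟩
  rcases eq_or_ne (p e) 0 with h0 | h0
  · have h1 := hhom 0 e
    rw [zero_pow (by omega), zero_mul, zero_smul, add_zero] at h1
    have h2 := kerProj_add (p := p) (j := j) e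
    rw [h0, map_zero, add_zero] at h2
    rw [← h2, h1, abs_zero]
    positivity
  · have hs : 0 < ‖p e‖ := norm_pos_iff.2 h0
    have hpe : ‖p e‖ ≤ ‖p‖ * |R| := (p.le_opNorm e).trans
      (mul_le_mul_of_nonneg_left (he.trans (le_abs_self R)) (norm_nonneg _))
    have h1 := hhom ‖p e‖⁻¹ e
    have h2 : |h (kerProj p j e + ‖p e‖⁻¹ • j (p e))| ≤ |B| := by
      refine (hB _ ?_).trans (le_abs_self B)
      rw [mem_closedBall_zero_iff]
      refine (norm_add_le _ _).trans (add_le_add (((kerProj p j).le_opNorm e).trans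
        (mul_le_mul_of_nonneg_left he (norm_nonneg _))) ?_)
      rw [← map_smul]
      refine (j.le_opNorm _).trans (le_of_eq ?_)
      rw [norm_smul, norm_inv, norm_norm, inv_mul_cancel₀ hs.ne', mul_one]
    have h3 : h e = ‖p e‖ ^ (n + 1) * h (kerProj p j e + ‖p e‖⁻¹ • j (p e)) := by
      rw [h1, ← mul_assoc, ← mul_pow, mul_inv_cancel₀ hs.ne', one_pow, one_mul]
    rw [h3, abs_mul, abs_of_nonneg (by positivity)]
    calc ‖p e‖ ^ (n + 1) * |h (kerProj p j e + ‖p e‖⁻¹ • j (p e))|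
        ≤ ‖p e‖ ^ (n + 1) * |B| := by gcongr
      _ = |B| * ‖p e‖ * ‖p e‖ ^ n := by ring
      _ ≤ |B| * (‖p‖ * |R|) * ‖p e‖ ^ n := by gcongr

/-- A homogeneous polynomial can be cut off transversally so as to become small together with its
derivatives of lower order. -/
theorem exists_small_cutoff [FiniteDimensional ℝ E] (hpj : ∀ x, p (j x) = x) {n : ℕ} {h : E → ℝ}
    (hh : ContDiff ℝ ∞ h)
    (hhom : ∀ (t : ℝ) e, h (kerProj p j e + t • j (p e)) = t ^ (n + 1) * h e) {r : ℝ} (hr : 0 < r) :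
    ∃ (f : E → ℝ) (ε : ℝ), 0 < ε ∧ ContDiff ℝ ∞ f ∧
      (∀ e, f e ≠ 0 → e ∈ Metric.closedBall (0 : E)
        ((‖kerProj p j‖ + ‖j‖ * ‖p‖) * (r + ‖j‖ + 1))) ∧
      (∀ i ≤ n, ∀ e, ‖iteratedFDeriv ℝ i f e‖ ≤ (1 / 2) ^ n) ∧
      (∀ e, |f e| ≤ (1 / 2) ^ n * ‖p e‖ ^ n) ∧
      ∀ e, ‖kerProj p j e‖ ≤ r → ‖p e‖ ≤ ε → f e = h e := by
  set q := kerProj p j with hq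
  let χ : ContDiffBump (0 : E) := ⟨r + ‖j‖, r + ‖j‖ + 1, by positivity, by linarith⟩
  set G : E → ℝ := fun e => χ e * h e with hG
  have hGs : ContDiff ℝ ∞ G := χ.contDiff.mul hh
  have hGc : HasCompactSupport G := χ.hasCompactSupport.mul_right
  obtain ⟨C', hC'0, hC'⟩ := exists_abs_le_of_homogeneous hh.continuous hhom (r + ‖j‖ + 1)
  choose C hC0 hC using fun i => exists_norm_iteratedFDeriv_le hGs hGc i
  set c : ℝ := ‖q‖ + ‖j.comp p‖ with hc
  have hc0 : 0 ≤ c := by positivity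
  set D : ℝ := C' + ∑ i ∈ Finset.range (n + 1), C i * c ^ i with hD
  have hsum0 : 0 ≤ ∑ i ∈ Finset.range (n + 1), C i * c ^ i :=
    Finset.sum_nonneg fun i _ => mul_nonneg (hC0 i) (by positivity)
  have hD0 : 0 ≤ D := add_nonneg hC'0 hsum0
  obtain ⟨ε, hε0, hε1, hεD⟩ : ∃ ε : ℝ, 0 < ε ∧ ε ≤ 1 ∧ ε * D ≤ (1 / 2) ^ n := by
    refine ⟨(1 / 2) ^ n / (D + 1), by positivity, ?_, ?_⟩
    · rw [div_le_one (by positivity)]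
      have : (1 / 2 : ℝ) ^ n ≤ 1 := pow_le_one₀ (by norm_num) (by norm_num)
      linarith
    · rw [div_mul_eq_mul_div, div_le_iff₀ (by positivity)]
      have : (0 : ℝ) ≤ (1 / 2) ^ n := by positivity
      nlinarith
  set τ : E →L[ℝ] E := q + ε⁻¹ • j.comp p with hτ
  have hτe : ∀ e, τ e = q e + ε⁻¹ • j (p e) := fun e => rfl
  have hpτ : ∀ e, p (τ e) = ε⁻¹ • p e := fun e => by
    simp [hτe, hq, apply_kerProj hpj, hpj]
  have hqτ : ∀ e, q (τ e) = q e := fun e => by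
    simp [hτe, hq, kerProj_kerProj hpj, kerProj_comp hpj]
  have hτn : ‖τ‖ ≤ ε⁻¹ * c := by
    refine (norm_add_le _ _).trans ?_
    rw [norm_smul, norm_inv, Real.norm_of_nonneg hε0.le, hc, mul_add]
    exact add_le_add (le_mul_of_one_le_left (norm_nonneg _) ((one_le_inv₀ hε0).2 hε1)) le_rfl
  have hfh : ∀ e, ε ^ (n + 1) * G (τ e) = χ (τ e) * h e := fun e => by
    simp only [hG]
    rw [hτe, hhom, inv_pow]
    field_simp
  have hχ : ∀ e, χ (τ e) ≠ 0 → ‖τ e‖ ≤ r + ‖j‖ + 1 := fun e he => by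
    by_contra hcon
    push Not at hcon
    exact he (χ.zero_of_le_dist (by simpa [χ] using hcon.le))
  refine ⟨fun e => ε ^ (n + 1) * G (τ e), ε, hε0, contDiff_const.mul (hGs.comp τ.contDiff),
    fun e he => ?_, fun i hi e => ?_, fun e => ?_, fun e h1 h2 => ?_⟩
  · have h1 : χ (τ e) ≠ 0 := fun h0 => he (by simp [hG, h0])
    have h2 := hχ e h1
    rw [mem_closedBall_zero_iff]
    have h3 : e = q (τ e) + j (ε • p (τ e)) := by
      rw [hqτ, hpτ, smul_smul, mul_inv_cancel₀ hε0.ne', one_smul, hq, kerProj_add]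
    have hR : 0 ≤ r + ‖j‖ + 1 := by positivity
    calc ‖e‖ ≤ ‖q (τ e)‖ + ‖j (ε • p (τ e))‖ := by
          conv_lhs => rw [h3]
          exact norm_add_le _ _
      _ ≤ ‖q‖ * (r + ‖j‖ + 1) + ‖j‖ * (1 * (‖p‖ * (r + ‖j‖ + 1))) := by
          gcongr
          · exact (q.le_opNorm _).trans (by gcongr)
          · refine (j.le_opNorm _).trans ?_
            rw [norm_smul, Real.norm_of_nonneg hε0.le]
            gcongr
            exact (p.le_opNorm _).trans (by gcongr)
      _ = _ := by ring
  · have h1 : iteratedFDeriv ℝ i (fun e => ε ^ (n + 1) * G (τ e)) e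
        = ε ^ (n + 1) • iteratedFDeriv ℝ i (fun e => G (τ e)) e :=
      iteratedFDeriv_const_smul_apply' (a := ε ^ (n + 1))
        ((hGs.comp τ.contDiff).contDiffAt.of_le (by exact_mod_cast le_top))
    rw [h1, norm_smul, Real.norm_of_nonneg (by positivity)]
    calc ε ^ (n + 1) * ‖iteratedFDeriv ℝ i (fun e => G (τ e)) e‖
        ≤ ε ^ (n + 1) * (C i * (ε⁻¹ * c) ^ i) := by
          gcongr
          refine (norm_iteratedFDeriv_comp_clm_le hGs τ i e).trans ?_
          have := hC i (τ e)
          have := hC0 i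
          gcongr
      _ = ε ^ (n - i) * ε * (C i * c ^ i) := by
          have hn : ε ^ (n + 1) = ε ^ (n - i) * ε ^ i * ε := by
            rw [← pow_add, ← pow_succ, Nat.sub_add_cancel hi]
          rw [hn, mul_pow, inv_pow]
          field_simp
      _ ≤ 1 * ε * D := by
          have h0 := hC0 i
          gcongr
          · exact pow_le_one₀ hε0.le hε1
          · rw [hD]
            have := Finset.single_le_sum (f := fun i => C i * c ^ i)
              (fun k _ => mul_nonneg (hC0 k) (by positivity)) (Finset.mem_range_succ_iff.2 hi)
            linarith
      _ ≤ (1 / 2) ^ n := by rw [one_mul]; exact hεD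
  · beta_reduce
    by_cases h0 : χ (τ e) = 0
    · rw [hfh, h0, zero_mul, abs_zero]
      positivity
    have h1 := hC' (τ e) (hχ e h0)
    rw [hpτ, norm_smul, norm_inv, Real.norm_of_nonneg hε0.le] at h1
    rw [abs_mul, abs_of_pos (by positivity : (0 : ℝ) < ε ^ (n + 1))]
    calc ε ^ (n + 1) * |G (τ e)| ≤ ε ^ (n + 1) * (C' * (ε⁻¹ * ‖p e‖) ^ n) := by
          gcongr
          rw [hG, abs_mul, abs_of_nonneg χ.nonneg]
          exact (mul_le_of_le_one_left (abs_nonneg _) χ.le_one).trans h1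
      _ = ε * C' * ‖p e‖ ^ n := by
          rw [mul_pow, inv_pow, pow_succ]
          field_simp
      _ ≤ ε * D * ‖p e‖ ^ n := by
          gcongr
          linarith
      _ ≤ (1 / 2) ^ n * ‖p e‖ ^ n := by gcongr
  · beta_reduce
    rw [hfh, χ.one_of_mem_closedBall, one_mul]
    rw [mem_closedBall_zero_iff, hτe]
    refine (norm_add_le _ _).trans (add_le_add h1 ?_)
    rw [← map_smul]
    refine (j.le_opNorm _).trans (mul_le_of_le_one_right (norm_nonneg _) ?_)
    rw [norm_smul, norm_inv, Real.norm_of_nonneg hε0.le, inv_mul_le_iff₀ hε0, mul_one]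
    exact h2

/-- Borel's lemma: a formal series of homogeneous polynomials is the asymptotic expansion of a
smooth function. -/
theorem exists_asymptotic_expansion [FiniteDimensional ℝ E] (hpj : ∀ x, p (j x) = x)
    {h : ℕ → E → ℝ} (hh : ∀ n, ContDiff ℝ ∞ (h n))
    (hhom : ∀ n (t : ℝ) e, h n (kerProj p j e + t • j (p e)) = t ^ (n + 1) * h n e)
    {r : ℝ} (hr : 0 < r) :
    ∃ f : E → ℝ, ContDiff ℝ ∞ f ∧ (∀ e, p e = 0 → ‖kerProj p j e‖ < r → f e = 0) ∧
      ∀ N : ℕ, ∃ ρ > 0, ∃ C, ∀ e, ‖kerProj p j e‖ < r → ‖p e‖ < ρ →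
        ‖fderiv ℝ f e - ∑ k ∈ Finset.range (2 * N), fderiv ℝ (h k) e‖ ≤ C * ‖p e‖ ^ N := by
  have : ProperSpace E := FiniteDimensional.proper ℝ E
  choose f ε hε hfs hfK hfD hfp hfh using fun n => exists_small_cutoff hpj (hh n) (hhom n) hr
  set K := Metric.closedBall (0 : E) ((‖kerProj p j‖ + ‖j‖ * ‖p‖) * (r + ‖j‖ + 1))
  have hgeo : Summable fun n : ℕ => (1 / 2 : ℝ) ^ n := summable_geometric_two
  have hf0 : ∀ n e, |f n e| ≤ (1 / 2) ^ n := fun n e => by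
    simpa using hfD n 0 (Nat.zero_le n) e
  have hsum : ∀ e, Summable fun n => f n e := fun e =>
    Summable.of_norm_bounded hgeo fun n => hf0 n e
  have hRs : ∀ M, ContDiff ℝ ∞ fun e => ∑' n, f (n + M) e := fun M => by
    refine contDiff_tsum_of_eventually (v := fun _ n => (1 / 2 : ℝ) ^ (n + M))
      (fun n => hfs _) (fun k _ => (summable_nat_add_iff M).2 hgeo) fun k _ => ?_
    rw [Nat.cofinite_eq_atTop]
    filter_upwards [eventually_ge_atTop k] with n hn e
    exact hfD (n + M) k (by omega) e
  have hRc : ∀ M, HasCompactSupport fun e => ∑' n, f (n + M) e := fun M =>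
    HasCompactSupport.intro (isCompact_closedBall _ _ : IsCompact K) fun e he => by
      have : ∀ n, f (n + M) e = 0 := fun n => by_contra fun h0 => he (hfK _ e h0)
      simp [this]
  have hRp : ∀ M e, |∑' n, f (n + M) e| ≤ 2 * ‖p e‖ ^ M := fun M e => by
    have hb : ∀ n, ‖f (n + M) e‖ ≤ (1 / 2) ^ n * ‖p e‖ ^ M := fun n => by
      have h2 : ((1 : ℝ) / 2) ^ (n + M) ≤ (1 / 2) ^ n :=
        pow_le_pow_of_le_one (by norm_num) (by norm_num) (by omega)
      rw [Real.norm_eq_abs]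
      by_cases he : ‖p e‖ ≤ 1
      · refine (hfp (n + M) e).trans (mul_le_mul h2 ?_ (by positivity) (by positivity))
        exact pow_le_pow_of_le_one (norm_nonneg _) he (by omega)
      · push Not at he
        exact (hf0 (n + M) e).trans (h2.trans (le_mul_of_one_le_right (by positivity)
          (one_le_pow₀ he.le)))
    refine (tsum_of_norm_bounded (hasSum_geometric_two.mul_right (‖p e‖ ^ M)) hb)
  have hsplit : ∀ M e, ∑' n, f n e = ∑ k ∈ Finset.range M, f k e + ∑' n, f (n + M) e := fun M e =>
    ((hsum e).sum_add_tsum_nat_add M).symm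
  refine ⟨fun e => ∑' n, f n e, by simpa using hRs 0, fun e he hr' => ?_, fun N => ?_⟩
  · have hz : ∀ n, f n e = 0 := fun n => by
      rw [hfh n e hr'.le (by rw [he, norm_zero]; exact (hε n).le)]
      have h1 := hhom n 0 e
      have h2 := kerProj_add (p := p) (j := j) e
      rw [he, map_zero, add_zero] at h2
      rw [zero_pow (by omega), zero_mul, zero_smul, add_zero, h2] at h1
      exact h1
    simp [hz]
  · obtain ⟨C, hC⟩ := exists_norm_fderiv_le_of_norm_le (p := p) (N := N) (C := 2)
      (hRs (2 * N)) (hRc (2 * N)) (fun e => hRp (2 * N) e)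
    obtain ⟨ρ, hρ0, hρ⟩ : ∃ ρ > 0, ∀ k < 2 * N, ρ ≤ ε k := by
      generalize 2 * N = M
      induction M with
      | zero => exact ⟨1, one_pos, fun k hk => absurd hk (by omega)⟩
      | succ M ih =>
        obtain ⟨ρ, h1, h2⟩ := ih
        refine ⟨min ρ (ε M), lt_min h1 (hε M), fun k hk => ?_⟩
        rcases Nat.lt_succ_iff_lt_or_eq.1 hk with h | rfl
        · exact (min_le_left _ _).trans (h2 k h)
        · exact min_le_right _ _
    refine ⟨ρ, hρ0, C, fun e h1 h2 => ?_⟩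
    have hopen : IsOpen {e : E | ‖kerProj p j e‖ < r ∧ ‖p e‖ < ρ} :=
      (isOpen_lt (kerProj p j).continuous.norm continuous_const).inter
        (isOpen_lt p.continuous.norm continuous_const)
    have hfd : ∀ k ∈ Finset.range (2 * N), fderiv ℝ (f k) e = fderiv ℝ (h k) e := fun k hk => by
      refine Filter.EventuallyEq.fderiv_eq ?_
      filter_upwards [hopen.mem_nhds ⟨h1, h2⟩] with z hz
      exact hfh k z hz.1.le (hz.2.le.trans (hρ k (Finset.mem_range.1 hk)))
    have hd : fderiv ℝ (fun e => ∑' n, f n e) e =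
        ∑ k ∈ Finset.range (2 * N), fderiv ℝ (f k) e +
          fderiv ℝ (fun e => ∑' n, f (n + 2 * N) e) e := by
      rw [funext (hsplit (2 * N))]
      rw [fderiv_fun_add (DifferentiableAt.fun_sum fun k _ => (hfs k).differentiable (by simp) e)
        ((hRs _).differentiable (by simp) e),
        fderiv_fun_sum fun k _ => (hfs k).differentiable (by simp) e]
    rw [hd, Finset.sum_congr rfl hfd, add_sub_cancel_left]
    exact hC e

end Borel

section CohomologicalEquation

theorem hasOrder_one {E X : Type*} [NormedAddCommGroup E] [NormedSpace ℝ E]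
    [NormedAddCommGroup X] [NormedSpace ℝ X] {p : E →L[ℝ] X} {j : X →L[ℝ] E}
    [FiniteDimensional ℝ E] (hpj : ∀ x, p (j x) = x)
    {g : E → ℝ} (hg : ContDiff ℝ ∞ g) (hg0 : ∀ e, p e = 0 → g e = 0) (r : ℝ) :
    HasOrder p j r 1 g := by
  obtain ⟨C, -, hC⟩ := exists_bound_of_contDiff hg 0 (r + ‖j‖)
  have h0 : HasOrder p j r 0 g := ⟨C, fun e h1 h2 => by
    simpa [kerProj_add] using hC _ (mem_closedBall_of_kerProj (t := 1) (by simp) h1 h2)⟩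
  simpa [hg0 _ (apply_kerProj hpj _)] using h0.sub_iteratedFDeriv hpj hg

/-- The cohomological equation `V f = -g` near a point of the set of singular points. -/
theorem HasFlatSolutions.exists_local_solution {a b c d ε : ℝ} (hflat : HasFlatSolutions a b c d ε)
    {E : Type} [NormedAddCommGroup E] [NormedSpace ℝ E] [FiniteDimensional ℝ E]
    {p : E →L[ℝ] ℝ × ℝ} {j : ℝ × ℝ →L[ℝ] E} (hpj : ∀ x, p (j x) = x) {V : E → E}
    (hV : IsTameField p V)
    (h1 : ∀ e, |(p (V e)).1 - (a * (p e).1 + b * (p e).2)| ≤ ε * ‖p e‖)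
    (h2 : ∀ e, |(p (V e)).2 - (c * (p e).1 + d * (p e).2)| ≤ ε * ‖p e‖)
    {r : ℝ} (hr : 0 < r)
    (hunit : ∀ N ≥ 1, ∀ e, ‖kerProj p j e‖ ≤ r →
      IsUnit (multilinearDerivation N (transverseLinear p j V e)))
    {g : E → ℝ} (hg : ContDiff ℝ ∞ g) (hg0 : ∀ e, p e = 0 → g e = 0) :
    ∃ f : E → ℝ, ContDiff ℝ ∞ f ∧ (∀ᶠ e in 𝓝 0, fderiv ℝ f e (V e) = -g e) ∧
      ∀ᶠ e in 𝓝 0, p e = 0 → f e = 0 := by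
  have hr2 : 0 < r / 2 := by positivity
  obtain ⟨h, hhs, hhom, hord⟩ := exists_formal_solution hpj hV.smooth hV.vanish hr2
    (half_lt_self hr) hunit hg (hasOrder_one hpj hg hg0 (r / 2))
  obtain ⟨f, hfs, hf0, hf⟩ := exists_asymptotic_expansion hpj hhs hhom hr2
  obtain ⟨L, hL0, hL⟩ := exists_norm_le_of_vanish hpj hV.smooth hV.vanish (r / 2)
  set g' : E → ℝ := fun e => g e + fderiv ℝ f e (V e) with hg'
  have hg's : ContDiff ℝ ∞ g' := hg.add ((hfs.fderiv_right (by simp)).clm_apply hV.smooth)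
  have hdecay : ∀ N : ℕ, ∃ ρ > 0, ∃ C, 0 ≤ C ∧ ∀ e, ‖kerProj p j e‖ < r / 2 → ‖p e‖ < ρ →
      ‖p e‖ ≤ 1 → |g' e| ≤ C * ‖p e‖ ^ N := by
    intro N
    obtain ⟨ρ, hρ, C, hC⟩ := hf N
    obtain ⟨C', hC'⟩ := hord (2 * N)
    refine ⟨ρ, hρ, |C'| + |C| * L, by positivity, fun e he1 he2 he3 => ?_⟩
    have e1 := hC' e he1.le he3
    have e2 := hC e he1 he2
    have e3 := (hL e he1.le he3).1
    have hsplit : g' e = (g e + ∑ k ∈ Finset.range (2 * N), fderiv ℝ (h k) e (V e)) +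
        (fderiv ℝ f e - ∑ k ∈ Finset.range (2 * N), fderiv ℝ (h k) e) (V e) := by
      simp [hg']
    have e4 : ‖p e‖ ^ (2 * N + 1) ≤ ‖p e‖ ^ N :=
      pow_le_pow_of_le_one (norm_nonneg _) he3 (by omega)
    rw [hsplit]
    refine (abs_add_le _ _).trans ?_
    rw [add_mul]
    refine add_le_add (e1.trans ?_) ?_
    · exact mul_le_mul (le_abs_self _) e4 (by positivity) (abs_nonneg _)
    · calc _ ≤ ‖fderiv ℝ f e - ∑ k ∈ Finset.range (2 * N), fderiv ℝ (h k) e‖ * ‖V e‖ :=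
            ContinuousLinearMap.le_opNorm _ _
        _ ≤ (|C| * ‖p e‖ ^ N) * (L * 1) := by
            gcongr
            · exact e2.trans (by gcongr; exact le_abs_self C)
            · exact e3.trans (by gcongr)
        _ = _ := by ring
  have hnhds : ∀ᶠ e in 𝓝 (0 : E), ‖kerProj p j e‖ < r / 2 ∧ ‖p e‖ < 1 :=
    ((isOpen_lt (kerProj p j).continuous.norm continuous_const).inter
      (isOpen_lt p.continuous.norm continuous_const)).mem_nhds (by simp [hr2])
  obtain ⟨s, hs0, hs⟩ := Metric.eventually_nhds_iff.1 hnhds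
  let χ : ContDiffBump (0 : E) := ⟨s / 2, s, by positivity, half_lt_self hs0⟩
  have hGs : ContDiff ℝ ∞ fun e => χ e * g' e := χ.contDiff.mul hg's
  have hGc : HasCompactSupport fun e => χ e * g' e := χ.hasCompactSupport.mul_right
  have hGf : IsFlat p fun e => χ e * g' e := by
    refine ⟨hGs, hGc, fun N => ?_⟩
    obtain ⟨ρ, hρ, C, hC0, hC⟩ := hdecay N
    obtain ⟨B, hB0, hB⟩ := exists_norm_iteratedFDeriv_le hGs hGc 0
    simp only [norm_iteratedFDeriv_zero] at hB
    refine ⟨C + B / ρ ^ N, fun e => ?_⟩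
    by_cases he : ‖p e‖ < ρ
    · by_cases hes : dist e 0 < s
      · obtain ⟨u1, u2⟩ := hs hes
        have := hC e u1 he u2.le
        rw [norm_mul, Real.norm_of_nonneg χ.nonneg]
        calc χ e * ‖g' e‖ ≤ 1 * (C * ‖p e‖ ^ N) := by
              gcongr
              · exact χ.le_one
              · exact this
          _ ≤ _ := by
              rw [one_mul]
              gcongr
              exact le_add_of_nonneg_right (by positivity)
      · rw [χ.zero_of_le_dist (not_lt.1 hes), zero_mul, norm_zero]
        positivity
    · push Not at he
      calc _ ≤ B := hB e
        _ = B / ρ ^ N * ρ ^ N := by field_simp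
        _ ≤ (C + B / ρ ^ N) * ‖p e‖ ^ N := by
          gcongr
          exact le_add_of_nonneg_left hC0
  obtain ⟨k, hks, hkV, hk0⟩ := hflat E p V hV h1 h2 _ hGf
  refine ⟨fun e => f e + k e, hfs.add hks, ?_, ?_⟩
  · filter_upwards [Metric.ball_mem_nhds (0 : E) (half_pos hs0)] with e he
    have hχ : χ e = 1 := χ.one_of_mem_closedBall (Metric.ball_subset_closedBall he)
    rw [fderiv_fun_add (hfs.differentiable (by simp) e) (hks.differentiable (by simp) e),
      add_apply, hkV, hχ]
    simp only [hg']
    ring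
  · filter_upwards [hnhds] with e he hpe
    rw [hf0 e hpe he.1, hk0 e hpe, add_zero]

end CohomologicalEquation

section LocalReduction

theorem exists_norm_iteratedFDeriv_clm_le {E F : Type*} [NormedAddCommGroup E] [NormedSpace ℝ E]
    [NormedAddCommGroup F] [NormedSpace ℝ F] (L : E →L[ℝ] F) {n : ℕ} (hn : 1 ≤ n) :
    ∃ C, ∀ x, ‖iteratedFDeriv ℝ n L x‖ ≤ C := by
  obtain ⟨n, rfl⟩ := Nat.exists_eq_add_of_le' hn
  refine ⟨‖iteratedFDeriv ℝ n (fun _ : E => L) 0‖, fun x => le_of_eq ?_⟩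
  have h : fderiv ℝ L = fun _ : E => L := by
    ext x; simp
  rw [← norm_iteratedFDeriv_fderiv, h]
  rcases n with _ | n
  · simp
  · simp [iteratedFDeriv_succ_const]

variable {E X : Type} [NormedAddCommGroup E] [NormedSpace ℝ E]
  [NormedAddCommGroup X] [NormedSpace ℝ X] {p : E →L[ℝ] X} {j : X →L[ℝ] E}

/-- The transverse component of a map vanishing on the kernel of `p` is small relative to `p` near
a point where its transverse derivative vanishes. -/
theorem exists_norm_comp_le_of_vanish (hpj : ∀ x, p (j x) = x) {U : Set E} (hU : IsOpen U)
    (h0 : (0 : E) ∈ U) {Q : E → E} (hQ : ContDiffOn ℝ ∞ Q U)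
    (hQ0 : ∀ e ∈ U, p e = 0 → Q e = 0) (hd : p.comp ((fderiv ℝ Q 0).comp j) = 0)
    {ε : ℝ} (hε : 0 < ε) :
    ∃ ρ > 0, Metric.closedBall 0 ρ ⊆ U ∧ ∀ e ∈ Metric.closedBall 0 ρ, ‖p (Q e)‖ ≤ ε * ‖p e‖ := by
  have hc : ContinuousOn (fun e => p.comp ((fderiv ℝ Q e).comp j)) U :=
    continuousOn_const.clm_comp
      ((hQ.continuousOn_fderiv_of_isOpen hU (by simp)).clm_comp continuousOn_const)
  have hsmall : ∀ᶠ e in 𝓝 (0 : E), e ∈ U ∧ ‖p.comp ((fderiv ℝ Q e).comp j)‖ < ε := by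
    refine (hU.eventually_mem h0).and ?_
    refine (hc.continuousAt (hU.mem_nhds h0)).norm.eventually_lt_const ?_
    beta_reduce
    rwa [hd, norm_zero]
  obtain ⟨s, hs, hsU⟩ := Metric.eventually_nhds_iff_ball.1 hsmall
  have hker : ∀ᶠ e in 𝓝 (0 : E), kerProj p j e ∈ Metric.ball (0 : E) s ∧
      e ∈ Metric.ball (0 : E) s :=
    (((kerProj p j).continuous.tendsto' 0 0 (map_zero _)).eventually
      (Metric.ball_mem_nhds _ hs)).and (Metric.ball_mem_nhds _ hs)
  obtain ⟨ρ, hρ, hρs⟩ := Metric.nhds_basis_closedBall.eventually_iff.1 hker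
  refine ⟨ρ, hρ, fun e he => (hsU e (hρs he).2).1, fun e he => ?_⟩
  obtain ⟨he1, he2⟩ := hρs he
  let ι : X → E := fun x => kerProj p j e + j x
  have hι : ∀ x, HasFDerivAt ι j x := fun x => j.hasFDerivAt.const_add _
  have hconv : Convex ℝ (ι ⁻¹' Metric.ball (0 : E) s) := by
    have := ((convex_ball (0 : E) s).translate_preimage_right (kerProj p j e)).linear_preimage
      j.toLinearMap
    exact this
  have hF : ∀ x ∈ ι ⁻¹' Metric.ball (0 : E) s,
      HasFDerivWithinAt (fun x => p (Q (ι x))) (p.comp ((fderiv ℝ Q (ι x)).comp j))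
        (ι ⁻¹' Metric.ball (0 : E) s) x := fun x hx =>
    have hQx : HasFDerivAt Q (fderiv ℝ Q (ι x)) (ι x) :=
      ((hQ.contDiffAt (hU.mem_nhds (hsU _ hx).1)).differentiableAt (by simp)).hasFDerivAt
    (p.hasFDerivAt.comp x (hQx.comp x (hι x))).hasFDerivWithinAt
  have h := hconv.norm_image_sub_le_of_norm_hasFDerivWithin_le hF
    (fun x hx => (hsU _ hx).2.le) (x := 0) (y := p e)
    (by simpa [ι] using he1) (by simpa [ι, kerProj_add] using he2)
  have hQk : Q (kerProj p j e) = 0 := hQ0 _ (hsU _ he1).1 (apply_kerProj hpj e)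
  simpa [ι, kerProj_add, hQk] using h

/-- A vector field vanishing on the kernel of `p` near `0` has a tame extension which stays close
to its transverse linear part at `0`. -/
theorem exists_isTameField_eventuallyEq [FiniteDimensional ℝ E] (hpj : ∀ x, p (j x) = x) {U : Set E}
    (hU : IsOpen U) (h0 : (0 : E) ∈ U) {V : E → E} (hV : ContDiffOn ℝ ∞ V U)
    (hV0 : ∀ e ∈ U, p e = 0 → V e = 0) {ε : ℝ} (hε : 0 < ε) :
    ∃ V', IsTameField p V' ∧ V' =ᶠ[𝓝 0] V ∧
      ∀ e, ‖p (V' e) - p (fderiv ℝ V 0 (j (p e)))‖ ≤ ε * ‖p e‖ := by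
  set L : E →L[ℝ] E := j.comp ((p.comp ((fderiv ℝ V 0).comp j)).comp p) with hL
  have hLp : ∀ e, p (L e) = p (fderiv ℝ V 0 (j (p e))) := fun e => by simp [hL, hpj]
  have hL0 : ∀ e, p e = 0 → L e = 0 := fun e he => by simp [hL, he]
  have hQ : ContDiffOn ℝ ∞ (fun e => V e - L e) U := hV.sub L.contDiff.contDiffOn
  have hd : p.comp ((fderiv ℝ (fun e => V e - L e) 0).comp j) = 0 := by
    have hVd : DifferentiableAt ℝ V 0 :=
      (hV.contDiffAt (hU.mem_nhds h0)).differentiableAt (by simp)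
    ext x
    rw [fderiv_fun_sub hVd L.differentiableAt]
    simp [hLp, hpj]
  obtain ⟨ρ, hρ, hρU, hρQ⟩ := exists_norm_comp_le_of_vanish hpj hU h0 hQ
    (fun e he hpe => by simp [hV0 e he hpe, hL0 e hpe]) hd hε
  let χ : ContDiffBump (0 : E) := ⟨ρ / 2, ρ, by positivity, half_lt_self hρ⟩
  have hPs : ContDiff ℝ ∞ fun e => χ e • (V e - L e) := by
    rw [contDiff_iff_contDiffAt]
    intro e
    by_cases he : e ∈ U
    · exact χ.contDiff.contDiffAt.smul (hQ.contDiffAt (hU.mem_nhds he))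
    · have hχ : (fun e => χ e • (V e - L e)) =ᶠ[𝓝 e] fun _ => 0 := by
        have : e ∈ (Metric.closedBall (0 : E) ρ)ᶜ := fun h => he (hρU h)
        filter_upwards [Metric.isClosed_closedBall.isOpen_compl.mem_nhds this] with x hx
        rw [χ.zero_of_le_dist (not_le.1 fun h => hx h).le, zero_smul]
      exact contDiffAt_const.congr_of_eventuallyEq hχ
  have hPc : HasCompactSupport fun e => χ e • (V e - L e) := χ.hasCompactSupport.smul_right
  refine ⟨fun e => L e + χ e • (V e - L e), ⟨L.contDiff.add hPs, fun n hn => ?_, fun e he => ?_⟩,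
    ?_, fun e => ?_⟩
  · obtain ⟨B, hB⟩ := exists_norm_iteratedFDeriv_clm_le L hn
    obtain ⟨C, -, hC⟩ := exists_norm_iteratedFDeriv_le hPs hPc n
    refine ⟨B + C, fun x => ?_⟩
    have : iteratedFDeriv ℝ n (fun e => L e + χ e • (V e - L e)) x
        = iteratedFDeriv ℝ n L x + iteratedFDeriv ℝ n (fun e => χ e • (V e - L e)) x :=
      iteratedFDeriv_add_apply (L.contDiff.of_le (by exact_mod_cast le_top)).contDiffAt
        (hPs.of_le (by exact_mod_cast le_top)).contDiffAt
    rw [this]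
    exact (norm_add_le _ _).trans (add_le_add (hB x) (hC x))
  · rw [hL0 e he]
    by_cases heU : e ∈ U
    · simp [hV0 e heU he]
    · rw [χ.zero_of_le_dist (not_le.1 fun h => heU (hρU h)).le]
      simp
  · filter_upwards [Metric.ball_mem_nhds (0 : E) (half_pos hρ)] with e he
    rw [χ.one_of_mem_closedBall (Metric.ball_subset_closedBall he)]
    simp
  · beta_reduce
    rw [← hLp, map_add, add_sub_cancel_left, map_smul, norm_smul, Real.norm_of_nonneg χ.nonneg]
    by_cases he : e ∈ Metric.closedBall (0 : E) ρ
    · exact (mul_le_of_le_one_left (norm_nonneg _) χ.le_one).trans (hρQ e he)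
    · rw [χ.zero_of_le_dist (not_le.1 he).le, zero_mul]
      positivity

/-- A smooth map with injective derivative at a fixed point restricts to a diffeomorphism between
arbitrarily small neighborhoods. -/
theorem ContDiff.exists_local_diffeomorphism [FiniteDimensional ℝ E] {Φ : E → E}
    (hΦ : ContDiff ℝ ∞ Φ) (hΦ' : Function.Injective (fderiv ℝ Φ 0)) {S : Set E}
    (hS : S ∈ 𝓝 (0 : E)) :
    ∃ (U U' : Set E) (Ψ : E → E), IsOpen U ∧ IsOpen U' ∧ 0 ∈ U ∧ U ⊆ S ∧
      ContDiffOn ℝ ∞ Ψ U' ∧ Set.MapsTo Φ U U' ∧ Set.MapsTo Ψ U' U ∧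
      (∀ x ∈ U, Ψ (Φ x) = x) ∧ ∀ y ∈ U', Φ (Ψ y) = y := by
  have : CompleteSpace E := FiniteDimensional.complete ℝ E
  let A : E ≃L[ℝ] E :=
    (LinearEquiv.ofInjectiveEndo (fderiv ℝ Φ 0).toLinearMap hΦ').toContinuousLinearEquiv
  have hA : (A : E →L[ℝ] E) = fderiv ℝ Φ 0 := by ext x; rfl
  have hA' : HasFDerivAt Φ (A : E →L[ℝ] E) 0 :=
    hA ▸ (hΦ.differentiable (by simp) 0).hasFDerivAt
  let e := hΦ.contDiffAt.toOpenPartialHomeomorph Φ hA' (by simp)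
  have he0 : (0 : E) ∈ e.source := hΦ.contDiffAt.mem_toOpenPartialHomeomorph_source hA' (by simp)
  have hinv : ∀ᶠ x in 𝓝 (0 : E), ∃ B : E ≃L[ℝ] E, (B : E →L[ℝ] E) = fderiv ℝ Φ x :=
    (hΦ.continuous_fderiv (by simp)).tendsto 0 (hA ▸ ContinuousLinearEquiv.nhds A)
  obtain ⟨T, hT, hTo, hT0⟩ := mem_nhds_iff.1 (hinv.and hS)
  let f := e.restrOpen T hTo
  refine ⟨f.source, f.target, f.symm, f.open_source, f.open_target, ?_, ?_, ?_, f.mapsTo,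
    f.symm.mapsTo, fun x hx => f.left_inv hx, fun y hy => f.right_inv hy⟩
  · exact ⟨he0, hT0⟩
  · exact fun x hx => (hT hx.2).2
  · intro y hy
    obtain ⟨B, hB⟩ := (hT (f.map_target hy).2).1
    refine (f.contDiffAt_symm (f₀' := B) hy ?_ hΦ.contDiffAt).contDiffWithinAt
    rw [hB]
    exact (hΦ.differentiable (by simp) _).hasFDerivAt

/-- The Cayley-Hamilton identity for an endomorphism of the plane. -/
theorem clm_apply_apply_eq_trace_sub_det {A : ℝ × ℝ →L[ℝ] ℝ × ℝ} {a b c d : ℝ}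
    (h1 : A (1, 0) = (a, c)) (h2 : A (0, 1) = (b, d)) (x : ℝ × ℝ) :
    A (A x) = (a + d) • A x - (a * d - b * c) • x := by
  have hA : ∀ x : ℝ × ℝ, A x = (a * x.1 + b * x.2, c * x.1 + d * x.2) := fun x => by
    have : x = x.1 • ((1 : ℝ), (0 : ℝ)) + x.2 • ((0 : ℝ), (1 : ℝ)) := by ext <;> simp
    rw [this, map_add, map_smul, map_smul, h1, h2]
    ext <;> simp <;> ring
  simp only [hA]
  ext <;> simp <;> ring

/-- Hyperbolicity in terms of trace and determinant. -/
theorem det_neg_or_det_pos_and_trace_ne_zero {x y : ℂ} {τ δ : ℝ} (hτ : x + y = τ) (hδ : x * y = δ)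
    (hx : x.re ≠ 0) (hy : y.re ≠ 0) : δ < 0 ∨ 0 < δ ∧ τ ≠ 0 := by
  have him : x.im + y.im = 0 := by simpa using congrArg Complex.im hτ
  have hre : x.re + y.re = τ := by simpa using congrArg Complex.re hτ
  have hre2 : x.re * y.re - x.im * y.im = δ := by simpa using congrArg Complex.re hδ
  have him2 : x.re * y.im + x.im * y.re = 0 := by simpa using congrArg Complex.im hδ
  have hy1 : y.im = -x.im := by linarith
  rcases lt_trichotomy δ 0 with h | h | h
  · exact Or.inl h
  · subst h
    rcases mul_eq_zero.1 (hδ.trans (by simp)) with h | h <;> simp [h] at hx hy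
  · refine Or.inr ⟨h, ?_⟩
    rintro rfl
    have hy2 : y.re = -x.re := by linarith
    rw [hy1, hy2] at him2 hre2
    have : x.im = 0 := by
      have : x.re * x.im = 0 := by linarith
      exact (mul_eq_zero.1 this).resolve_left hx
    rw [this] at hre2
    nlinarith [sq_nonneg x.re]

/-- The projection to the first two coordinates. -/
def planeProj (l : ℕ) : (ℝ × ℝ × (Fin l → ℝ)) →L[ℝ] ℝ × ℝ :=
  (ContinuousLinearMap.fst ℝ ℝ (ℝ × (Fin l → ℝ))).prod
    ((ContinuousLinearMap.fst ℝ ℝ (Fin l → ℝ)).comp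
      (ContinuousLinearMap.snd ℝ ℝ (ℝ × (Fin l → ℝ))))

/-- The inclusion of the plane of the first two coordinates. -/
def planeIncl (l : ℕ) : ℝ × ℝ →L[ℝ] ℝ × ℝ × (Fin l → ℝ) :=
  (ContinuousLinearMap.fst ℝ ℝ ℝ).prod ((ContinuousLinearMap.snd ℝ ℝ ℝ).prod 0)

theorem planeProj_apply {l : ℕ} (e : ℝ × ℝ × (Fin l → ℝ)) : planeProj l e = (e.1, e.2.1) := rfl

theorem planeIncl_apply {l : ℕ} (x : ℝ × ℝ) : planeIncl l x = (x.1, x.2, 0) := rfl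

theorem kerProj_plane {l : ℕ} (e : ℝ × ℝ × (Fin l → ℝ)) :
    kerProj (planeProj l) (planeIncl l) e = (0, 0, e.2.2) := by
  simp [kerProj_apply, planeProj_apply, planeIncl_apply, Prod.ext_iff]

end LocalReduction

/-- If `Re λ₁(0) ≠ 0`, `Re λ₂(0) ≠ 0` and there are no first-type resonances of any order
for all `ζ` near `0`, then the germ of `V` at `0` is `C^∞`-smoothly equivalent to a field
of the form `ξ̇ = v̄, η̇ = w̄, ζ̇ᵢ = 0`: there is a local `C^∞` diffeomorphism `Φ` fixing `0`
such that the transported field `DΦ(x)·V(x)` has its last `l` components zero. -/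
theorem stmt8 (l : ℕ)
    (U₀ : Set (ℝ × ℝ × (Fin l → ℝ))) (hU₀ : IsOpen U₀) (h0 : (0 : ℝ × ℝ × (Fin l → ℝ)) ∈ U₀)
    (v w : (ℝ × ℝ × (Fin l → ℝ)) → ℝ) (α β : Fin l → (ℝ × ℝ × (Fin l → ℝ)) → ℝ)
    (hv : ContDiffOn ℝ (⊤ : ℕ∞) v U₀) (hw : ContDiffOn ℝ (⊤ : ℕ∞) w U₀)
    (hα : ∀ i, ContDiffOn ℝ (⊤ : ℕ∞) (α i) U₀) (hβ : ∀ i, ContDiffOn ℝ (⊤ : ℕ∞) (β i) U₀)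
    (hvanish : ∀ ζ : Fin l → ℝ, ((0 : ℝ), (0 : ℝ), ζ) ∈ U₀ →
      v ((0 : ℝ), (0 : ℝ), ζ) = 0 ∧ w ((0 : ℝ), (0 : ℝ), ζ) = 0)
    (V : (ℝ × ℝ × (Fin l → ℝ)) → (ℝ × ℝ × (Fin l → ℝ)))
    (hV : V = fun x => (v x, w x, fun i => α i x * v x + β i x * w x))
    -- λ₁(ζ), λ₂(ζ) are the eigenvalues of the 2×2 matrix of partial derivatives of v, w
    -- with respect to (ξ, η) at (0, 0, ζ), for ζ in a neighborhood Z of 0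
    (Z : Set (Fin l → ℝ)) (hZ : IsOpen Z) (hZ0 : (0 : Fin l → ℝ) ∈ Z)
    (lam₁ lam₂ : (Fin l → ℝ) → ℂ)
    (hlam : ∀ ζ ∈ Z,
      lam₁ ζ + lam₂ ζ =
        ((fderiv ℝ v ((0 : ℝ), (0 : ℝ), ζ) ((1 : ℝ), (0 : ℝ), (0 : Fin l → ℝ)) +
          fderiv ℝ w ((0 : ℝ), (0 : ℝ), ζ) ((0 : ℝ), (1 : ℝ), (0 : Fin l → ℝ)) : ℝ) : ℂ) ∧
      lam₁ ζ * lam₂ ζ =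
        ((fderiv ℝ v ((0 : ℝ), (0 : ℝ), ζ) ((1 : ℝ), (0 : ℝ), (0 : Fin l → ℝ)) *
          fderiv ℝ w ((0 : ℝ), (0 : ℝ), ζ) ((0 : ℝ), (1 : ℝ), (0 : Fin l → ℝ)) -
          fderiv ℝ v ((0 : ℝ), (0 : ℝ), ζ) ((0 : ℝ), (1 : ℝ), (0 : Fin l → ℝ)) *
          fderiv ℝ w ((0 : ℝ), (0 : ℝ), ζ) ((1 : ℝ), (0 : ℝ), (0 : Fin l → ℝ)) : ℝ) : ℂ))
    (hre1 : (lam₁ 0).re ≠ 0) (hre2 : (lam₂ 0).re ≠ 0)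
    (hres : ∀ ζ ∈ Z, ∀ p₁ p₂ : ℕ, 1 ≤ p₁ + p₂ →
      (p₁ : ℂ) * lam₁ ζ + (p₂ : ℂ) * lam₂ ζ ≠ 0) :
    ∃ (U U' : Set (ℝ × ℝ × (Fin l → ℝ)))
      (Φ Ψ : (ℝ × ℝ × (Fin l → ℝ)) → (ℝ × ℝ × (Fin l → ℝ))),
      IsOpen U ∧ IsOpen U' ∧ (0 : ℝ × ℝ × (Fin l → ℝ)) ∈ U ∧
      (0 : ℝ × ℝ × (Fin l → ℝ)) ∈ U' ∧ U ⊆ U₀ ∧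
      ContDiffOn ℝ (⊤ : ℕ∞) Φ U ∧ ContDiffOn ℝ (⊤ : ℕ∞) Ψ U' ∧
      Φ 0 = 0 ∧ Set.MapsTo Φ U U' ∧ Set.MapsTo Ψ U' U ∧
      (∀ x ∈ U, Ψ (Φ x) = x) ∧ (∀ y ∈ U', Φ (Ψ y) = y) ∧
      ∀ x ∈ U, (fderiv ℝ Φ x (V x)).2.2 = 0 := by
  have hVs : ContDiffOn ℝ ∞ V U₀ := by
    rw [hV]
    exact hv.prodMk (hw.prodMk (contDiffOn_pi.2 fun i =>
      ((hα i).mul hv).add ((hβ i).mul hw)))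
  have hpj : ∀ x, planeProj l (planeIncl l x) = x := fun x => rfl
  have hker : ∀ e, planeProj l e = 0 → e = (0, 0, e.2.2) := fun e he => by
    simp only [planeProj_apply, Prod.mk_eq_zero] at he
    ext <;> simp [he.1, he.2]
  have hV0 : ∀ e ∈ U₀, planeProj l e = 0 → V e = 0 := fun e heU he => by
    have h := hker e he
    rw [h] at heU ⊢
    obtain ⟨h1, h2⟩ := hvanish _ heU
    simp only [hV, h1, h2, mul_zero, add_zero]
    rfl
  have hfd : ∀ e ∈ U₀, ∀ x,
      planeProj l (fderiv ℝ V e x) = (fderiv ℝ v e x, fderiv ℝ w e x) := fun e he x => by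
    have d1 : HasFDerivAt v (fderiv ℝ v e) e :=
      ((hv.contDiffAt (hU₀.mem_nhds he)).differentiableAt (by simp)).hasFDerivAt
    have d2 : HasFDerivAt w (fderiv ℝ w e) e :=
      ((hw.contDiffAt (hU₀.mem_nhds he)).differentiableAt (by simp)).hasFDerivAt
    have d3 : HasFDerivAt V (fderiv ℝ V e) e :=
      ((hVs.contDiffAt (hU₀.mem_nhds he)).differentiableAt (by simp)).hasFDerivAt
    have d4 := (planeProj l).hasFDerivAt.comp e d3
    have d5 : (planeProj l) ∘ V = fun e => (v e, w e) := by rw [hV]; rfl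
    rw [d5] at d4
    exact DFunLike.congr_fun (d4.unique (d1.prodMk d2)) x
  set a := fderiv ℝ v 0 ((1 : ℝ), (0 : ℝ), (0 : Fin l → ℝ)) with ha
  set b := fderiv ℝ v 0 ((0 : ℝ), (1 : ℝ), (0 : Fin l → ℝ)) with hb
  set c := fderiv ℝ w 0 ((1 : ℝ), (0 : ℝ), (0 : Fin l → ℝ)) with hc
  set d := fderiv ℝ w 0 ((0 : ℝ), (1 : ℝ), (0 : Fin l → ℝ)) with hd
  obtain ⟨ε, hε, hflat⟩ := exists_hasFlatSolutions (a := a) (b := b) (c := c) (d := d)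
    (det_neg_or_det_pos_and_trace_ne_zero (hlam 0 hZ0).1 (hlam 0 hZ0).2 hre1 hre2)
  obtain ⟨V', hV't, hV'e, hV'ε⟩ := exists_isTameField_eventuallyEq hpj hU₀ h0 hVs hV0 hε
  have hlin : ∀ e : ℝ × ℝ × (Fin l → ℝ),
      planeProj l (fderiv ℝ V 0 (planeIncl l (planeProj l e))) =
        (a * e.1 + b * e.2.1, c * e.1 + d * e.2.1) := fun e => by
    have : planeIncl l (planeProj l e) = e.1 • ((1 : ℝ), (0 : ℝ), (0 : Fin l → ℝ)) +
        e.2.1 • ((0 : ℝ), (1 : ℝ), (0 : Fin l → ℝ)) := by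
      ext <;> simp [planeProj_apply, planeIncl_apply]
    rw [this, hfd 0 h0]
    simp only [map_add, map_smul, ← ha, ← hb, ← hc, ← hd, smul_eq_mul]
    ext <;> simp only <;> ring
  obtain ⟨r, hr, hrV⟩ : ∃ r > 0, ∀ e ∈ Metric.closedBall (0 : ℝ × ℝ × (Fin l → ℝ)) r,
      e ∈ U₀ ∧ V' =ᶠ[𝓝 e] V ∧ e.2.2 ∈ Z := by
    refine Metric.nhds_basis_closedBall.eventually_iff.1 ?_
    refine (hU₀.eventually_mem h0).and (hV'e.eventually_nhds.and ?_)
    exact (continuous_snd.comp continuous_snd).continuousAt.eventually (hZ.mem_nhds hZ0)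
  have hunit : ∀ N ≥ 1, ∀ e, ‖kerProj (planeProj l) (planeIncl l) e‖ ≤ r →
      IsUnit (multilinearDerivation N
        (transverseLinear (planeProj l) (planeIncl l) V' e)) := by
    intro N hN e he
    rw [kerProj_plane, ← mem_closedBall_zero_iff] at he
    obtain ⟨hu, heq, hz⟩ := hrV _ he
    have hT : ∀ x, transverseLinear (planeProj l) (planeIncl l) V' e x =
        (fderiv ℝ v (0, 0, e.2.2) (x.1, x.2, 0), fderiv ℝ w (0, 0, e.2.2) (x.1, x.2, 0)) := by
      intro x
      rw [← hfd _ hu, ← heq.fderiv_eq, ← kerProj_plane]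
      rfl
    refine isUnit_multilinearDerivation
      (clm_apply_apply_eq_trace_sub_det (hT _) (hT _)) (hlam _ hz).1 (hlam _ hz).2 ?_
    exact fun m n hmn => hres _ hz m n (by omega)
  have hsol : ∀ i : Fin l, ∃ f : ℝ × ℝ × (Fin l → ℝ) → ℝ, ContDiff ℝ ∞ f ∧
      (∀ᶠ e in 𝓝 0, fderiv ℝ f e (V' e) = -(V' e).2.2 i) ∧
      ∀ᶠ e in 𝓝 0, planeProj l e = 0 → f e = 0 := by
    intro i
    refine hflat.exists_local_solution hpj hV't (fun e => ?_) (fun e => ?_) hr hunit ?_ ?_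
    · refine le_trans ?_ (hV'ε e)
      rw [hlin]
      exact norm_fst_le (planeProj l (V' e) - (a * e.1 + b * e.2.1, c * e.1 + d * e.2.1))
    · refine le_trans ?_ (hV'ε e)
      rw [hlin]
      exact norm_snd_le (planeProj l (V' e) - (a * e.1 + b * e.2.1, c * e.1 + d * e.2.1))
    · exact contDiff_pi.1 hV't.smooth.snd.snd i
    · intro e he
      rw [hV't.vanish e he]
      rfl
  choose f hfs hfV hf0 using hsol
  have hf00 : ∀ i, f i 0 = 0 := fun i => (hf0 i).self_of_nhds (map_zero _)
  let F : ℝ × ℝ × (Fin l → ℝ) → Fin l → ℝ := fun e i => e.2.2 i + f i e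
  let q : Fin l → ℝ × ℝ × (Fin l → ℝ) →L[ℝ] ℝ := fun i =>
    (ContinuousLinearMap.proj i).comp ((ContinuousLinearMap.snd ℝ ℝ (Fin l → ℝ)).comp
      (ContinuousLinearMap.snd ℝ ℝ (ℝ × (Fin l → ℝ))))
  have hF' : ∀ e, HasFDerivAt F (ContinuousLinearMap.pi fun i => q i + fderiv ℝ (f i) e) e :=
    fun e => hasFDerivAt_pi.2 fun i => (q i).hasFDerivAt.add
      ((hfs i).differentiable (by simp) e).hasFDerivAt
  let Φ : ℝ × ℝ × (Fin l → ℝ) → ℝ × ℝ × (Fin l → ℝ) := fun e => (e.1, e.2.1, F e)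
  have hΦ' : ∀ e x, fderiv ℝ Φ e x = (x.1, x.2.1, fun i => x.2.2 i + fderiv ℝ (f i) e x) :=
    fun e x => by
      have h1 : HasFDerivAt Φ _ e :=
        hasFDerivAt_fst.prodMk ((hasFDerivAt_fst.comp e hasFDerivAt_snd).prodMk (hF' e))
      rw [h1.fderiv]
      rfl
  have hΦs : ContDiff ℝ ∞ Φ := by
    refine contDiff_fst.prodMk ((contDiff_fst.comp contDiff_snd).prodMk (contDiff_pi.2 fun i => ?_))
    exact (contDiff_pi.1 (contDiff_snd.comp contDiff_snd) i).add (hfs i)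
  have hfk : ∀ i (z : Fin l → ℝ), fderiv ℝ (f i) 0 (0, 0, z) = 0 := by
    intro i z
    have h1 : HasFDerivAt (f i ∘ ContinuousLinearMap.inr ℝ ℝ (ℝ × (Fin l → ℝ)) ∘
        ContinuousLinearMap.inr ℝ ℝ (Fin l → ℝ)) _ 0 :=
      (((hfs i).differentiable (by simp) _).hasFDerivAt).comp 0
        ((ContinuousLinearMap.hasFDerivAt _).comp 0 (ContinuousLinearMap.hasFDerivAt _))
    have h2 : (f i ∘ ContinuousLinearMap.inr ℝ ℝ (ℝ × (Fin l → ℝ)) ∘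
        ContinuousLinearMap.inr ℝ ℝ (Fin l → ℝ)) =ᶠ[𝓝 0] fun _ => 0 := by
      have hc : Tendsto (fun z : Fin l → ℝ => ((0 : ℝ), (0 : ℝ), z)) (𝓝 0) (𝓝 0) :=
        Continuous.tendsto' (by fun_prop) _ _ rfl
      filter_upwards [hc.eventually (hf0 i)] with z hz
      exact hz rfl
    exact DFunLike.congr_fun (h1.unique ((hasFDerivAt_const (0 : ℝ) _).congr_of_eventuallyEq h2)) z
  have hinj : Function.Injective (fderiv ℝ Φ 0) := by
    rw [injective_iff_map_eq_zero]
    intro x hx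
    rw [hΦ'] at hx
    simp only [Prod.mk_eq_zero] at hx
    obtain ⟨x1, x2, x3⟩ := hx
    have hxe : x = (0, 0, x.2.2) := by ext <;> simp [x1, x2]
    have : x.2.2 = 0 := by
      funext i
      have := congrFun x3 i
      rw [hxe, hfk] at this
      simpa using this
    rw [hxe, this]
    rfl
  have hS : ∀ᶠ e in 𝓝 (0 : ℝ × ℝ × (Fin l → ℝ)), e ∈ U₀ ∧ V' e = V e ∧
      ∀ i, fderiv ℝ (f i) e (V' e) = -(V' e).2.2 i :=
    (hU₀.eventually_mem h0).and (hV'e.and (eventually_all.2 hfV))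
  obtain ⟨U, U', Ψ, hUo, hUo', hU0, hUS, hΨ, hm1, hm2, hl, hrr⟩ :=
    hΦs.exists_local_diffeomorphism hinj hS
  have hΦ0 : Φ 0 = 0 := by
    ext <;> simp [Φ, F, hf00]
  refine ⟨U, U', Φ, Ψ, hUo, hUo', hU0, hΦ0 ▸ hm1 hU0, fun x hx => (hUS hx).1,
    hΦs.contDiffOn, hΨ, hΦ0, hm1, hm2, hl, hrr, fun x hx => ?_⟩
  obtain ⟨-, hx1, hx2⟩ := hUS hx
  rw [hΦ', ← hx1]
  funext i
  simp [hx2]
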